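/- For every integer q ≥ 1 and every a ∈ G_q, ψ_K(x;q,a) is asymptotic to x/φ_K(q) as x → ∞; that is, lim_{x→∞} ψ_K(x;q,a)·φ_K(q)/x = 1. -/

import Mathlib

/-!
Setting: `K` is a number field, Galois over `ℚ`, with ring of integers `𝓞 K`.
We formalize the objects from Smith, "A generalization of the
Barban-Davenport-Halberstam Theorem to number fields".
-/

open NumberField Ideal
open scoped Classical BigOperators

noncomputable section

/-- `𝔞` is a (positive) power of a nonzero prime ideal of `𝓞 K`. -/
def IsPrimeIdealPower {K : Type*} [Field K] [NumberField K] (𝔞 : Ideal (𝓞 K)) : Prop :=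
  ∃ (𝔭 : Ideal (𝓞 K)) (m : ℕ), 𝔭.IsPrime ∧ 𝔭 ≠ ⊥ ∧ 1 ≤ m ∧ 𝔞 = 𝔭 ^ m

/-- The von Mangoldt function on ideals of `𝓞 K`: `Λ_K(𝔭^m) = log N𝔭`, and `0` otherwise.
(For `𝔞 = 𝔭^m` with `𝔭` prime, the radical of `𝔞` is `𝔭`.) -/
def LambdaK (K : Type*) [Field K] [NumberField K] (𝔞 : Ideal (𝓞 K)) : ℝ :=
  if IsPrimeIdealPower 𝔞 then Real.log (absNorm 𝔞.radical) else 0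

/-- `ψ_K(x; q, a) = ∑_{N𝔭^m ≤ x, N𝔭^m ≡ a (mod q)} log N𝔭`. -/
def psiK (K : Type*) [Field K] [NumberField K] (x : ℝ) (q : ℕ) (a : ZMod q) : ℝ :=
  ∑' 𝔞 : Ideal (𝓞 K),
    if (absNorm 𝔞 : ℝ) ≤ x ∧ ((absNorm 𝔞 : ZMod q) = a) then LambdaK K 𝔞 else 0

/-- `G_q`: the image of `Gal(K(ζ_q)/K)` in `(ℤ/qℤ)ˣ` under restriction to `ℚ(ζ_q)` followed
by the canonical isomorphism `Gal(ℚ(ζ_q)/ℚ) ≅ (ℤ/qℤ)ˣ`; concretely, the range of the map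
sending `σ ∈ Gal(K(ζ_q)/K)` to the exponent `a ∈ (ℤ/qℤ)ˣ` with `σ(ζ_q) = ζ_q^a`. -/
def Gq (K : Type*) [Field K] [NumberField K] (q : ℕ) : Subgroup (ZMod q)ˣ :=
  if h : 0 < q then
    haveI : NeZero q := ⟨h.ne'⟩
    haveI : NeZero (((⟨q, h⟩ : ℕ+) : ℕ) : K) := ⟨Nat.cast_ne_zero.mpr h.ne'⟩
    ((IsCyclotomicExtension.zeta_spec (⟨q, h⟩ : ℕ+) K
        (CyclotomicField (⟨q, h⟩ : ℕ+) K)).autToPow K).range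
  else ⊥

/-- `φ_K(q) = |G_q|`. -/
def phiK (K : Type*) [Field K] [NumberField K] (q : ℕ) : ℕ :=
  Nat.card (Gq K q)

/-- `ψ_K(x, χ∘N) = ∑_{N𝔞 ≤ x} χ(N𝔞) Λ_K(𝔞)`. -/
def psiKChi (K : Type*) [Field K] [NumberField K] (x : ℝ) {q : ℕ}
    (χ : DirichletCharacter ℂ q) : ℂ :=
  ∑' 𝔞 : Ideal (𝓞 K),
    if (absNorm 𝔞 : ℝ) ≤ x then χ (absNorm 𝔞 : ZMod q) * (LambdaK K 𝔞 : ℂ) else 0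

/-- `ψ'_K(x, χ∘N)`: equals `ψ_K(x, χ∘N) − x` when `χ` is trivial on `G_q`,
and `ψ_K(x, χ∘N)` otherwise. -/
def psiKChi' (K : Type*) [Field K] [NumberField K] (x : ℝ) {q : ℕ}
    (χ : DirichletCharacter ℂ q) : ℂ :=
  if ∀ a ∈ Gq K q, χ (a : ZMod q) = 1 then psiKChi K x χ - x else psiKChi K x χ

/-- The common residue degree `f(K/ℚ; p)` of the primes of `K` above `p`
(well-defined when `K/ℚ` is Galois): any prime `𝔭` above `p` has `N𝔭 = p^f`. -/
def resDeg (K : Type*) [Field K] [NumberField K] (p : ℕ) : ℕ :=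
  if h : ∃ 𝔭 : Ideal (𝓞 K), 𝔭.IsPrime ∧ 𝔭 ≠ ⊥ ∧ (p : 𝓞 K) ∈ 𝔭 then
    (absNorm h.choose).factorization p
  else 0

/-- `D_K(n)`: the number of prime ideal powers `𝔭^m` of `𝓞 K` with `N𝔭^m = n`. -/
def DK (K : Type*) [Field K] [NumberField K] (n : ℕ) : ℕ :=
  Nat.card {𝔞 : Ideal (𝓞 K) // IsPrimeIdealPower 𝔞 ∧ absNorm 𝔞 = n}

/-- `Λ_K^*(n) = f(K/ℚ; p) · log p` if `n = p^k` is a prime power, and `0` otherwise. -/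
def LambdaStarK (K : Type*) [Field K] [NumberField K] (n : ℕ) : ℝ :=
  if IsPrimePow n then (resDeg K n.minFac : ℝ) * Real.log n.minFac else 0

end

/-!
The ideals of `𝓞 K` whose norm is at most `x` and congruent to `a` modulo `q` correspond, ideal
class by ideal class, to lattice points of the fundamental cone in finitely many residue classes and
sign chambers. As the truncated cone has a boundary of box dimension one less than the space, the
number of these ideals is `c x + O(x ^ (1 - 1 / [K : ℚ]))`. Hence, for every Dirichlet character `χ`
modulo `q`, the series `L(s, χ) = ∑ χ(N𝔞) N𝔞⁻ˢ` has a continuation past `re s = 1` with at most a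
simple pole at `1`. The inequality `3 + 4 cos θ + cos 2θ ≥ 0` rules out zeros at `1 + it`, `t ≠ 0`.

Zeros at `s = 1` are excluded by algebra. Let `m χ ≤ 1` be the order of the pole of `L(s, χ)` at
`1`, and let `d u` be the residue at `1` of the Dirichlet series of the von Mangoldt function of `K`
on the ideals of norm congruent to `u` modulo `q`. The integers `m χ` are the Fourier coefficients
of the nonnegative function `d` on `(ℤ / q)ˣ`. Let `G` be the image of the cyclotomic character.
Frobenius elements show that `d` vanishes outside `G`, and counting the primes of degree one in
`K(ζ_q)` that lie over primes of norm congruent to `1` gives `0 < d 1 ≤ 1 / |G|`. A probability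
measure with integral Fourier coefficients and `d 1 > 0` has `m χ ∈ {0, 1}` and is uniform on a
subgroup; being supported in `G` with `d 1 ≤ 1 / |G|`, it is uniform on `G`. The Wiener–Ikehara
theorem, applied to each residue class, turns `d a = 1 / |G|` into the asymptotic.
-/

namespace PrimeIdealNorms

open MeasureTheory Set Filter Asymptotics NumberField.InfinitePlace NumberField.mixedEmbedding
  NumberField.mixedEmbedding.fundamentalCone NumberField.Units
  NumberField.Units.dirichletUnitTheorem
open scoped Topology Pointwise nonZeroDivisors

/-! ### Sets of bounded box dimension -/

section BoxDim

variable {E F : Type*} [PseudoMetricSpace E] [PseudoMetricSpace F] {d : ℕ} {S T : Set E}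

/-- A quantitative form of "`S` has upper box dimension at most `d`", suited to counting the unit
cells that meet a large dilate of `S`: at every scale `1 / m` the set is covered by `O(m ^ d)` sets
of diameter `O(1 / m)`, with the same implied constant. -/
def BoxDimLE (d : ℕ) (S : Set E) : Prop :=
  ∃ C : ℝ, 0 ≤ C ∧ ∀ m : ℕ, 1 ≤ m → ∃ F : Finset (Set E), (F.card : ℝ) ≤ C * m ^ d ∧
    S ⊆ ⋃₀ (F : Set (Set E)) ∧ ∀ A ∈ F, ∀ x ∈ A, ∀ y ∈ A, dist x y ≤ C / m

theorem BoxDimLE.mono (hT : BoxDimLE d T) (h : S ⊆ T) : BoxDimLE d S := by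
  obtain ⟨C, hC, hcover⟩ := hT
  refine ⟨C, hC, fun m hm ↦ ?_⟩
  obtain ⟨F, hcard, hsub, hdist⟩ := hcover m hm
  exact ⟨F, hcard, h.trans hsub, hdist⟩

theorem BoxDimLE.union (hS : BoxDimLE d S) (hT : BoxDimLE d T) : BoxDimLE d (S ∪ T) := by
  obtain ⟨C, hC, hcover⟩ := hS
  obtain ⟨C', hC', hcover'⟩ := hT
  refine ⟨C + C', by positivity, fun m hm ↦ ?_⟩
  obtain ⟨F, hcard, hsub, hdist⟩ := hcover m hm
  obtain ⟨F', hcard', hsub', hdist'⟩ := hcover' m hm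
  refine ⟨F ∪ F', ?_, ?_, fun A hA x hx y hy ↦ ?_⟩
  · calc ((F ∪ F').card : ℝ) ≤ F.card + F'.card := by exact_mod_cast Finset.card_union_le _ _
      _ ≤ (C + C') * m ^ d := by rw [add_mul]; gcongr
  · rw [Finset.coe_union, sUnion_union]
    exact union_subset_union hsub hsub'
  · rcases Finset.mem_union.mp hA with hA | hA
    · exact (hdist A hA x hx y hy).trans (by gcongr; linarith)
    · exact (hdist' A hA x hx y hy).trans (by gcongr; linarith)

theorem boxDimLE_empty (d : ℕ) : BoxDimLE d (∅ : Set E) :=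
  ⟨0, le_rfl, fun _ _ ↦ ⟨∅, by simp, by simp, by simp⟩⟩

theorem boxDimLE_singleton (d : ℕ) (x : E) : BoxDimLE d ({x} : Set E) := by
  refine ⟨1, zero_le_one, fun m hm ↦ ⟨{{x}}, ?_, by simp, ?_⟩⟩
  · simpa using one_le_pow₀ (M₀ := ℝ) (by exact_mod_cast hm)
  · simp only [Finset.mem_singleton, forall_eq, mem_singleton_iff, dist_self]
    positivity

theorem BoxDimLE.iUnion {ι : Type*} [Finite ι] {S : ι → Set E} (hS : ∀ i, BoxDimLE d (S i)) :
    BoxDimLE d (⋃ i, S i) := by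
  cases nonempty_fintype ι
  suffices ∀ s : Finset ι, BoxDimLE d (⋃ i ∈ s, S i) by simpa using this Finset.univ
  intro s
  induction s using Finset.induction_on with
  | empty => simpa using boxDimLE_empty d
  | insert a s _ ih =>
    rw [Finset.set_biUnion_insert]
    exact (hS a).union ih

theorem BoxDimLE.image (hS : BoxDimLE d S) {f : E → F} {L : NNReal} (hf : LipschitzOnWith L f S) :
    BoxDimLE d (f '' S) := by
  obtain ⟨C, hC, hcover⟩ := hS
  refine ⟨max C (L * C), by positivity, fun m hm ↦ ?_⟩
  obtain ⟨G, hcard, hsub, hdist⟩ := hcover m hm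
  refine ⟨G.image fun A ↦ f '' (A ∩ S), ?_, ?_, fun B hB ↦ ?_⟩
  · calc ((G.image fun A ↦ f '' (A ∩ S)).card : ℝ) ≤ G.card := by
          exact_mod_cast Finset.card_image_le
      _ ≤ max C (L * C) * m ^ d := hcard.trans (by gcongr; exact le_max_left _ _)
  · rintro _ ⟨x, hx, rfl⟩
    obtain ⟨A, hA, hxA⟩ := hsub hx
    exact ⟨f '' (A ∩ S), by simpa using ⟨A, hA, rfl⟩, x, ⟨hxA, hx⟩, rfl⟩
  · obtain ⟨A, hA, rfl⟩ := Finset.mem_image.mp hB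
    rintro _ ⟨x, hx, rfl⟩ _ ⟨y, hy, rfl⟩
    calc dist (f x) (f y) ≤ L * dist x y := hf.dist_le_mul x hx.2 y hy.2
      _ ≤ L * (C / m) := by gcongr; exact hdist A hA x hx.1 y hy.1
      _ = L * C / m := by ring
      _ ≤ max C (L * C) / m := by gcongr; exact le_max_right _ _

theorem exists_fin_div_le_and_le_div {m : ℕ} (hm : 1 ≤ m) {y : ℝ} (hy : y ∈ Icc (0 : ℝ) 1) :
    ∃ k : Fin m, (k : ℝ) / m ≤ y ∧ y ≤ (k + 1) / m := by
  have hm0 : (0 : ℝ) < m := by exact_mod_cast hm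
  rcases hy.2.eq_or_lt with rfl | hy1
  · refine ⟨⟨m - 1, by omega⟩, ?_, ?_⟩
    · rw [div_le_one hm0]; simp
    · rw [le_div_iff₀ hm0]; simp [Nat.cast_sub hm]
  · have hnn : 0 ≤ y * m := mul_nonneg hy.1 hm0.le
    refine ⟨⟨⌊y * m⌋₊, ?_⟩, ?_, ?_⟩
    · rw [Nat.floor_lt hnn]; nlinarith
    · rw [div_le_iff₀ hm0]; exact Nat.floor_le hnn
    · rw [le_div_iff₀ hm0]; exact (Nat.lt_floor_add_one _).le

theorem boxDimLE_unitCube_inter_hyperplane {ι : Type*} [Fintype ι] (i : ι) (b : ℝ) :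
    BoxDimLE (Fintype.card ι - 1) {x : ι → ℝ | (∀ j, x j ∈ Icc (0 : ℝ) 1) ∧ x i = b} := by
  refine ⟨1, zero_le_one, fun m hm ↦ ?_⟩
  let box : ({j // j ≠ i} → Fin m) → Set (ι → ℝ) := fun k ↦
    {x | x i = b ∧ ∀ j : {j // j ≠ i}, (k j : ℝ) / m ≤ x j ∧ x j ≤ (k j + 1) / m}
  refine ⟨Finset.univ.image box, ?_, ?_, ?_⟩
  · calc ((Finset.univ.image box).card : ℝ)
        ≤ (Finset.univ : Finset ({j // j ≠ i} → Fin m)).card := by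
          exact_mod_cast Finset.card_image_le
      _ = 1 * m ^ (Fintype.card ι - 1) := by simp [Fintype.card_subtype_compl]
  · rintro x ⟨hx, hxi⟩
    choose k hk using fun j : {j // j ≠ i} ↦ exists_fin_div_le_and_le_div hm (hx j)
    exact ⟨box k, by simp, hxi, hk⟩
  · simp only [Finset.mem_image, Finset.mem_univ, true_and, forall_exists_index,
      forall_apply_eq_imp_iff]
    rintro k x ⟨hxi, hx⟩ y ⟨hyi, hy⟩
    rw [dist_pi_le_iff (by positivity)]
    intro j
    rcases eq_or_ne j i with rfl | hj
    · rw [hxi, hyi, dist_self]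
      positivity
    · have h := Real.dist_le_of_mem_Icc (hx ⟨j, hj⟩) (hy ⟨j, hj⟩)
      rwa [← sub_div, add_sub_cancel_left] at h

end BoxDim

/-! ### Lattice points in dilates -/

theorem inter_frontier_nonempty_of_isPreconnected {X : Type*} [TopologicalSpace X] {s D : Set X}
    (hs : IsPreconnected s) (hne : (s ∩ D).Nonempty) (hsub : ¬ s ⊆ D) :
    (s ∩ frontier D).Nonempty := by
  have := isPreconnected_iff_preconnectedSpace.mp hs
  obtain ⟨x, hx, hxD⟩ := hne
  obtain ⟨y, hy, hyD⟩ := not_subset.mp hsub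
  have hfr : (frontier ((↑) ⁻¹' D : Set s)).Nonempty :=
    nonempty_frontier_iff.mpr ⟨⟨⟨x, hx⟩, hxD⟩, fun h ↦ hyD (h.ge (mem_univ ⟨y, hy⟩))⟩
  obtain ⟨z, hz⟩ := hfr
  exact ⟨z, z.2, continuous_subtype_val.frontier_preimage_subset D hz⟩

section Count

variable {ι : Type*} {v : ι → ℝ} {z : ι → ℤ} {S T D : Set (ι → ℝ)}

/-- The half-open unit cube whose least corner is the point `z + v` of the lattice `ℤ ^ ι + v`. -/
def cell (v : ι → ℝ) (z : ι → ℤ) : Set (ι → ℝ) :=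
  Set.univ.pi fun i ↦ Ico (z i + v i) (z i + v i + 1)

/-- The cells of the lattice `ℤ ^ ι + v` that meet `S`, indexed by their corners. -/
def cellsMeeting (v : ι → ℝ) (S : Set (ι → ℝ)) : Set (ι → ℤ) := {z | (cell v z ∩ S).Nonempty}

/-- The points of the shifted lattice `ℤ ^ ι + v` in `S`, with the shift `v` taken off. -/
def latticePoints (v : ι → ℝ) (S : Set (ι → ℝ)) : Set (ι → ℤ) := {z | (fun i ↦ z i + v i) ∈ S}

theorem mem_cell_iff {x : ι → ℝ} : x ∈ cell v z ↔ (fun i ↦ ⌊x i - v i⌋) = z := by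
  simp only [cell, mem_univ_pi, mem_Ico, funext_iff, Int.floor_eq_iff]
  refine forall_congr' fun i ↦ ?_
  constructor <;> rintro ⟨h1, h2⟩ <;> constructor <;> linarith

theorem corner_mem_cell (v : ι → ℝ) (z : ι → ℤ) : (fun i ↦ (z i : ℝ) + v i) ∈ cell v z := by
  simp [cell]

theorem isPreconnected_cell (v : ι → ℝ) (z : ι → ℤ) : IsPreconnected (cell v z) :=
  (convex_pi fun _ _ ↦ convex_Ico _ _).isPreconnected

theorem pairwise_disjoint_cell (v : ι → ℝ) : Pairwise (Function.onFun Disjoint (cell v)) :=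
  fun _ _ hne ↦ Set.disjoint_left.mpr fun _ hx hx' ↦
    hne ((mem_cell_iff.mp hx).symm.trans (mem_cell_iff.mp hx'))

theorem latticePoints_subset_cellsMeeting (v : ι → ℝ) (S : Set (ι → ℝ)) :
    latticePoints v S ⊆ cellsMeeting v S :=
  fun z hz ↦ ⟨_, corner_mem_cell v z, hz⟩

theorem cellsMeeting_subset_union_frontier (v : ι → ℝ) (D : Set (ι → ℝ)) :
    cellsMeeting v D ⊆ {z | cell v z ⊆ D} ∪ cellsMeeting v (frontier D) := fun z hz ↦
  (em (cell v z ⊆ D)).imp_right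
    (inter_frontier_nonempty_of_isPreconnected (isPreconnected_cell v z) hz)

theorem exists_finset_cellsMeeting_subset [Fintype ι] {R : ℕ}
    (hS : ∀ x ∈ S, ∀ y ∈ S, dist x y ≤ R) :
    ∃ Z : Finset (ι → ℤ), cellsMeeting v S ⊆ Z ∧ Z.card ≤ (2 * R + 1) ^ Fintype.card ι := by
  rcases S.eq_empty_or_nonempty with rfl | ⟨x₀, hx₀⟩
  · exact ⟨∅, by simp [cellsMeeting], by simp⟩
  let Z : Finset (ι → ℤ) :=
    Fintype.piFinset fun i ↦ Finset.Icc (⌊x₀ i - v i⌋ - (R : ℤ)) (⌊x₀ i - v i⌋ + R)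
  have hcard (k : ℤ) : (Finset.Icc (k - (R : ℤ)) (k + R)).card = 2 * R + 1 := by
    rw [Int.card_Icc]
    omega
  refine ⟨Z, ?_, by simp [Z, hcard]⟩
  rintro z ⟨x, hx, hxS⟩
  rw [← mem_cell_iff.mp hx, Finset.mem_coe, Fintype.mem_piFinset]
  intro i
  obtain ⟨hlow, hup⟩ := abs_le.mp ((dist_le_pi_dist x x₀ i).trans (hS x hxS x₀ hx₀))
  rw [Finset.mem_Icc, ← Int.floor_sub_natCast, ← Int.floor_add_natCast]
  exact ⟨Int.floor_le_floor (by linarith), Int.floor_le_floor (by linarith)⟩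

theorem finite_cellsMeeting [Finite ι] (hS : Bornology.IsBounded S) :
    (cellsMeeting v S).Finite := by
  cases nonempty_fintype ι
  obtain ⟨R, hR⟩ := Metric.isBounded_iff.mp hS
  obtain ⟨Z, hZ, -⟩ := exists_finset_cellsMeeting_subset (v := v) (R := ⌈R⌉₊)
    fun x hx y hy ↦ (hR hx hy).trans (Nat.le_ceil R)
  exact Z.finite_toSet.subset hZ

variable [Fintype ι]

theorem BoxDimLE.exists_ncard_cellsMeeting_smul_le {d : ℕ} (hS : BoxDimLE d S) :
    ∃ C : ℝ, ∀ v : ι → ℝ, ∀ t : ℝ, 1 ≤ t → ((cellsMeeting v (t • S)).ncard : ℝ) ≤ C * t ^ d := by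
  obtain ⟨C, hC, hcover⟩ := hS
  refine ⟨C * 2 ^ d * (2 * ⌈C⌉₊ + 1) ^ Fintype.card ι, fun v t ht ↦ ?_⟩
  obtain ⟨F, hcard, hsub, hdist⟩ := hcover ⌈t⌉₊ (Nat.one_le_ceil_iff.mpr (by linarith))
  have hdist' (A : Set (ι → ℝ)) (hA : A ∈ F) : ∀ x ∈ t • A, ∀ y ∈ t • A, dist x y ≤ ⌈C⌉₊ := by
    rintro _ ⟨x, hx, rfl⟩ _ ⟨y, hy, rfl⟩
    simp only [dist_smul₀]
    have ht0 : (0 : ℝ) < ⌈t⌉₊ := by positivity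
    calc ‖t‖ * dist x y ≤ ⌈t⌉₊ * (C / ⌈t⌉₊) := by
          gcongr
          · rw [Real.norm_of_nonneg (by linarith)]
            exact Nat.le_ceil t
          · exact hdist A hA x hx y hy
      _ = C := mul_div_cancel₀ C ht0.ne'
      _ ≤ ⌈C⌉₊ := Nat.le_ceil C
  choose! Z hZ hZcard using fun A hA ↦ exists_finset_cellsMeeting_subset (v := v) (hdist' A hA)
  have hcells : cellsMeeting v (t • S) ⊆ F.biUnion Z := by
    rintro z ⟨_, hx, y, hy, rfl⟩
    obtain ⟨A, hA, hyA⟩ := hsub hy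
    exact Finset.mem_biUnion.mpr ⟨A, hA, hZ A hA ⟨_, hx, smul_mem_smul_set hyA⟩⟩
  calc ((cellsMeeting v (t • S)).ncard : ℝ) ≤ (F.biUnion Z).card := by
        exact_mod_cast (ncard_le_ncard hcells).trans_eq (ncard_coe_finset _)
    _ ≤ F.card * (2 * ⌈C⌉₊ + 1) ^ Fintype.card ι := by
        exact_mod_cast Finset.card_biUnion_le_card_mul _ _ _ hZcard
    _ ≤ (C * (2 * t) ^ d) * (2 * ⌈C⌉₊ + 1) ^ Fintype.card ι := by
        gcongr
        refine hcard.trans ?_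
        gcongr
        linarith [Nat.ceil_lt_add_one (show 0 ≤ t by linarith)]
    _ = C * 2 ^ d * (2 * ⌈C⌉₊ + 1) ^ Fintype.card ι * t ^ d := by ring

theorem volume_real_biUnion_cell (Z : Finset (ι → ℤ)) :
    volume.real (⋃ z ∈ Z, cell v z) = Z.card := by
  have hcell (z : ι → ℤ) : volume (cell v z) = 1 := by simp [cell, volume_pi_pi]
  rw [measureReal_biUnion_finset ((pairwise_disjoint_cell v).set_pairwise _)
    (fun z _ ↦ MeasurableSet.univ_pi fun _ ↦ measurableSet_Ico) (fun z _ ↦ by simp [hcell])]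
  simp [Measure.real, hcell]

theorem ncard_setOf_cell_subset_le_volume_real (hD : Bornology.IsBounded D) :
    ({z | cell v z ⊆ D}.ncard : ℝ) ≤ volume.real D := by
  have hfin : {z | cell v z ⊆ D}.Finite := (finite_cellsMeeting hD).subset fun z hz ↦
    latticePoints_subset_cellsMeeting v D (hz (corner_mem_cell v z))
  rw [ncard_eq_toFinset_card _ hfin, ← volume_real_biUnion_cell (v := v)]
  exact measureReal_mono (iUnion₂_subset fun z hz ↦ hfin.mem_toFinset.mp hz)
    hD.measure_lt_top.ne

theorem volume_real_le_ncard_cellsMeeting (hD : Bornology.IsBounded D) :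
    volume.real D ≤ (cellsMeeting v D).ncard := by
  have hfin := finite_cellsMeeting (v := v) hD
  rw [ncard_eq_toFinset_card _ hfin, ← volume_real_biUnion_cell (v := v)]
  refine measureReal_mono (fun x hx ↦ mem_iUnion₂.mpr ⟨_, ?_, mem_cell_iff.mpr rfl⟩) ?_
  · exact hfin.mem_toFinset.mpr ⟨x, mem_cell_iff.mpr rfl, hx⟩
  · refine ((measure_biUnion_finset_le _ _).trans_lt ?_).ne
    simp [cell, volume_pi_pi]

theorem abs_ncard_latticePoints_sub_volume_real_le (hD : Bornology.IsBounded D) :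
    |(latticePoints v D).ncard - volume.real D| ≤ (cellsMeeting v (frontier D)).ncard := by
  have hfin := finite_cellsMeeting (v := v) hD
  have hfin' : (latticePoints v D).Finite := hfin.subset (latticePoints_subset_cellsMeeting v D)
  have hfr : (cellsMeeting v (frontier D)).Finite :=
    finite_cellsMeeting (hD.closure.subset frontier_subset_closure)
  have hin : {z | cell v z ⊆ D} ⊆ latticePoints v D := fun z hz ↦ hz (corner_mem_cell v z)
  have hlow : ({z | cell v z ⊆ D}.ncard : ℝ) ≤ (latticePoints v D).ncard := by
    exact_mod_cast ncard_le_ncard hin hfin'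
  have hup : ((latticePoints v D).ncard : ℝ) ≤ (cellsMeeting v D).ncard := by
    exact_mod_cast ncard_le_ncard (latticePoints_subset_cellsMeeting v D) hfin
  have hgap : ((cellsMeeting v D).ncard : ℝ) ≤
      {z | cell v z ⊆ D}.ncard + (cellsMeeting v (frontier D)).ncard := by
    exact_mod_cast (ncard_le_ncard (cellsMeeting_subset_union_frontier v D)
      ((hfin'.subset hin).union hfr)).trans (ncard_union_le _ _)
  rw [abs_le]
  constructor <;> linarith [ncard_setOf_cell_subset_le_volume_real (v := v) hD,
    volume_real_le_ncard_cellsMeeting (v := v) hD]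

theorem exists_abs_ncard_latticePoints_smul_sub_le (hD : Bornology.IsBounded D)
    (hfr : BoxDimLE (Fintype.card ι - 1) (frontier D)) :
    ∃ C : ℝ, ∀ v : ι → ℝ, ∀ t : ℝ, 1 ≤ t →
      |(latticePoints v (t • D)).ncard - volume.real D * t ^ Fintype.card ι| ≤
        C * t ^ (Fintype.card ι - 1) := by
  obtain ⟨C, hC⟩ := hfr.exists_ncard_cellsMeeting_smul_le
  refine ⟨C, fun v t ht ↦ ?_⟩
  have hfrontier : frontier (t • D) = t • frontier D :=
    ((Homeomorph.smulOfNeZero t (by positivity)).image_frontier D).symm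
  have hvol : volume.real (t • D) = volume.real D * t ^ Fintype.card ι := by
    rw [Measure.real, Measure.addHaar_smul, ENNReal.toReal_mul, Module.finrank_fintype_fun_eq_card,
      ENNReal.toReal_ofReal (abs_nonneg _), abs_of_nonneg (by positivity), mul_comm, Measure.real]
  have h := abs_ncard_latticePoints_sub_volume_real_le (v := v) (hD.smul₀ t)
  rw [hvol, hfrontier] at h
  exact h.trans (hC v t ht)

end Count

/-! ### The frontier of the fundamental cone -/

section Frontier

variable (K : Type*) [Field K] [NumberField K]

/-- The absolute values at the infinite places of the point of the fundamental cone with parameters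
`u`: the coordinate at `w₀` is the scaling factor, the other ones are the coordinates in the
fundamental unit directions. -/
noncomputable def coneRadii (u : InfinitePlace K ⊕ {w : InfinitePlace K // IsComplex w} → ℝ) :
    realSpace K :=
  u (.inl w₀) • (expMapBasis fun i ↦ if i = w₀ then 0 else u (.inl i) : realSpace K)

/-- A parametrization of the fundamental cone and its boundary by the unit cube, once the signs
`s` at the real places are fixed: the complex coordinates of `u` are the arguments, normalized to
have period `1`. -/
noncomputable def coneParam (s : {w : InfinitePlace K // IsReal w} → ℝ)
    (u : InfinitePlace K ⊕ {w : InfinitePlace K // IsComplex w} → ℝ) : mixedSpace K :=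
  (fun w ↦ s w * coneRadii K u w,
   fun w ↦ (coneRadii K u w : ℂ) * Complex.exp ((2 * Real.pi * u (.inr w) : ℝ) * Complex.I))

theorem contDiff_expMapBasis {n : WithTop ℕ∞} :
    ContDiff ℝ n (fun x : realSpace K ↦ (expMapBasis x : realSpace K)) := by
  rw [contDiff_pi]
  intro w
  simp only [expMapBasis_apply, expMap_apply]
  have hlin := ((completeBasis K).equivFun.symm.toLinearMap.toContinuousLinearMap).contDiff (n := n)
  exact Real.contDiff_exp.comp (contDiff_const.mul (contDiff_pi.mp hlin w))

theorem contDiff_coneRadii {n : WithTop ℕ∞} : ContDiff ℝ n (coneRadii K) := by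
  refine (contDiff_apply ℝ ℝ _).smul ((contDiff_expMapBasis K).comp (contDiff_pi.mpr fun i ↦ ?_))
  split_ifs
  · exact contDiff_const
  · exact contDiff_apply ℝ ℝ _

theorem contDiff_coneParam {n : WithTop ℕ∞} (s : {w : InfinitePlace K // IsReal w} → ℝ) :
    ContDiff ℝ n (coneParam K s) := by
  have hradii (w) : ContDiff ℝ n fun u ↦ coneRadii K u w := contDiff_pi.mp (contDiff_coneRadii K) w
  refine .prodMk (contDiff_pi.mpr fun w ↦ contDiff_const.mul (hradii w))
    (contDiff_pi.mpr fun w ↦ ?_)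
  have hangle : ContDiff ℝ n fun u : InfinitePlace K ⊕ {w : InfinitePlace K // IsComplex w} → ℝ ↦
      ((2 * Real.pi * u (.inr w) : ℝ) : ℂ) :=
    Complex.ofRealCLM.contDiff.comp (contDiff_const.mul (contDiff_apply ℝ ℝ _))
  exact (Complex.ofRealCLM.contDiff.comp (hradii w)).mul
    (Complex.contDiff_exp.comp (hangle.mul contDiff_const))

theorem card_infinitePlace_sum_isComplex :
    Fintype.card (InfinitePlace K ⊕ {w : InfinitePlace K // IsComplex w}) =
      Module.finrank ℚ K := by
  rw [Fintype.card_sum, card_eq_nrRealPlaces_add_nrComplexPlaces,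
    ← card_add_two_mul_card_eq_rank, nrComplexPlaces]
  ring

theorem boxDimLE_image_coneParam (s : {w : InfinitePlace K // IsReal w} → ℝ)
    (i : InfinitePlace K ⊕ {w : InfinitePlace K // IsComplex w}) (b : ℝ) :
    BoxDimLE (Module.finrank ℚ K - 1)
      (coneParam K s '' {u | (∀ j, u j ∈ Icc (0 : ℝ) 1) ∧ u i = b}) := by
  obtain ⟨L, hL⟩ := ((contDiff_coneParam K s).contDiffOn (s := Icc 0 1)).exists_lipschitzOnWith
    one_ne_zero (convex_Icc _ _) isCompact_Icc
  rw [← card_infinitePlace_sum_isComplex K]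
  refine (boxDimLE_unitCube_inter_hyperplane i b).image (L := L) (hL.mono ?_)
  exact fun u hu ↦ ⟨fun j ↦ (hu.1 j).1, fun j ↦ (hu.1 j).2⟩

theorem exists_mem_Icc_eq_norm_mul_exp (z : ℂ) : ∃ θ ∈ Icc (0 : ℝ) 1,
    (‖z‖ : ℂ) * Complex.exp ((2 * Real.pi * θ : ℝ) * Complex.I) = z := by
  have h2π := Real.two_pi_pos
  refine ⟨toIcoMod h2π 0 z.arg / (2 * Real.pi), ?_, ?_⟩
  · have hmem := toIcoMod_mem_Ico h2π 0 z.arg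
    rw [zero_add] at hmem
    exact ⟨div_nonneg hmem.1 h2π.le, (div_le_one h2π).mpr hmem.2.le⟩
  · have hexp := Complex.exp_mul_I_periodic.sub_zsmul_eq (x := (z.arg : ℂ))
      (toIcoDiv h2π 0 z.arg)
    rw [mul_div_cancel₀ _ h2π.ne', toIcoMod]
    push_cast [zsmul_eq_mul] at hexp ⊢
    rw [hexp, Complex.norm_mul_exp_arg_mul_I]

theorem exists_coneParam_eq {x : mixedSpace K} {c : ℝ} {y : realSpace K} (hy : y w₀ = 0)
    (hx : c • (expMapBasis y : realSpace K) = normAtAllPlaces x) :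
    ∃ s : {w : InfinitePlace K // IsReal w} → SignType,
    ∃ u, coneParam K (fun w ↦ s w) u = x ∧ u (.inl w₀) = c ∧ (∀ w ≠ w₀, u (.inl w) = y w) ∧
      ∀ w, u (.inr w) ∈ Icc (0 : ℝ) 1 := by
  choose θ hθ hθ_eq using exists_mem_Icc_eq_norm_mul_exp
  let u : InfinitePlace K ⊕ {w : InfinitePlace K // IsComplex w} → ℝ :=
    Sum.elim (fun w ↦ if w = w₀ then c else y w) (fun w ↦ θ (x.2 w))
  have hu : (fun i : InfinitePlace K ↦ if i = w₀ then 0 else u (.inl i)) = y := by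
    ext i
    by_cases hi : i = w₀ <;> simp [u, hi, hy]
  have hradii (w : InfinitePlace K) : coneRadii K u w = normAtPlace w x := by
    rw [coneRadii, hu, ← normAtAllPlaces_apply, ← hx]
    simp [u]
  refine ⟨fun w ↦ SignType.sign (x.1 w), u, Prod.ext (funext fun w ↦ ?_) (funext fun w ↦ ?_),
    by simp [u], fun w hw ↦ by simp [u, hw], fun w ↦ hθ _⟩
  · simp only [coneParam, hradii, normAtPlace_apply_of_isReal w.2, Real.norm_eq_abs, sign_mul_abs]
  · simp only [coneParam, hradii, normAtPlace_apply_of_isComplex w.2]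
    exact hθ_eq _

variable {K} in
theorem mem_interior_normLeOne {x : mixedSpace K} {c : ℝ} {y : realSpace K} (hy : y w₀ = 0)
    (hx : c • (expMapBasis y : realSpace K) = normAtAllPlaces x) (hc : c ∈ Ioo (0 : ℝ) 1)
    (hy01 : ∀ w ≠ w₀, y w ∈ Ioo (0 : ℝ) 1) : x ∈ interior (normLeOne K) := by
  refine subset_interior_normLeOne K ⟨fun i ↦ if i = w₀ then Real.log c else y i, ?_, ?_⟩
  · rw [interior_paramSet, Set.mem_univ_pi]
    intro w
    by_cases hw : w = w₀
    · simpa [hw] using Real.log_neg hc.1 hc.2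
    · simpa [hw] using hy01 w hw
  · have hy_eq : (fun i ↦ if i = w₀ then 0 else if i = w₀ then Real.log c else y i) = y := by
      ext i
      by_cases hi : i = w₀ <;> simp [hi, hy]
    rw [← hx, expMapBasis_apply'', hy_eq, if_pos rfl, Real.exp_log hc.1]

theorem frontier_normLeOne_subset :
    frontier (normLeOne K) ⊆ ⋃ s : {w : InfinitePlace K // IsReal w} → SignType,
      ⋃ i : InfinitePlace K, ⋃ b : Fin 2, coneParam K (fun w ↦ s w) ''
        {u | (∀ j, u j ∈ Icc (0 : ℝ) 1) ∧ u (.inl i) = b} := by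
  rintro x ⟨hx, hx_int⟩
  obtain ⟨c, hc, _, ⟨y, hy, rfl⟩, hxy⟩ := closure_normLeOne_subset K hx
  rw [Set.mem_univ_pi] at hy
  have hy₀ : y w₀ = 0 := by simpa using hy w₀
  obtain ⟨s, u, hux, hu₀, hu, hu_arg⟩ := exists_coneParam_eq K hy₀ hxy
  have hcube : ∀ j, u j ∈ Icc (0 : ℝ) 1 := by
    rintro (w | w)
    · by_cases hw : w = w₀
      · rwa [hw, hu₀]
      · rw [hu w hw]
        simpa [hw] using hy w
    · exact hu_arg w
  obtain ⟨i, b, hib⟩ : ∃ i : InfinitePlace K, ∃ b : Fin 2, u (.inl i) = b := by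
    by_contra! hne
    have hopen (i : InfinitePlace K) : u (.inl i) ∈ Ioo (0 : ℝ) 1 :=
      ⟨(hcube _).1.lt_of_ne (by simpa using (hne i 0).symm),
        (hcube _).2.lt_of_ne (by simpa using hne i 1)⟩
    exact hx_int (mem_interior_normLeOne hy₀ hxy (hu₀ ▸ hopen w₀) fun w hw ↦ hu w hw ▸ hopen w)
  exact mem_iUnion.mpr ⟨s, mem_iUnion₂.mpr ⟨i, b, u, ⟨hcube, hib⟩, hux⟩⟩

/-- The elements of the mixed space with the signs `s` at the real places. -/
def signSet (s : {w : InfinitePlace K // IsReal w} → ℝ) : Set (mixedSpace K) :=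
  {x | ∀ w, 0 < s w * x.1 w}

theorem isOpen_signSet (s : {w : InfinitePlace K // IsReal w} → ℝ) : IsOpen (signSet K s) := by
  have hinter : signSet K s = ⋂ w, {x : mixedSpace K | 0 < s w * x.1 w} := by
    ext
    simp [signSet]
  rw [hinter]
  exact isOpen_iInter_of_finite fun w ↦ isOpen_lt continuous_const (by fun_prop)

variable {s : {w : InfinitePlace K // IsReal w} → ℝ} (hs : ∀ w, s w ≠ 0)
include hs

theorem frontier_signSet_subset : frontier (signSet K s) ⊆ {x | ∃ w, x.1 w = 0} := by
  intro x hx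
  rw [(isOpen_signSet K s).frontier_eq] at hx
  by_contra hne
  refine hx.2 fun w ↦ ?_
  have hclosure : closure (signSet K s) ⊆ {x : mixedSpace K | 0 ≤ s w * x.1 w} :=
    closure_minimal (fun y hy ↦ (hy w).le) (isClosed_le continuous_const (by fun_prop))
  exact (hclosure hx.1).lt_of_ne' (mul_ne_zero (hs w) fun h ↦ hne ⟨w, h⟩)

omit hs in
theorem eq_zero_of_mem_closure_normLeOne {x : mixedSpace K} (hx : x ∈ closure (normLeOne K))
    {w : {w : InfinitePlace K // IsReal w}} (hw : x.1 w = 0) : x = 0 := by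
  obtain ⟨c, -, _, ⟨y, -, rfl⟩, hxy⟩ := closure_normLeOne_subset K hx
  have hnorm (v : InfinitePlace K) : c * (expMapBasis y : realSpace K) v = normAtPlace v x :=
    congrFun hxy v
  have hcw : c * (expMapBasis y : realSpace K) w = 0 := by
    rw [hnorm, normAtPlace_apply_of_isReal w.2, hw, norm_zero]
  have hc0 : c = 0 := (mul_eq_zero.mp hcw).resolve_right (expMapBasis_pos y w).ne'
  refine forall_normAtPlace_eq_zero_iff.mp fun v ↦ ?_
  rw [← hnorm, hc0, zero_mul]

theorem boxDimLE_frontier_normLeOne_inter_signSet :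
    BoxDimLE (Module.finrank ℚ K - 1) (frontier (normLeOne K ∩ signSet K s)) := by
  have hnormLeOne : BoxDimLE (Module.finrank ℚ K - 1) (frontier (normLeOne K)) :=
    BoxDimLE.mono (.iUnion fun s ↦ .iUnion fun i ↦ .iUnion fun b ↦
      boxDimLE_image_coneParam K _ _ _) (frontier_normLeOne_subset K)
  refine (hnormLeOne.union (boxDimLE_singleton _ 0)).mono ((frontier_inter_subset _ _).trans ?_)
  refine union_subset_union inter_subset_left ?_
  rintro x ⟨hx, hx_sign⟩
  obtain ⟨w, hw⟩ := frontier_signSet_subset K hs hx_sign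
  exact eq_zero_of_mem_closure_normLeOne K hx hw

end Frontier

/-! ### Algebraic integers in a residue class and a sign chamber -/

section CosetCount

variable (K : Type*) [Field K] [NumberField K]

/-- The coordinates of the mixed space in the basis that spans the lattice of algebraic integers. -/
noncomputable def coords :
    mixedSpace K ≃L[ℝ] (Module.Free.ChooseBasisIndex ℤ (𝓞 K) → ℝ) :=
  (latticeBasis K).equivFun.toContinuousLinearEquiv

theorem coords_mixedEmbedding (α : 𝓞 K) (i : Module.Free.ChooseBasisIndex ℤ (𝓞 K)) :
    coords K (mixedEmbedding K α) i = ((RingOfIntegers.basis K).repr α i : ℤ) := by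
  change (latticeBasis K).repr (mixedEmbedding K α) i = _
  rw [latticeBasis_repr_apply, integralBasis_repr_apply, eq_intCast, Rat.cast_intCast]

theorem card_chooseBasisIndex_ringOfIntegers :
    Fintype.card (Module.Free.ChooseBasisIndex ℤ (𝓞 K)) = Module.finrank ℚ K := by
  rw [← Module.finrank_eq_card_basis (RingOfIntegers.basis K), RingOfIntegers.rank]

theorem smul_normLeOne_inter_signSet (s : {w : InfinitePlace K // IsReal w} → ℝ) {t : ℝ}
    (ht : 0 < t) : t • (normLeOne K ∩ signSet K s) =
      {x | x ∈ fundamentalCone K ∧ x ∈ signSet K s ∧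
        mixedEmbedding.norm x ≤ t ^ Module.finrank ℚ K} := by
  ext x
  rw [mem_smul_set_iff_inv_smul_mem₀ ht.ne']
  have hsign : t⁻¹ • x ∈ signSet K s ↔ x ∈ signSet K s := by
    refine forall_congr' fun w ↦ ?_
    rw [Prod.smul_fst, Pi.smul_apply, smul_eq_mul, mul_left_comm]
    exact mul_pos_iff_of_pos_left (inv_pos.mpr ht)
  have hnorm : mixedEmbedding.norm (t⁻¹ • x) ≤ 1 ↔
      mixedEmbedding.norm x ≤ t ^ Module.finrank ℚ K := by
    rw [mixedEmbedding.norm_smul, abs_of_pos (inv_pos.mpr ht), inv_pow,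
      inv_mul_le_iff₀ (by positivity), mul_one]
  simp only [mem_inter_iff, mem_ofPred_eq, hsign, hnorm, smul_mem_iff_mem (inv_ne_zero ht.ne')]
  tauto

/-- The elements of the coset `β + Q 𝓞 K` in the fundamental cone, of norm at most `X` and with
signs `s` at the real places. -/
def cosetSet (Q : ℕ) (β : 𝓞 K) (s : {w : InfinitePlace K // IsReal w} → ℝ) (X : ℝ) :
    Set (𝓞 K) :=
  {α | mixedEmbedding K α ∈ fundamentalCone K ∧ mixedEmbedding K α ∈ signSet K s ∧
    mixedEmbedding.norm (mixedEmbedding K α) ≤ X ∧ ∃ γ, α = β + Q * γ}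

/-- The element of the coset `β + Q 𝓞 K` with coordinates `z` relative to `β`. -/
noncomputable def cosetPoint (Q : ℕ) (β : 𝓞 K)
    (z : Module.Free.ChooseBasisIndex ℤ (𝓞 K) → ℤ) : 𝓞 K :=
  β + Q * (RingOfIntegers.basis K).equivFun.symm z

variable {Q : ℕ} (hQ : 0 < Q) (β : 𝓞 K)
include hQ

theorem cosetPoint_injective : Function.Injective (cosetPoint K Q β) := by
  intro z z' h
  have hQ' : (Q : 𝓞 K) ≠ 0 := by exact_mod_cast hQ.ne'
  exact (RingOfIntegers.basis K).equivFun.symm.injective (mul_left_cancel₀ hQ' (add_left_cancel h))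

theorem coords_cosetPoint (z : Module.Free.ChooseBasisIndex ℤ (𝓞 K) → ℤ) :
    coords K (mixedEmbedding K (cosetPoint K Q β z)) =
      (Q : ℝ) • fun i ↦ (z i : ℝ) + ((RingOfIntegers.basis K).repr β i : ℝ) / Q := by
  have hQ' : (Q : ℝ) ≠ 0 := by exact_mod_cast hQ.ne'
  ext i
  have hz : (RingOfIntegers.basis K).repr ((RingOfIntegers.basis K).equivFun.symm z) i = z i :=
    congrFun ((RingOfIntegers.basis K).equivFun.apply_symm_apply z) i
  rw [coords_mixedEmbedding, cosetPoint, map_add, ← nsmul_eq_mul, map_nsmul, Finsupp.add_apply,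
    Finsupp.smul_apply, hz, nsmul_eq_mul, Pi.smul_apply, smul_eq_mul, mul_add,
    mul_div_cancel₀ _ hQ']
  push_cast
  ring

theorem cosetSet_eq_image (s : {w : InfinitePlace K // IsReal w} → ℝ) {t : ℝ} (ht : 0 < t) :
    cosetSet K Q β s ((Q * t) ^ Module.finrank ℚ K) = cosetPoint K Q β ''
      latticePoints (fun i ↦ ((RingOfIntegers.basis K).repr β i : ℝ) / Q)
        (t • (coords K '' (normLeOne K ∩ signSet K s))) := by
  have hQ' : (0 : ℝ) < Q := by exact_mod_cast hQ
  have hmem (z : Module.Free.ChooseBasisIndex ℤ (𝓞 K) → ℤ) :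
      z ∈ latticePoints (fun i ↦ ((RingOfIntegers.basis K).repr β i : ℝ) / Q)
        (t • (coords K '' (normLeOne K ∩ signSet K s))) ↔
      mixedEmbedding K (cosetPoint K Q β z) ∈ ((Q : ℝ) * t) • (normLeOne K ∩ signSet K s) := by
    rw [latticePoints, mem_ofPred_eq, ← (coords K).injective.mem_set_image, image_smul_set,
      coords_cosetPoint K hQ, mul_smul, smul_mem_smul_set_iff₀ hQ'.ne']
  ext α
  simp only [cosetSet, mem_image, hmem, smul_normLeOne_inter_signSet K s (mul_pos hQ' ht),
    mem_ofPred_eq]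
  constructor
  · rintro ⟨hcone, hsign, hnorm, γ, rfl⟩
    have hγ : cosetPoint K Q β ((RingOfIntegers.basis K).equivFun γ) = β + Q * γ := by
      rw [cosetPoint, LinearEquiv.symm_apply_apply]
    exact ⟨_, hγ.symm ▸ ⟨hcone, hsign, hnorm⟩, hγ⟩
  · rintro ⟨z, ⟨hcone, hsign, hnorm⟩, rfl⟩
    exact ⟨hcone, hsign, hnorm, _, rfl⟩

omit hQ in
theorem isBounded_image_coords_normLeOne (s : {w : InfinitePlace K // IsReal w} → ℝ) :
    Bornology.IsBounded (coords K '' (normLeOne K ∩ signSet K s)) :=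
  (coords K).lipschitz.isBounded_image ((isBounded_normLeOne K).subset inter_subset_left)

theorem finite_cosetSet (s : {w : InfinitePlace K // IsReal w} → ℝ) (X : ℝ) :
    (cosetSet K Q β s X).Finite := by
  have hQt : 1 ≤ Q * max 1 X :=
    one_le_mul_of_one_le_of_one_le (by exact_mod_cast hQ) (le_max_left _ _)
  have hX : X ≤ (Q * max 1 X) ^ Module.finrank ℚ K := calc
    X ≤ max 1 X := le_max_right _ _
    _ ≤ Q * max 1 X := le_mul_of_one_le_left (by positivity) (by exact_mod_cast hQ)
    _ ≤ (Q * max 1 X) ^ Module.finrank ℚ K := le_self_pow₀ hQt Module.finrank_pos.ne'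
  refine Finite.subset (s := cosetSet K Q β s ((Q * max 1 X) ^ Module.finrank ℚ K)) ?_
    fun α hα ↦ ⟨hα.1, hα.2.1, hα.2.2.1.trans hX, hα.2.2.2⟩
  rw [cosetSet_eq_image K hQ β s (by positivity)]
  exact ((finite_cellsMeeting ((isBounded_image_coords_normLeOne K s).smul₀ _)).subset
    (latticePoints_subset_cellsMeeting _ _)).image _

omit hQ in
theorem isBigO_sub_mul_of_abs_sub_mul_pow_le {f : ℝ → ℝ} {n : ℕ} (hn : 0 < n) {Q V C : ℝ}
    (hQ : 1 ≤ Q) (hf : ∀ t, 1 ≤ t → |f ((Q * t) ^ n) - V * t ^ n| ≤ C * t ^ (n - 1)) :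
    (fun X : ℝ ↦ f X - V / Q ^ n * X) =O[atTop] fun X : ℝ ↦ X ^ (1 - 1 / (n : ℝ)) := by
  refine IsBigO.of_bound |C| ?_
  filter_upwards [eventually_ge_atTop (Q ^ n)] with X hX
  have hQ₀ : 0 < Q := by linarith
  have hX₀ : 0 ≤ X := le_trans (by positivity) hX
  set t := X ^ (1 / (n : ℝ)) / Q
  have hroot : Q * t = X ^ (1 / (n : ℝ)) := mul_div_cancel₀ _ hQ₀.ne'
  have hQX : Q ≤ X ^ (1 / (n : ℝ)) := by
    rwa [one_div, Real.le_rpow_inv_iff_of_pos hQ₀.le hX₀ (by exact_mod_cast hn), Real.rpow_natCast]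
  have ht : 1 ≤ t := (one_le_div hQ₀).mpr hQX
  have htX : (Q * t) ^ n = X := by rw [hroot, one_div, Real.rpow_inv_natCast_pow hX₀ hn.ne']
  have hmain : V / Q ^ n * X = V * t ^ n := by
    rw [← htX, mul_pow]
    field_simp
  rw [hmain, ← htX, htX, Real.norm_eq_abs, Real.norm_of_nonneg (by positivity)]
  calc |f X - V * t ^ n| ≤ C * t ^ (n - 1) := by simpa only [htX] using hf t ht
    _ ≤ |C| * (Q * t) ^ (n - 1) := by
        gcongr
        · exact le_abs_self C
        · exact le_mul_of_one_le_left (by positivity) hQ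
    _ = |C| * X ^ (1 - 1 / (n : ℝ)) := by
        rw [hroot, ← Real.rpow_natCast, ← Real.rpow_mul hX₀, Nat.cast_sub hn]
        congr 2
        field_simp
        simp

theorem exists_isBigO_ncard_cosetSet_sub {s : {w : InfinitePlace K // IsReal w} → ℝ}
    (hs : ∀ w, s w ≠ 0) :
    ∃ c : ℝ, (fun X : ℝ ↦ ((cosetSet K Q β s X).ncard : ℝ) - c * X) =O[atTop]
      fun X : ℝ ↦ X ^ (1 - 1 / (Module.finrank ℚ K : ℝ)) := by
  have hfrontier : BoxDimLE (Fintype.card (Module.Free.ChooseBasisIndex ℤ (𝓞 K)) - 1)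
      (frontier (coords K '' (normLeOne K ∩ signSet K s))) := by
    rw [card_chooseBasisIndex_ringOfIntegers, ← ContinuousLinearEquiv.coe_toHomeomorph,
      ← Homeomorph.image_frontier]
    exact (boxDimLE_frontier_normLeOne_inter_signSet K hs).image
      (coords K).lipschitz.lipschitzOnWith
  obtain ⟨C, hC⟩ := exists_abs_ncard_latticePoints_smul_sub_le
    (isBounded_image_coords_normLeOne K s) hfrontier
  refine ⟨volume.real (coords K '' (normLeOne K ∩ signSet K s)) / Q ^ Module.finrank ℚ K,
    isBigO_sub_mul_of_abs_sub_mul_pow_le (C := C) Module.finrank_pos (by exact_mod_cast hQ)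
      fun t ht ↦ ?_⟩
  rw [cosetSet_eq_image K hQ β s (by linarith),
    ncard_image_of_injective _ (cosetPoint_injective K hQ β)]
  simpa only [card_chooseBasisIndex_ringOfIntegers] using hC _ t ht

end CosetCount

/-! ### Norms of algebraic integers modulo `Q` -/

section Norm

variable {K : Type*} [Field K]

theorem filter_mk_eq_pair [NumberField K] (w : InfinitePlace K) :
    (Finset.univ.filter fun φ : K →+* ℂ ↦ InfinitePlace.mk φ = w) =
      {w.embedding, ComplexEmbedding.conjugate w.embedding} := by
  ext φ
  rw [Finset.mem_filter, Finset.mem_insert, Finset.mem_singleton]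
  conv_lhs => rw [← mk_embedding w, mk_eq_iff, ComplexEmbedding.conjugate, star_involutive.eq_iff]
  simp [ComplexEmbedding.conjugate]

variable [NumberField K]

theorem exists_pos_prod_embeddings_eq {x : K} (hx₀ : x ≠ 0)
    (hx : ∀ w : {w : InfinitePlace K // IsReal w}, 0 < (mixedEmbedding K x).1 w)
    (w : InfinitePlace K) :
    ∃ r : ℝ, 0 < r ∧ ∏ φ : K →+* ℂ with InfinitePlace.mk φ = w, φ x = (r : ℂ) := by
  rw [filter_mk_eq_pair]
  by_cases hw : IsReal w
  · rw [ComplexEmbedding.isReal_iff.mp (isReal_iff.mp hw), Finset.pair_eq_singleton,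
      Finset.prod_singleton]
    exact ⟨embedding_of_isReal hw x, by simpa using hx ⟨w, hw⟩,
      (embedding_of_isReal_apply hw x).symm⟩
  · refine ⟨Complex.normSq (w.embedding x), by simpa using hx₀, ?_⟩
    rw [Finset.prod_pair, ComplexEmbedding.conjugate_coe_eq, Complex.mul_conj]
    rwa [Ne, eq_comm, ← ComplexEmbedding.isReal_iff, ← isReal_iff]

theorem norm_pos_of_real_pos {x : K} (hx₀ : x ≠ 0)
    (hx : ∀ w : {w : InfinitePlace K // IsReal w}, 0 < (mixedEmbedding K x).1 w) :
    0 < Algebra.norm ℚ x := by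
  choose r hr hr_eq using exists_pos_prod_embeddings_eq hx₀ hx
  have hprod : (Algebra.norm ℚ x : ℂ) = ((∏ w, r w : ℝ) : ℂ) := by
    rw [← eq_ratCast (algebraMap ℚ ℂ), Algebra.norm_eq_prod_embeddings ℚ ℂ x,
      ← Fintype.prod_equiv (RingHom.equivRatAlgHom K ℂ) (fun φ ↦ φ x) (fun φ ↦ φ x)
        fun _ ↦ by simp [RingHom.equivRatAlgHom_apply],
      ← Finset.prod_fiberwise Finset.univ InfinitePlace.mk, Complex.ofReal_prod]
    exact Finset.prod_congr rfl fun w _ ↦ hr_eq w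
  have hprod_real : (Algebra.norm ℚ x : ℝ) = ∏ w, r w := by exact_mod_cast hprod
  have hpos : (0 : ℝ) < (Algebra.norm ℚ x : ℝ) := hprod_real ▸ Finset.prod_pos fun w _ ↦ hr w
  exact_mod_cast hpos

theorem norm_add_mul_intCast_zmod (Q : ℕ) (β γ : 𝓞 K) :
    ((Algebra.norm ℤ (β + Q * γ) : ℤ) : ZMod Q) = (Algebra.norm ℤ β : ℤ) := by
  rw [Algebra.norm_eq_matrix_det (RingOfIntegers.basis K),
    Algebra.norm_eq_matrix_det (RingOfIntegers.basis K), ← eq_intCast (Int.castRingHom (ZMod Q)),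
    ← eq_intCast (Int.castRingHom (ZMod Q)), RingHom.map_det, RingHom.map_det, ← nsmul_eq_mul,
    map_add, map_nsmul]
  congr 1
  ext i j
  simp [-nsmul_eq_mul]

theorem natAbs_intCast_zmod_eq {Q : ℕ} {a b : ℤ} (hab : 0 < a * b)
    (h : (a : ZMod Q) = (b : ZMod Q)) : (a.natAbs : ZMod Q) = (b.natAbs : ZMod Q) := by
  have habs (c : ℤ) : (c.natAbs : ZMod Q) = ((|c| : ℤ) : ZMod Q) := by
    rw [Int.abs_eq_natAbs, Int.cast_natCast]
  rw [habs, habs]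
  rcases pos_and_pos_or_neg_and_neg_of_mul_pos hab with ⟨ha, hb⟩ | ⟨ha, hb⟩
  · rwa [abs_of_pos ha, abs_of_pos hb]
  · rw [abs_of_neg ha, abs_of_neg hb, Int.cast_neg, Int.cast_neg, h]

theorem natAbs_norm_add_mul_natCast_zmod {Q : ℕ} {α γ : 𝓞 K} (hα : α ≠ 0) (hγ : α + Q * γ ≠ 0)
    (hsign : ∀ w, 0 < (mixedEmbedding K α).1 w * (mixedEmbedding K (α + Q * γ : 𝓞 K)).1 w) :
    ((Algebra.norm ℤ (α + Q * γ)).natAbs : ZMod Q) = ((Algebra.norm ℤ α).natAbs : ZMod Q) := by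
  refine (natAbs_intCast_zmod_eq ?_ (norm_add_mul_intCast_zmod Q α γ).symm).symm
  have hpos : 0 < Algebra.norm ℚ ((α * (α + Q * γ) : 𝓞 K) : K) := by
    refine norm_pos_of_real_pos (by exact_mod_cast mul_ne_zero hα hγ) fun w ↦ ?_
    simpa using hsign w
  rw [← map_mul]
  rw [← Algebra.coe_norm_int] at hpos
  exact_mod_cast hpos

end Norm

/-! ### Elements of the fundamental cone by ray class -/

section RayClass

theorem ncard_eq_sum_ncard_fiber {α ι : Type*} {S : Set α} (hS : S.Finite) {f : α → ι}
    {t : Finset ι} (hf : MapsTo f S t) : S.ncard = ∑ i ∈ t, {x ∈ S | f x = i}.ncard := by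
  obtain ⟨S, rfl⟩ := hS.exists_finset_coe
  rw [ncard_coe_finset, Finset.card_eq_sum_card_fiberwise hf]
  refine Finset.sum_congr rfl fun i _ ↦ ?_
  rw [← ncard_coe_finset]
  simp

variable {K : Type*} [Field K] [NumberField K] {Q : ℕ}

theorem norm_mixedEmbedding_eq_natAbs (α : 𝓞 K) :
    mixedEmbedding.norm (mixedEmbedding K α) = ((Algebra.norm ℤ α).natAbs : ℝ) := by
  rw [mixedEmbedding.norm_eq_norm, ← Algebra.coe_norm_int]
  simp [Nat.cast_natAbs]

theorem ne_zero_of_mem_fundamentalCone {α : 𝓞 K} (hα : mixedEmbedding K α ∈ fundamentalCone K) :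
    α ≠ 0 := by
  rintro rfl
  simpa using norm_pos_of_mem hα

theorem real_ne_zero_of_mem_fundamentalCone {x : mixedSpace K} (hx : x ∈ fundamentalCone K)
    (w : {w : InfinitePlace K // IsReal w}) : x.1 w ≠ 0 := by
  have hpos := normAtPlace_pos_of_mem hx w.1
  rw [normAtPlace_apply_of_isReal w.2] at hpos
  exact norm_pos_iff.mp hpos

/-- The class of an algebraic integer modulo `Q` together with its signs at the real places. -/
noncomputable def rayClass (Q : ℕ) (α : 𝓞 K) :
    (𝓞 K ⧸ span {(Q : 𝓞 K)}) × ({w : InfinitePlace K // IsReal w} → SignType) :=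
  (Ideal.Quotient.mk _ α, fun w ↦ SignType.sign ((mixedEmbedding K α).1 w))

theorem finite_quotient_span_natCast (hQ : 0 < Q) : Finite (𝓞 K ⧸ span {(Q : 𝓞 K)}) := by
  refine Ideal.finiteQuotientOfFreeOfNeBot _ ?_
  rw [Ne, span_singleton_eq_bot]
  exact_mod_cast hQ.ne'

theorem sign_eq_sign_iff_mul_pos {x y : ℝ} (hx : x ≠ 0) (hy : y ≠ 0) :
    SignType.sign y = SignType.sign x ↔ 0 < x * y := by
  rcases hx.lt_or_gt with hx | hx <;> rcases hy.lt_or_gt with hy | hy <;>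
    simp [hx, hy, mul_pos_iff, hx.not_gt, hy.not_gt]

theorem rayClass_eq_iff {α β : 𝓞 K} (hα : mixedEmbedding K α ∈ fundamentalCone K)
    (hβ : mixedEmbedding K β ∈ fundamentalCone K) :
    rayClass Q α = rayClass Q β ↔
      mixedEmbedding K α ∈ signSet K (mixedEmbedding K β).1 ∧ ∃ γ, α = β + Q * γ := by
  rw [rayClass, rayClass, Prod.mk.injEq, and_comm, funext_iff, Ideal.Quotient.eq,
    mem_span_singleton]
  refine and_congr (forall_congr' fun w ↦ ?_) (exists_congr fun γ ↦ sub_eq_iff_eq_add')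
  exact sign_eq_sign_iff_mul_pos (real_ne_zero_of_mem_fundamentalCone hβ w)
    (real_ne_zero_of_mem_fundamentalCone hα w)

/-- The elements of `A` of norm at most `X` in the fundamental cone. -/
def coneCut (A : Set (𝓞 K)) (X : ℝ) : Set (𝓞 K) :=
  {α | mixedEmbedding K α ∈ fundamentalCone K ∧ ((Algebra.norm ℤ α).natAbs : ℝ) ≤ X ∧ α ∈ A}

/-- Membership in `A` of an element of the fundamental cone depends only on its ray class
modulo `Q`. -/
def IsRayInvariant (Q : ℕ) (A : Set (𝓞 K)) : Prop :=
  ∀ ⦃α β : 𝓞 K⦄, mixedEmbedding K α ∈ fundamentalCone K → mixedEmbedding K β ∈ fundamentalCone K →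
    rayClass Q α = rayClass Q β → β ∈ A → α ∈ A

variable {A : Set (𝓞 K)}

theorem coneCut_rayClass_fiber_eq_cosetSet (hA : IsRayInvariant Q A) {β : 𝓞 K} (hβA : β ∈ A)
    (hβ : mixedEmbedding K β ∈ fundamentalCone K) (X : ℝ) :
    {α ∈ coneCut A X | rayClass Q α = rayClass Q β} =
      cosetSet K Q β (mixedEmbedding K β).1 X := by
  ext α
  simp only [coneCut, cosetSet, mem_ofPred_eq, norm_mixedEmbedding_eq_natAbs]
  constructor
  · rintro ⟨⟨hα, hnorm, -⟩, hclass⟩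
    obtain ⟨hsign, hcoset⟩ := (rayClass_eq_iff hα hβ).mp hclass
    exact ⟨hα, hsign, hnorm, hcoset⟩
  · rintro ⟨hα, hsign, hnorm, hcoset⟩
    have hclass := (rayClass_eq_iff hα hβ).mpr ⟨hsign, hcoset⟩
    exact ⟨⟨hα, hnorm, hA hα hβ hclass hβA⟩, hclass⟩

theorem exists_isBigO_ncard_coneCut_fiber_sub (hQ : 0 < Q) (hA : IsRayInvariant Q A)
    (p : (𝓞 K ⧸ span {(Q : 𝓞 K)}) × ({w : InfinitePlace K // IsReal w} → SignType)) :
    (∀ X, {α ∈ coneCut A X | rayClass Q α = p}.Finite) ∧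
    ∃ c : ℝ, (fun X : ℝ ↦ ({α ∈ coneCut A X | rayClass Q α = p}.ncard : ℝ) - c * X) =O[atTop]
      fun X : ℝ ↦ X ^ (1 - 1 / (Module.finrank ℚ K : ℝ)) := by
  by_cases hp : ∃ β ∈ A, mixedEmbedding K β ∈ fundamentalCone K ∧ rayClass Q β = p
  · obtain ⟨β, hβA, hβ, rfl⟩ := hp
    simp only [coneCut_rayClass_fiber_eq_cosetSet hA hβA hβ]
    exact ⟨finite_cosetSet K hQ β _,
      exists_isBigO_ncard_cosetSet_sub K hQ β (real_ne_zero_of_mem_fundamentalCone hβ)⟩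
  · have hempty (X : ℝ) : {α ∈ coneCut A X | rayClass Q α = p} = ∅ :=
      eq_empty_of_forall_notMem fun α hα ↦ hp ⟨α, hα.1.2.2, hα.1.1, hα.2⟩
    simp only [hempty, finite_empty, implies_true, ncard_empty, true_and]
    exact ⟨0, by simpa using isBigO_zero _ _⟩

theorem finite_coneCut (hQ : 0 < Q) (hA : IsRayInvariant Q A) (X : ℝ) : (coneCut A X).Finite := by
  have := finite_quotient_span_natCast (K := K) hQ
  refine (Set.finite_iUnion fun p ↦
    (exists_isBigO_ncard_coneCut_fiber_sub hQ hA p).1 X).subset fun α hα ↦ ?_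
  exact mem_iUnion.mpr ⟨rayClass Q α, hα, rfl⟩

theorem exists_isBigO_ncard_coneCut_sub (hQ : 0 < Q) (hA : IsRayInvariant Q A) :
    ∃ c : ℝ, (fun X : ℝ ↦ ((coneCut A X).ncard : ℝ) - c * X) =O[atTop]
      fun X : ℝ ↦ X ^ (1 - 1 / (Module.finrank ℚ K : ℝ)) := by
  have := finite_quotient_span_natCast (K := K) hQ
  have := Fintype.ofFinite (𝓞 K ⧸ span {(Q : 𝓞 K)})
  choose c hc using fun p ↦ (exists_isBigO_ncard_coneCut_fiber_sub hQ hA p).2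
  refine ⟨∑ p, c p, (IsBigO.fun_sum (s := Finset.univ) fun p _ ↦ hc p).congr_left fun X ↦ ?_⟩
  rw [Finset.sum_sub_distrib, ← Finset.sum_mul, ← Nat.cast_sum,
    ← ncard_eq_sum_ncard_fiber (finite_coneCut hQ hA X) (by simp [MapsTo])]

variable (J : (Ideal (𝓞 K))⁰) (q : ℕ) (a : ZMod q)

/-- The elements of `J` in the fundamental cone of norm `k * N J`. -/
def coneElements (k : ℕ) : Set (𝓞 K) :=
  {α | mixedEmbedding K α ∈ fundamentalCone K ∧ α ∈ J.1 ∧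
    (Algebra.norm ℤ α).natAbs = k * absNorm J.1}

/-- The elements of `J` of norm `k * N J` for some `k` in the residue class `a`. -/
def normResidueElements : Set (𝓞 K) :=
  {α | α ∈ J.1 ∧ ∃ k : ℕ, (k : ZMod q) = a ∧ (Algebra.norm ℤ α).natAbs = k * absNorm J.1}

theorem isRayInvariant_normResidueElements :
    IsRayInvariant (q * absNorm J.1) (normResidueElements J q a) := by
  rintro α β hα hβ hclass ⟨hβJ, k, hk, hnorm⟩
  obtain ⟨hsign, γ, rfl⟩ := (rayClass_eq_iff hα hβ).mp hclass
  have hαJ : β + (q * absNorm J.1 : ℕ) * γ ∈ J.1 := by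
    refine J.1.add_mem hβJ (J.1.mul_mem_right _ ?_)
    rw [Nat.cast_mul]
    exact J.1.mul_mem_left _ (absNorm_mem J.1)
  obtain ⟨l, hl⟩ : absNorm J.1 ∣ (Algebra.norm ℤ (β + (q * absNorm J.1 : ℕ) * γ)).natAbs := by
    rw [← absNorm_span_singleton]
    exact absNorm_dvd_absNorm_of_le ((span_singleton_le_iff_mem _).mpr hαJ)
  rw [mul_comm _ l] at hl
  have hcong := natAbs_norm_add_mul_natCast_zmod (ne_zero_of_mem_fundamentalCone hβ)
    (ne_zero_of_mem_fundamentalCone hα) hsign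
  rw [hl, hnorm, ZMod.natCast_eq_natCast_iff] at hcong
  refine ⟨hαJ, l, ?_, hl⟩
  rw [← hk, ZMod.natCast_eq_natCast_iff]
  exact hcong.mul_right_cancel' (absNorm_pos_of_nonZeroDivisors J).ne'

variable [NeZero q]

theorem sum_ncard_coneElements {X : ℝ} (hX : 0 ≤ X) :
    ∑ k ∈ Finset.Icc 1 ⌊X⌋₊ with ((k : ℕ) : ZMod q) = a, (coneElements J k).ncard =
      (coneCut (normResidueElements J q a) (X * absNorm J.1)).ncard := by
  have hN : 0 < absNorm J.1 := absNorm_pos_of_nonZeroDivisors J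
  have hle (k : ℕ) : ((k * absNorm J.1 : ℕ) : ℝ) ≤ X * absNorm J.1 ↔ k ≤ ⌊X⌋₊ := by
    rw [Nat.cast_mul, mul_le_mul_iff_of_pos_right (by exact_mod_cast hN), Nat.le_floor_iff hX]
  rw [ncard_eq_sum_ncard_fiber (f := fun α ↦ (Algebra.norm ℤ α).natAbs / absNorm J.1)
    (finite_coneCut (Nat.mul_pos (NeZero.pos q) hN) (isRayInvariant_normResidueElements J q a) _)]
  · refine Finset.sum_congr rfl fun k hk ↦ congrArg ncard (Set.ext fun α ↦ ?_)
    rw [Finset.mem_filter, Finset.mem_Icc] at hk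
    constructor
    · rintro ⟨hα, hαJ, hnorm⟩
      refine ⟨⟨hα, ?_, hαJ, k, hk.2, hnorm⟩, by rw [hnorm, Nat.mul_div_cancel _ hN]⟩
      rw [hnorm, hle]
      exact hk.1.2
    · rintro ⟨⟨hα, -, hαJ, l, -, hnorm⟩, hl⟩
      rw [hnorm, Nat.mul_div_cancel _ hN] at hl
      exact ⟨hα, hαJ, hl ▸ hnorm⟩
  · rintro α ⟨hα, hle_norm, -, k, hk, hnorm⟩
    have hk₀ : k ≠ 0 := by
      rintro rfl
      rw [zero_mul, Int.natAbs_eq_zero, Algebra.norm_eq_zero_iff] at hnorm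
      exact ne_zero_of_mem_fundamentalCone hα hnorm
    rw [hnorm, hle] at hle_norm
    simp only [Finset.coe_filter, Finset.mem_Icc, mem_ofPred_eq, hnorm, Nat.mul_div_cancel _ hN]
    exact ⟨⟨Nat.one_le_iff_ne_zero.mpr hk₀, hle_norm⟩, hk⟩

theorem exists_isBigO_sum_ncard_coneElements_sub :
    ∃ c : ℝ, (fun X : ℝ ↦ ∑ k ∈ Finset.Icc 1 ⌊X⌋₊ with ((k : ℕ) : ZMod q) = a,
        ((coneElements J k).ncard : ℝ) - c * X) =O[atTop]
      fun X : ℝ ↦ X ^ (1 - 1 / (Module.finrank ℚ K : ℝ)) := by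
  set N := absNorm J.1
  have hN : 0 < N := absNorm_pos_of_nonZeroDivisors J
  have hN' : (0 : ℝ) < N := by exact_mod_cast hN
  obtain ⟨c, hc⟩ := exists_isBigO_ncard_coneCut_sub (Nat.mul_pos (NeZero.pos q) hN)
    (isRayInvariant_normResidueElements J q a)
  have hscaled := hc.comp_tendsto (tendsto_id.atTop_mul_const hN')
  refine ⟨c * N, (hscaled.congr' ?_ EventuallyEq.rfl).trans ?_⟩
  · filter_upwards [eventually_ge_atTop 0] with X hX
    rw [Function.comp_apply, id_eq, ← sum_ncard_coneElements J q a hX, Nat.cast_sum]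
    ring
  · refine IsBigO.of_bound ((N : ℝ) ^ (1 - 1 / (Module.finrank ℚ K : ℝ))) ?_
    filter_upwards [eventually_ge_atTop 0] with X hX
    rw [Function.comp_apply, id_eq, Real.mul_rpow hX hN'.le, norm_mul, mul_comm,
      Real.norm_of_nonneg (Real.rpow_nonneg hN'.le _)]

end RayClass

/-! ### Ideals by norm residue class -/

section IdealCount

variable (K : Type*) [Field K] [NumberField K]

/-- The number of ideals of norm `k`. -/
noncomputable def idealCount (k : ℕ) : ℕ := Nat.card {I : Ideal (𝓞 K) // absNorm I = k}

instance finite_ideals_of_norm (k : ℕ) : Finite {I : Ideal (𝓞 K) // absNorm I = k} :=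
  (finite_setOfPred_absNorm_eq k).to_subtype

variable {K}

theorem card_class_eq_card_isPrincipal {C : ClassGroup (𝓞 K)} {J : (Ideal (𝓞 K))⁰}
    (hJ : ClassGroup.mk0 J = C⁻¹) (k : ℕ) :
    Nat.card {I : (Ideal (𝓞 K))⁰ // absNorm I.1 = k ∧ ClassGroup.mk0 I = C} =
      Nat.card {I : (Ideal (𝓞 K))⁰ // J.1 ∣ I.1 ∧ Submodule.IsPrincipal I.1 ∧
        absNorm I.1 = k * absNorm J.1} := by
  simp_rw [← nonZeroDivisors_dvd_iff_dvd_coe]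
  refine Nat.card_congr (((Equiv.dvd J).subtypeEquiv fun I ↦ ?_).trans
    (Equiv.subtypeSubtypeEquivSubtypeInter (fun I : (Ideal (𝓞 K))⁰ ↦ J ∣ I) _))
  rw [← ClassGroup.mk0_eq_one_iff (SetLike.coe_mem _)]
  simp_rw [Equiv.dvd_apply, Submonoid.coe_mul, ← Submonoid.mul_def, _root_.map_mul, hJ,
    inv_mul_eq_one, mul_comm k, eq_comm, and_comm, and_congr_left_iff,
    Nat.mul_right_inj (absNorm_pos_of_nonZeroDivisors J).ne', implies_true]

theorem card_idealSet_norm_eq (J : (Ideal (𝓞 K))⁰) (k : ℕ) :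
    Nat.card {a : idealSet K J // mixedEmbedding.norm (a : mixedSpace K) =
      (k * absNorm J.1 : ℕ)} = (coneElements J k).ncard := by
  let embedCone (α : coneElements J k) : {a : idealSet K J //
      mixedEmbedding.norm (a : mixedSpace K) = (k * absNorm J.1 : ℕ)} :=
    ⟨⟨mixedEmbedding K α.1, mem_idealSet.mpr ⟨α.2.1, α.1, α.2.2.1, rfl⟩⟩, by
      rw [norm_mixedEmbedding_eq_natAbs, α.2.2.2]⟩
  rw [← Nat.card_coe_set_eq]
  refine (Nat.card_congr (Equiv.ofBijective embedCone ⟨fun α β h ↦ ?_, ?_⟩)).symm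
  · have hαβ := congrArg (fun a ↦ (a.1 : mixedSpace K)) h
    exact Subtype.ext (RingOfIntegers.ext (mixedEmbedding_injective K hαβ))
  · rintro ⟨⟨x, hx⟩, hnorm⟩
    obtain ⟨hcone, α, hα, rfl⟩ := mem_idealSet.mp hx
    replace hnorm : mixedEmbedding.norm (mixedEmbedding K α) = (k * absNorm J.1 : ℕ) := hnorm
    rw [norm_mixedEmbedding_eq_natAbs] at hnorm
    exact ⟨⟨α, hcone, hα, by exact_mod_cast hnorm⟩, rfl⟩

theorem card_class_mul_torsionOrder {C : ClassGroup (𝓞 K)} {J : (Ideal (𝓞 K))⁰}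
    (hJ : ClassGroup.mk0 J = C⁻¹) (k : ℕ) :
    Nat.card {I : (Ideal (𝓞 K))⁰ // absNorm I.1 = k ∧ ClassGroup.mk0 I = C} * torsionOrder K =
      (coneElements J k).ncard := by
  rw [card_class_eq_card_isPrincipal hJ, torsionOrder, ← Nat.card_prod,
    ← Nat.card_congr (idealSetEquivNorm K J _), card_idealSet_norm_eq]

variable (K)

theorem idealCount_eq_sum_class (k : ℕ) (hk : k ≠ 0) :
    idealCount K k = ∑ C : ClassGroup (𝓞 K),
      Nat.card {I : (Ideal (𝓞 K))⁰ // absNorm I.1 = k ∧ ClassGroup.mk0 I = C} := by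
  let nonZeroEquiv : {I : Ideal (𝓞 K) // absNorm I = k} ≃
      {I : (Ideal (𝓞 K))⁰ // absNorm I.1 = k} :=
    { toFun I := ⟨⟨I.1, mem_nonZeroDivisors_iff_ne_zero.mpr fun h ↦
        hk (by rw [← I.2, h, Ideal.zero_eq_bot, absNorm_bot])⟩, I.2⟩
      invFun I := ⟨I.1.1, I.2⟩ }
  have : Finite {I : (Ideal (𝓞 K))⁰ // absNorm I.1 = k} := Finite.of_equiv _ nonZeroEquiv
  have (C : ClassGroup (𝓞 K)) : Finite
      {I : {I : (Ideal (𝓞 K))⁰ // absNorm I.1 = k} // ClassGroup.mk0 I.1 = C} :=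
    Subtype.finite
  rw [idealCount, Nat.card_congr nonZeroEquiv, ← Nat.card_congr (Equiv.sigmaFiberEquiv
    fun I : {I : (Ideal (𝓞 K))⁰ // absNorm I.1 = k} ↦ ClassGroup.mk0 I.1), Nat.card_sigma]
  refine Finset.sum_congr rfl fun C _ ↦ Nat.card_congr ?_
  exact Equiv.subtypeSubtypeEquivSubtypeInter (fun I : (Ideal (𝓞 K))⁰ ↦ absNorm I.1 = k)
    (fun I ↦ ClassGroup.mk0 I = C)

theorem exists_isBigO_sum_idealCount_sub (q : ℕ) [NeZero q] (a : ZMod q) :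
    ∃ κ : ℝ, (fun X : ℝ ↦ ∑ k ∈ Finset.Icc 1 ⌊X⌋₊ with ((k : ℕ) : ZMod q) = a,
        (idealCount K k : ℝ) - κ * X) =O[atTop]
      fun X : ℝ ↦ X ^ (1 - 1 / (Module.finrank ℚ K : ℝ)) := by
  choose J hJ using fun C : ClassGroup (𝓞 K) ↦ ClassGroup.mk0_surjective C⁻¹
  choose c hc using fun C ↦ exists_isBigO_sum_ncard_coneElements_sub (J C) q a
  have htorsion : (torsionOrder K : ℝ) ≠ 0 := by exact_mod_cast torsionOrder_ne_zero K
  refine ⟨∑ C, c C / torsionOrder K, (IsBigO.fun_sum (s := Finset.univ)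
    fun C _ ↦ (hc C).const_mul_left (torsionOrder K : ℝ)⁻¹).congr_left fun X ↦ ?_⟩
  simp_rw [mul_sub]
  rw [Finset.sum_sub_distrib, Finset.sum_mul]
  congr 1
  · simp_rw [Finset.mul_sum]
    rw [Finset.sum_comm]
    refine Finset.sum_congr rfl fun k hk ↦ ?_
    rw [Finset.mem_filter, Finset.mem_Icc] at hk
    rw [idealCount_eq_sum_class K k (by omega), Nat.cast_sum]
    refine Finset.sum_congr rfl fun C _ ↦ ?_
    rw [← card_class_mul_torsionOrder (hJ C) k, Nat.cast_mul]
    field_simp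
  · exact Finset.sum_congr rfl fun C _ ↦ by ring

end IdealCount

/-! ### The von Mangoldt function of ideals -/

section Mangoldt

variable (K : Type*) [Field K] [NumberField K]

/-- The finite set of ideals of norm `k`. -/
noncomputable def idealsOfNorm (k : ℕ) : Finset (Ideal (𝓞 K)) :=
  (finite_setOfPred_absNorm_eq (S := 𝓞 K) k).toFinset

/-- The sum of the von Mangoldt function over the ideals of norm `k`. -/
noncomputable def normLambda (k : ℕ) : ℝ := ∑ I ∈ idealsOfNorm K k, LambdaK K I

variable {K}

theorem mem_idealsOfNorm {k : ℕ} {I : Ideal (𝓞 K)} : I ∈ idealsOfNorm K k ↔ absNorm I = k := by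
  simp [idealsOfNorm]

theorem idealCount_eq_card (k : ℕ) : idealCount K k = (idealsOfNorm K k).card := by
  rw [idealCount, idealsOfNorm,
    ← Set.ncard_eq_toFinset_card _ (finite_setOfPred_absNorm_eq (S := 𝓞 K) k)]
  rfl

theorem ne_zero_of_mem_idealsOfNorm {k : ℕ} (hk : k ≠ 0) {I : Ideal (𝓞 K)}
    (hI : I ∈ idealsOfNorm K k) : I ≠ 0 := by
  rintro rfl
  rw [mem_idealsOfNorm, Ideal.zero_eq_bot, absNorm_bot] at hI
  exact hk hI.symm

theorem LambdaK_prime_pow {p : Ideal (𝓞 K)} (hp : Prime p) (m : ℕ) :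
    LambdaK K (p ^ (m + 1)) = Real.log (absNorm p) := by
  have hp' : p.IsPrime := isPrime_of_prime hp
  rw [LambdaK, if_pos ⟨p, m + 1, hp', hp.ne_zero, by omega, rfl⟩,
    Ideal.radical_pow _ (by omega), hp'.radical]

theorem isPrimeIdealPower_iff {I : Ideal (𝓞 K)} :
    IsPrimeIdealPower I ↔ ∃ p m, Prime p ∧ I = p ^ (m + 1) := by
  constructor
  · rintro ⟨p, m, hp, hp₀, hm, rfl⟩
    obtain ⟨k, rfl⟩ := Nat.exists_eq_add_of_le' hm
    exact ⟨p, k, prime_of_isPrime hp₀ hp, rfl⟩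
  · rintro ⟨p, m, hp, rfl⟩
    exact ⟨p, m + 1, isPrime_of_prime hp, hp.ne_zero, by omega, rfl⟩

theorem LambdaK_nonneg (I : Ideal (𝓞 K)) : 0 ≤ LambdaK K I := by
  rw [LambdaK]
  split_ifs
  · exact Real.log_natCast_nonneg _
  · rfl

theorem LambdaK_bot : LambdaK K ⊥ = 0 := by
  rw [LambdaK, if_neg]
  rw [isPrimeIdealPower_iff]
  rintro ⟨p, m, hp, hbot⟩
  exact pow_ne_zero (m + 1) hp.ne_zero hbot.symm

theorem normLambda_nonneg (k : ℕ) : 0 ≤ normLambda K k :=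
  Finset.sum_nonneg fun I _ ↦ LambdaK_nonneg I

/-- The finite set of divisors of a nonzero ideal, empty for the zero ideal. -/
noncomputable def idealDivisors (I : Ideal (𝓞 K)) : Finset (Ideal (𝓞 K)) :=
  {J ∈ (absNorm I).divisors.biUnion (idealsOfNorm K) | J ∣ I}

theorem mem_idealDivisors {I J : Ideal (𝓞 K)} (hI : I ≠ 0) : J ∈ idealDivisors I ↔ J ∣ I := by
  simp only [idealDivisors, Finset.mem_filter, Finset.mem_biUnion, Nat.mem_divisors,
    mem_idealsOfNorm, exists_eq_right', and_iff_right_iff_imp]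
  exact fun h ↦ ⟨absNorm_dvd_absNorm_of_le (dvd_iff_le.mp h), absNorm_eq_zero_iff.not.mpr hI⟩

theorem filter_isPrimeIdealPower_idealDivisors_prime_mul {p I : Ideal (𝓞 K)} (hp : Prime p)
    (hI : I ≠ 0) : (idealDivisors (p * I)).filter IsPrimeIdealPower =
      insert (p ^ (multiplicity p I + 1)) ((idealDivisors I).filter IsPrimeIdealPower) := by
  have hfin : FiniteMultiplicity p I := FiniteMultiplicity.of_prime_left hp hI
  ext J
  rw [Finset.mem_insert, Finset.mem_filter, Finset.mem_filter, mem_idealDivisors hI,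
    mem_idealDivisors (mul_ne_zero hp.ne_zero hI)]
  constructor
  · rintro ⟨hdvd, hJ⟩
    obtain ⟨p', m, hp', rfl⟩ := isPrimeIdealPower_iff.mp hJ
    rcases eq_or_ne p' p with rfl | hne
    · rw [pow_succ', mul_dvd_mul_iff_left hp.ne_zero, hfin.pow_dvd_iff_le_multiplicity] at hdvd
      rcases hdvd.lt_or_eq with hlt | rfl
      · exact Or.inr ⟨hfin.pow_dvd_iff_le_multiplicity.mpr hlt, hJ⟩
      · exact Or.inl rfl
    · refine Or.inr ⟨hp'.pow_dvd_of_dvd_mul_left _ (fun h ↦ hne ?_) hdvd, hJ⟩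
      exact associated_iff_eq.mp ((hp'.dvd_prime_iff_associated hp).mp h)
  · rintro (rfl | ⟨hdvd, hJ⟩)
    · refine ⟨?_, isPrimeIdealPower_iff.mpr ⟨p, _, hp, rfl⟩⟩
      rw [pow_succ']
      exact mul_dvd_mul_left _ (pow_multiplicity_dvd p I)
    · exact ⟨hdvd.mul_left p, hJ⟩

theorem sum_LambdaK_filter_idealDivisors {I : Ideal (𝓞 K)} (hI : I ≠ 0) :
    ∑ J ∈ idealDivisors I with IsPrimeIdealPower J, LambdaK K J = Real.log (absNorm I) := by
  induction I using UniqueFactorizationMonoid.induction_on_prime with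
  | h₁ => exact absurd rfl hI
  | h₂ I hunit =>
    rw [absNorm_eq_one_iff.mpr (isUnit_iff.mp hunit), Nat.cast_one, Real.log_one,
      Finset.sum_eq_zero]
    intro J hJ
    rw [Finset.mem_filter, mem_idealDivisors hI, isPrimeIdealPower_iff] at hJ
    obtain ⟨hdvd, p, m, hp, rfl⟩ := hJ
    exact absurd (isUnit_of_dvd_unit ((dvd_pow_self p (by omega)).trans hdvd) hunit) hp.not_isUnit
  | h₃ I p hI₀ hp ih =>
    have hfin : FiniteMultiplicity p I := FiniteMultiplicity.of_prime_left hp hI₀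
    rw [filter_isPrimeIdealPower_idealDivisors_prime_mul hp hI₀, Finset.sum_insert, ih hI₀,
      LambdaK_prime_pow hp, _root_.map_mul, Nat.cast_mul, Real.log_mul]
    · exact_mod_cast absNorm_eq_zero_iff.not.mpr hp.ne_zero
    · exact_mod_cast absNorm_eq_zero_iff.not.mpr hI₀
    · rw [Finset.mem_filter, mem_idealDivisors hI₀, hfin.pow_dvd_iff_le_multiplicity]
      omega

theorem sum_LambdaK_idealDivisors {I : Ideal (𝓞 K)} (hI : I ≠ 0) :
    ∑ J ∈ idealDivisors I, LambdaK K J = Real.log (absNorm I) := by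
  rw [← sum_LambdaK_filter_idealDivisors hI]
  exact (Finset.sum_filter_of_ne fun J _ hJ ↦ of_not_not fun h ↦ hJ (if_neg h)).symm

theorem sum_divisorsAntidiagonal_idealsOfNorm {M : Type*} [AddCommMonoid M]
    (f : Ideal (𝓞 K) → M) {n : ℕ} (hn : n ≠ 0) :
    ∑ p ∈ n.divisorsAntidiagonal, ∑ x ∈ idealsOfNorm K p.1 ×ˢ idealsOfNorm K p.2, f x.1 =
      ∑ I ∈ idealsOfNorm K n, ∑ J ∈ idealDivisors I, f J := by
  have hne {k l : ℕ} {I : Ideal (𝓞 K)} (h : k * l = n) (hI : absNorm I = k) : I ≠ 0 :=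
    ne_zero_of_mem_idealsOfNorm (left_ne_zero_of_mul (h ▸ hn)) (mem_idealsOfNorm.mpr hI)
  rw [Finset.sum_sigma', Finset.sum_sigma']
  refine Finset.sum_bij (fun x _ ↦ ⟨x.2.1 * x.2.2, x.2.1⟩) ?_ ?_ ?_ fun _ _ ↦ rfl
  · rintro ⟨⟨k, l⟩, I, J⟩ hx
    simp only [Finset.mem_sigma, Finset.mem_product, Nat.mem_divisorsAntidiagonal,
      mem_idealsOfNorm] at hx ⊢
    obtain ⟨⟨hkl, -⟩, hI, hJ⟩ := hx
    have hIJ : absNorm (I * J) = n := by rw [_root_.map_mul, hI, hJ, hkl]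
    refine ⟨hIJ, (mem_idealDivisors ?_).mpr (dvd_mul_right I J)⟩
    exact ne_zero_of_mem_idealsOfNorm hn (mem_idealsOfNorm.mpr hIJ)
  · rintro ⟨⟨k, l⟩, I, J⟩ hx ⟨⟨k', l'⟩, I', J'⟩ hx' heq
    simp only [Finset.mem_sigma, Finset.mem_product, Nat.mem_divisorsAntidiagonal,
      mem_idealsOfNorm] at hx hx'
    simp only [Sigma.mk.injEq, heq_eq_eq] at heq
    obtain ⟨⟨hkl, -⟩, hI, rfl⟩ := hx
    obtain ⟨-, hI', rfl⟩ := hx'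
    obtain ⟨hmul, rfl⟩ := heq
    obtain rfl := mul_left_cancel₀ (hne hkl hI) hmul
    rw [← hI, hI']
  · rintro ⟨I, J⟩ hx
    obtain ⟨hI, hJ⟩ : I ∈ idealsOfNorm K n ∧ J ∈ idealDivisors I := Finset.mem_sigma.mp hx
    obtain ⟨L, rfl⟩ := (mem_idealDivisors (ne_zero_of_mem_idealsOfNorm hn hI)).mp hJ
    refine ⟨⟨(absNorm J, absNorm L), (J, L)⟩, ?_, rfl⟩
    simp only [Finset.mem_sigma, Finset.mem_product, Nat.mem_divisorsAntidiagonal,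
      mem_idealsOfNorm, and_true]
    exact ⟨by rw [← _root_.map_mul, mem_idealsOfNorm.mp hI], hn⟩

theorem sum_divisorsAntidiagonal_normLambda {n : ℕ} (hn : n ≠ 0) :
    ∑ p ∈ n.divisorsAntidiagonal, normLambda K p.1 * (idealCount K p.2 : ℝ) =
      idealCount K n * Real.log n := by
  have hprod (p : ℕ × ℕ) : normLambda K p.1 * (idealCount K p.2 : ℝ) =
      ∑ x ∈ idealsOfNorm K p.1 ×ˢ idealsOfNorm K p.2, LambdaK K x.1 := by
    simp [normLambda, Finset.sum_product, idealCount_eq_card, Finset.sum_mul, mul_comm]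
  simp_rw [hprod]
  rw [sum_divisorsAntidiagonal_idealsOfNorm _ hn, idealCount_eq_card, ← nsmul_eq_mul,
    ← Finset.sum_const]
  refine Finset.sum_congr rfl fun I hI ↦ ?_
  rw [sum_LambdaK_idealDivisors (ne_zero_of_mem_idealsOfNorm hn hI), mem_idealsOfNorm.mp hI]

theorem psiK_eq_sum (x : ℝ) (q : ℕ) (a : ZMod q) :
    psiK K x q a = ∑ k ∈ Finset.Icc 1 ⌊x⌋₊ with ((k : ℕ) : ZMod q) = a, normLambda K k := by
  set norms := (Finset.Icc 1 ⌊x⌋₊).filter fun k : ℕ ↦ (k : ZMod q) = a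
  have hmem {k : ℕ} : k ∈ norms ↔ k ≠ 0 ∧ (k : ℝ) ≤ x ∧ (k : ZMod q) = a := by
    rw [Finset.mem_filter, Finset.mem_Icc, Nat.one_le_iff_ne_zero, and_assoc]
    exact and_congr_right fun hk ↦ by rw [Nat.le_floor_iff' hk]
  have hdisj : (norms : Set ℕ).PairwiseDisjoint (idealsOfNorm K) := fun k _ l _ hkl ↦
    Finset.disjoint_left.mpr fun I hk hl ↦
      hkl ((mem_idealsOfNorm.mp hk).symm.trans (mem_idealsOfNorm.mp hl))
  simp_rw [normLambda]
  rw [psiK, ← Finset.sum_biUnion hdisj, tsum_eq_sum (s := norms.biUnion (idealsOfNorm K))]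
  · refine Finset.sum_congr rfl fun I hI ↦ if_pos ?_
    obtain ⟨k, hk, hI⟩ := Finset.mem_biUnion.mp hI
    rw [mem_idealsOfNorm.mp hI]
    exact (hmem.mp hk).2
  · intro I hI
    by_contra h
    rw [ite_eq_right_iff, Classical.not_imp] at h
    refine hI (Finset.mem_biUnion.mpr ⟨absNorm I, hmem.mpr ⟨?_, h.1⟩, mem_idealsOfNorm.mpr rfl⟩)
    rw [Ne, absNorm_eq_zero_iff]
    rintro rfl
    exact h.2 LambdaK_bot

theorem idealCount_one : idealCount K 1 = 1 := by
  rw [idealCount_eq_card, Finset.card_eq_one]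
  refine ⟨⊤, ?_⟩
  ext I
  rw [mem_idealsOfNorm, Finset.mem_singleton, absNorm_eq_one_iff]

theorem normLambda_one : normLambda K 1 = 0 := by
  simpa [idealCount_one] using sum_divisorsAntidiagonal_normLambda (K := K) one_ne_zero

theorem normLambda_prime {p : ℕ} (hp : p.Prime) :
    normLambda K p = idealCount K p * Real.log p := by
  have h := sum_divisorsAntidiagonal_normLambda (K := K) hp.ne_zero
  rw [Nat.sum_divisorsAntidiagonal (f := fun x y ↦ normLambda K x * (idealCount K y : ℝ)),
    hp.sum_divisors, Nat.div_self hp.pos, idealCount_one, normLambda_one, Nat.div_one] at h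
  simpa using h

end Mangoldt

/-! ### Continuation of Dirichlet series -/

section Continuation

variable {E : ℝ → ℂ} {θ : ℝ} {s : ℂ}

theorem cpow_smul_indicator_Ioi_one (E : ℝ → ℂ) (s : ℂ) :
    (fun t : ℝ ↦ (t : ℂ) ^ (-s - 1) • (Ioi 1).indicator E t) =
      (Ioi (1 : ℝ)).indicator fun t : ℝ ↦ E t * (t : ℂ) ^ (-(s + 1)) := by
  ext t
  by_cases ht : t ∈ Ioi (1 : ℝ)
  · rw [indicator_of_mem ht, indicator_of_mem ht, smul_eq_mul, mul_comm, neg_add']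
  · rw [indicator_of_notMem ht, indicator_of_notMem ht, smul_zero]

theorem mellin_indicator_Ioi_one (E : ℝ → ℂ) (s : ℂ) :
    mellin ((Ioi 1).indicator E) (-s) = ∫ t in Ioi (1 : ℝ), E t * (t : ℂ) ^ (-(s + 1)) := by
  rw [mellin, cpow_smul_indicator_Ioi_one, integral_indicator measurableSet_Ioi,
    Measure.restrict_restrict measurableSet_Ioi, Ioi_inter_Ioi, sup_of_le_left zero_le_one]

theorem locallyIntegrableOn_indicator_Ioi_one (hE : LocallyIntegrableOn E (Ici 0)) :
    LocallyIntegrableOn ((Ioi 1).indicator E) (Ioi 0) := fun x hx ↦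
  let ⟨u, hu, hint⟩ := hE.mono_set Ioi_subset_Ici_self x hx
  ⟨u, hu, hint.indicator measurableSet_Ioi⟩

theorem isBigO_indicator_Ioi_one_atTop (hO : E =O[atTop] fun X ↦ X ^ θ) :
    (Ioi 1).indicator E =O[atTop] fun X : ℝ ↦ X ^ (-(-θ)) := by
  rw [neg_neg]
  refine hO.congr' ?_ EventuallyEq.rfl
  filter_upwards [eventually_gt_atTop 1] with X hX
  exact (indicator_of_mem (mem_Ioi.mpr hX) E).symm

theorem isBigO_indicator_Ioi_one_nhdsGT (E : ℝ → ℂ) (b : ℝ) :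
    (Ioi 1).indicator E =O[𝓝[>] 0] fun X : ℝ ↦ X ^ (-b) := by
  refine (isBigO_zero _ _).congr' ?_ EventuallyEq.rfl
  filter_upwards [nhdsWithin_le_nhds (Iio_mem_nhds (zero_lt_one (α := ℝ)))] with X hX
  exact (indicator_of_notMem (fun h ↦ lt_asymm (mem_Iio.mp hX) (mem_Ioi.mp h)) E).symm

theorem integrableOn_mul_cpow (hE : LocallyIntegrableOn E (Ici 0))
    (hO : E =O[atTop] fun X ↦ X ^ θ) (hs : θ < s.re) :
    IntegrableOn (fun t : ℝ ↦ E t * (t : ℂ) ^ (-(s + 1))) (Ioi 1) := by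
  have hconv : MellinConvergent ((Ioi 1).indicator E) (-s) :=
    mellinConvergent_of_isBigO_rpow (locallyIntegrableOn_indicator_Ioi_one hE)
      (isBigO_indicator_Ioi_one_atTop hO) (by simpa using hs)
      (isBigO_indicator_Ioi_one_nhdsGT E (-s.re - 1)) (by simp)
  rwa [MellinConvergent, cpow_smul_indicator_Ioi_one, IntegrableOn,
    integrable_indicator_iff measurableSet_Ioi, IntegrableOn,
    Measure.restrict_restrict measurableSet_Ioi, Ioi_inter_Ioi, sup_of_le_left zero_le_one] at hconv

theorem differentiableAt_integral_mul_cpow (hE : LocallyIntegrableOn E (Ici 0))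
    (hO : E =O[atTop] fun X ↦ X ^ θ) (hs : θ < s.re) :
    DifferentiableAt ℂ (fun s : ℂ ↦ ∫ t in Ioi (1 : ℝ), E t * (t : ℂ) ^ (-(s + 1))) s := by
  simp_rw [← mellin_indicator_Ioi_one]
  have hmellin : DifferentiableAt ℂ (mellin ((Ioi 1).indicator E)) (-s) :=
    mellin_differentiableAt_of_isBigO_rpow (locallyIntegrableOn_indicator_Ioi_one hE)
      (isBigO_indicator_Ioi_one_atTop hO) (by simpa using hs)
      (isBigO_indicator_Ioi_one_nhdsGT E (-s.re - 1)) (by simp)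
  exact hmellin.comp (f := fun s : ℂ ↦ -s) s differentiableAt_id.neg

theorem integrableOn_mul_cpow_neg (ρ : ℂ) (hs : 1 < s.re) :
    IntegrableOn (fun t : ℝ ↦ ρ * (t : ℂ) ^ (-s)) (Ioi 1) :=
  (integrableOn_Ioi_cpow_of_lt (by simpa using hs) one_pos).const_mul ρ

theorem integral_mul_cpow_neg (ρ : ℂ) (hs : 1 < s.re) :
    ∫ t in Ioi (1 : ℝ), ρ * (t : ℂ) ^ (-s) = ρ / (s - 1) := by
  rw [integral_const_mul, integral_Ioi_cpow_of_lt (by simpa using hs) one_pos,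
    Complex.ofReal_one, Complex.one_cpow, show -s + 1 = -(s - 1) by ring, neg_div_neg_eq,
    mul_one_div]

theorem locallyIntegrableOn_sum_Icc_sub (f : ℕ → ℂ) (ρ : ℂ) :
    LocallyIntegrableOn (fun X : ℝ ↦ ∑ k ∈ Finset.Icc 1 ⌊X⌋₊, f k - ρ * X) (Ici 0) := by
  have hsum := locallyIntegrableOn_mul_sum_Icc (𝕜 := ℂ) (m := 1) (c := f) (le_refl (0 : ℝ))
    (g := fun _ ↦ 1) ((locallyIntegrable_const 1).locallyIntegrableOn _)
  simp only [one_mul] at hsum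
  exact hsum.sub (ContinuousOn.locallyIntegrableOn (by fun_prop) measurableSet_Ici)

theorem exists_LSeries_extension (f : ℕ → ℂ) (ρ : ℂ) {θ : ℝ} (hθ : θ < 1)
    (hO : (fun X : ℝ ↦ ∑ k ∈ Finset.Icc 1 ⌊X⌋₊, f k - ρ * X) =O[atTop] fun X : ℝ ↦ X ^ θ)
    (hnorm : (fun n : ℕ ↦ ∑ k ∈ Finset.Icc 1 n, ‖f k‖) =O[atTop] fun n ↦ (n : ℝ) ^ (1 : ℝ)) :
    ∃ F : ℂ → ℂ, DifferentiableOn ℂ F {s | θ < s.re} ∧ F 1 = ρ ∧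
      ∀ s : ℂ, 1 < s.re → F s = (s - 1) * LSeries f s := by
  set E : ℝ → ℂ := fun X ↦ ∑ k ∈ Finset.Icc 1 ⌊X⌋₊, f k - ρ * X
  have hE : LocallyIntegrableOn E (Ici 0) := locallyIntegrableOn_sum_Icc_sub f ρ
  refine ⟨fun s ↦ (s - 1) * s * (∫ t in Ioi (1 : ℝ), E t * (t : ℂ) ^ (-(s + 1))) + ρ * s,
    fun s hs ↦ ?_, by simp, fun s hs ↦ ?_⟩
  · exact (((differentiableAt_id.sub_const 1).mul differentiableAt_id).mul
      (differentiableAt_integral_mul_cpow hE hO hs) |>.add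
      (differentiableAt_id.const_mul ρ)).differentiableWithinAt
  · have hs₁ : s - 1 ≠ 0 := sub_ne_zero.mpr fun h ↦ by simp [h] at hs
    have hsplit : ∫ t in Ioi (1 : ℝ), (∑ k ∈ Finset.Icc 1 ⌊t⌋₊, f k) * (t : ℂ) ^ (-(s + 1)) =
        (∫ t in Ioi (1 : ℝ), E t * (t : ℂ) ^ (-(s + 1))) + ρ / (s - 1) := by
      rw [← integral_mul_cpow_neg ρ hs, ← integral_add
        (integrableOn_mul_cpow hE hO (hθ.trans hs)) (integrableOn_mul_cpow_neg ρ hs)]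
      refine setIntegral_congr_fun measurableSet_Ioi fun t ht ↦ ?_
      have ht₀ : (t : ℂ) ≠ 0 := by exact_mod_cast (zero_lt_one.trans (mem_Ioi.mp ht)).ne'
      simp only [E, neg_add, Complex.cpow_add _ _ ht₀, Complex.cpow_neg_one]
      field_simp
      ring
    rw [LSeries_eq_mul_integral' f zero_le_one hs hnorm, hsplit]
    field_simp

end Continuation

/-! ### Fejér means -/

section Fejer

/-- The Fejér kernel `2 (1 - cos v) / v ^ 2`, written as the Fourier transform of the triangle
function, which also covers `v = 0`. -/
noncomputable def fejer (v : ℝ) : ℝ := 2 * ∫ t in (0 : ℝ)..1, (1 - t) * Real.cos (t * v)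

theorem continuous_fejer : Continuous fejer := by
  refine continuous_const.mul ?_
  refine intervalIntegral.continuous_parametric_intervalIntegral_of_continuous' ?_ 0 1
  fun_prop

theorem fejer_eq {v : ℝ} (hv : v ≠ 0) : fejer v = 2 * (1 - Real.cos v) / v ^ 2 := by
  have hderiv (t : ℝ) : HasDerivAt
      (fun t ↦ (1 - t) * (Real.sin (t * v) / v) - Real.cos (t * v) / v ^ 2)
      ((1 - t) * Real.cos (t * v)) t := by
    have hlin : HasDerivAt (fun t : ℝ ↦ t * v) v t := by simpa using (hasDerivAt_id t).mul_const v
    refine ((((hasDerivAt_id t).const_sub 1).mul (hlin.sin.div_const v)).sub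
      (hlin.cos.div_const (v ^ 2))).congr_deriv ?_
    simp only [id_eq]
    field_simp
    ring
  rw [fejer, intervalIntegral.integral_eq_sub_of_hasDerivAt (fun t _ ↦ hderiv t)
    (by apply Continuous.intervalIntegrable; fun_prop)]
  simp only [sub_self, one_mul, zero_mul, sub_zero, Real.sin_zero, Real.cos_zero, zero_div,
    mul_zero]
  field_simp
  ring

theorem fejer_zero : fejer 0 = 1 := by
  simp only [fejer, mul_zero, Real.cos_zero, mul_one]
  rw [intervalIntegral.integral_sub (by simp) (by simp)]
  norm_num

theorem fejer_nonneg (v : ℝ) : 0 ≤ fejer v := by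
  rcases eq_or_ne v 0 with rfl | hv
  · rw [fejer_zero]
    exact zero_le_one
  · rw [fejer_eq hv]
    positivity [sub_nonneg.mpr (Real.cos_le_one v)]

theorem fejer_le (v : ℝ) : fejer v ≤ 5 * (1 + v ^ 2)⁻¹ := by
  rw [← div_eq_mul_inv, le_div_iff₀ (by positivity)]
  rcases eq_or_ne v 0 with rfl | hv
  · rw [fejer_zero]
    norm_num
  · have hdecay : fejer v * v ^ 2 ≤ 4 := by
      rw [fejer_eq hv, div_mul_cancel₀ _ (by positivity)]
      linarith [Real.neg_one_le_cos v]
    have hle_one : fejer v ≤ 1 := by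
      rw [fejer_eq hv, div_le_one (by positivity)]
      linarith [Real.one_sub_sq_div_two_le_cos (x := v)]
    linarith

theorem integrable_fejer : Integrable fejer := by
  refine (integrable_inv_one_add_sq.const_mul 5).mono' continuous_fejer.aestronglyMeasurable ?_
  refine Eventually.of_forall fun v ↦ ?_
  rw [Real.norm_of_nonneg (fejer_nonneg v)]
  exact fejer_le v

theorem integral_fejer_pos : 0 < ∫ v, fejer v :=
  integral_pos_of_integrable_nonneg_nonzero (x := 0) continuous_fejer integrable_fejer fejer_nonneg
    (by rw [fejer_zero]; exact one_ne_zero)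

end Fejer

section KernelMeans

variable {H k : ℝ → ℝ} {A B R l y η : ℝ}

theorem exists_sub_lt_setIntegral_Ioc (hk : Integrable k) (hη : 0 < η) :
    ∃ R : ℝ, 0 < R ∧ (∫ v, k v) - η < ∫ v in Ioc (-R) R, k v := by
  have hlim : Tendsto (fun R : ℝ ↦ ∫ v in (-R)..R, k v) atTop (𝓝 (∫ v, k v)) :=
    intervalIntegral_tendsto_integral hk tendsto_neg_atTop_atBot tendsto_id
  obtain ⟨R, hR, hR₀⟩ := ((hlim.eventually (lt_mem_nhds (sub_lt_self _ hη))).and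
    (eventually_gt_atTop 0)).exists
  rw [intervalIntegral.integral_of_le (by linarith)] at hR
  exact ⟨R, hR₀, hR⟩

theorem le_mul_exp_of_le (hmono : Monotone fun u ↦ H u * Real.exp u) (hH : ∀ u, 0 ≤ H u)
    {u v : ℝ} (huv : u ≤ v) (hvη : v - u ≤ η) : H u ≤ H v * Real.exp η :=
  calc H u = H u * Real.exp u * Real.exp (-u) := by rw [mul_assoc, ← Real.exp_add]; simp
    _ ≤ H v * Real.exp v * Real.exp (-u) :=
      mul_le_mul_of_nonneg_right (hmono huv) (Real.exp_pos _).le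
    _ = H v * Real.exp (v - u) := by rw [mul_assoc, ← Real.exp_add, sub_eq_add_neg]
    _ ≤ H v * Real.exp η := by gcongr; exact hH v

theorem abs_div_le_of_mem_Ioc (hl : 0 < l) (hR : R ≤ η * l) {v : ℝ} (hv : v ∈ Ioc (-R) R) :
    |v / l| ≤ η := by
  rw [abs_div, abs_of_pos hl, div_le_iff₀ hl]
  exact (abs_le.mpr ⟨hv.1.le, hv.2⟩).trans hR

section

variable (hH : ∀ u, 0 ≤ H u) (hHB : ∀ u, H u ≤ B) (hHm : Measurable H)
  (hmono : Monotone fun u ↦ H u * Real.exp u) (hk : Integrable k) (hk₀ : ∀ v, 0 ≤ k v)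

include hH hHB hHm hk

theorem integrable_comp_mul_kernel {g : ℝ → ℝ} (hg : Measurable g) :
    Integrable fun v ↦ H (g v) * k v := by
  refine hk.bdd_mul (c := B) (hHm.comp hg).aestronglyMeasurable (Eventually.of_forall fun v ↦ ?_)
  rw [Real.norm_of_nonneg (hH _)]
  exact hHB _

include hmono hk₀

theorem mul_exp_mul_setIntegral_le (hl : 0 < l) (hR : R ≤ η * l) :
    H y * Real.exp (-(2 * η)) * ∫ v in Ioc (-R) R, k v ≤ ∫ v, H (y + η + v / l) * k v := by
  have hint : Integrable fun v ↦ H (y + η + v / l) * k v :=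
    integrable_comp_mul_kernel hH hHB hHm hk (by fun_prop)
  rw [← integral_const_mul]
  refine (setIntegral_mono_on (hk.integrableOn.const_mul _) hint.integrableOn measurableSet_Ioc
    fun v hv ↦ mul_le_mul_of_nonneg_right ?_ (hk₀ v)).trans (setIntegral_le_integral hint
      (Eventually.of_forall fun v ↦ mul_nonneg (hH _) (hk₀ v)))
  have hvl := abs_le.mp (abs_div_le_of_mem_Ioc hl hR hv)
  rw [Real.exp_neg, ← div_eq_mul_inv, div_le_iff₀ (Real.exp_pos _)]
  exact le_mul_exp_of_le hmono hH (by linarith) (by linarith)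

theorem integral_le_mul_exp_mul_add (hl : 0 < l) (hR : R ≤ η * l) :
    ∫ v, H (y + -η + v / l) * k v ≤ H y * Real.exp (2 * η) * (∫ v, k v) +
      B * ((∫ v, k v) - ∫ v in Ioc (-R) R, k v) := by
  have hint : Integrable fun v ↦ H (y + -η + v / l) * k v :=
    integrable_comp_mul_kernel hH hHB hHm hk (by fun_prop)
  rw [← integral_add_compl (s := Ioc (-R) R) measurableSet_Ioc hint]
  refine add_le_add ?_ ?_
  · rw [← integral_const_mul]
    refine (setIntegral_mono_on hint.integrableOn (hk.const_mul _).integrableOn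
      measurableSet_Ioc fun v hv ↦ mul_le_mul_of_nonneg_right ?_ (hk₀ v)).trans
      (setIntegral_le_integral (hk.const_mul _) (Eventually.of_forall fun v ↦
        mul_nonneg (mul_nonneg (hH _) (Real.exp_pos _).le) (hk₀ v)))
    have hvl := abs_le.mp (abs_div_le_of_mem_Ioc hl hR hv)
    exact le_mul_exp_of_le hmono hH (by linarith) (by linarith)
  · rw [← integral_add_compl (s := Ioc (-R) R) measurableSet_Ioc hk, add_sub_cancel_left,
      ← integral_const_mul]
    exact setIntegral_mono_on hint.integrableOn (hk.const_mul B).integrableOn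
      measurableSet_Ioc.compl fun v _ ↦ mul_le_mul_of_nonneg_right (hHB _) (hk₀ v)

variable (hlim : ∀ l : ℝ, 0 < l →
  Tendsto (fun y ↦ ∫ v, H (y + v / l) * k v) atTop (𝓝 (A * ∫ v, k v)))

include hlim

theorem eventually_mem_Icc_of_kernel_means (hη : 0 < η) (hηc : η < ∫ v, k v) :
    ∀ᶠ y in atTop, H y ∈ Icc
      (Real.exp (-(2 * η)) * (A * (∫ v, k v) - η - B * η) / ∫ v, k v)
      (Real.exp (2 * η) * (A * (∫ v, k v) + η) / ((∫ v, k v) - η)) := by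
  set c := ∫ v, k v
  obtain ⟨R, hR, hRc⟩ := exists_sub_lt_setIntegral_Ioc hk hη
  have hl : 0 < R / η := div_pos hR hη
  have hRl : R ≤ η * (R / η) := (mul_div_cancel₀ R hη.ne').ge
  have hright := (hlim _ hl).comp (tendsto_atTop_add_const_right atTop η tendsto_id)
  have hleft := (hlim _ hl).comp (tendsto_atTop_add_const_right atTop (-η) tendsto_id)
  filter_upwards [hright.eventually (gt_mem_nhds (lt_add_of_pos_right (A * c) hη)),
    hleft.eventually (lt_mem_nhds (sub_lt_self (A * c) hη))] with y hy_right hy_left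
  have hlower := hy_left.le.trans (integral_le_mul_exp_mul_add hH hHB hHm hmono hk hk₀ hl hRl)
  have hupper := (mul_exp_mul_setIntegral_le hH hHB hHm hmono hk hk₀ hl hRl).trans hy_right.le
  simp only [id_eq] at hlower hupper
  constructor
  · rw [div_le_iff₀ (hη.trans hηc), Real.exp_neg, inv_mul_le_iff₀ (Real.exp_pos _)]
    have hB : 0 ≤ B := (hH 0).trans (hHB 0)
    nlinarith
  · rw [le_div_iff₀ (sub_pos.mpr hηc)]
    calc H y * (c - η) = Real.exp (2 * η) * (H y * Real.exp (-(2 * η)) * (c - η)) := by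
          rw [Real.exp_neg]
          field_simp
      _ ≤ Real.exp (2 * η) * (H y * Real.exp (-(2 * η)) * ∫ v in Ioc (-R) R, k v) := by
          have := hH y
          gcongr
      _ ≤ _ := by gcongr

theorem tendsto_of_kernel_means (hk_pos : 0 < ∫ v, k v) : Tendsto H atTop (𝓝 A) := by
  set c := ∫ v, k v
  have hupper : Tendsto (fun η : ℝ ↦ Real.exp (2 * η) * (A * c + η) / (c - η))
      (𝓝[>] 0) (𝓝 A) := by
    have hcont : ContinuousAt (fun η : ℝ ↦ Real.exp (2 * η) * (A * c + η) / (c - η)) 0 :=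
      ContinuousAt.div (by fun_prop) (by fun_prop) (by simpa using hk_pos.ne')
    simpa [hk_pos.ne'] using hcont.tendsto.mono_left (nhdsWithin_le_nhds (s := Ioi 0))
  have hlower : Tendsto (fun η : ℝ ↦ Real.exp (-(2 * η)) * (A * c - η - B * η) / c)
      (𝓝[>] 0) (𝓝 A) := by
    have hcont : Continuous (fun η : ℝ ↦ Real.exp (-(2 * η)) * (A * c - η - B * η) / c) := by
      fun_prop
    simpa [hk_pos.ne'] using (hcont.tendsto 0).mono_left (nhdsWithin_le_nhds (s := Ioi 0))
  have hsmall : ∀ᶠ η : ℝ in 𝓝[>] 0, 0 < η ∧ η < c :=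
    eventually_mem_nhdsWithin.and (nhdsWithin_le_nhds (Iio_mem_nhds hk_pos))
  refine tendsto_order.mpr ⟨fun b hb ↦ ?_, fun b hb ↦ ?_⟩
  · obtain ⟨η, ⟨hη, hηc⟩, hbη⟩ := (hsmall.and (hlower.eventually (lt_mem_nhds hb))).exists
    filter_upwards [eventually_mem_Icc_of_kernel_means hH hHB hHm hmono hk hk₀ hlim hη hηc]
      with y hy using hbη.trans_le hy.1
  · obtain ⟨η, ⟨hη, hηc⟩, hbη⟩ := (hsmall.and (hupper.eventually (gt_mem_nhds hb))).exists
    filter_upwards [eventually_mem_Icc_of_kernel_means hH hHB hHm hmono hk hk₀ hlim hη hηc]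
      with y hy using hy.2.trans_lt hbη

end

end KernelMeans

section FejerFourier

variable {h : ℝ → ℝ} {B l ε : ℝ} {g : ℂ → ℂ}

theorem fejer_eq_re (v : ℝ) :
    fejer v = (2 * ∫ t in Ioc (0 : ℝ) 1, (1 - t : ℂ) * Complex.exp (-(Complex.I * t * v))).re := by
  have hint : IntegrableOn
      (fun t : ℝ ↦ (1 - t : ℂ) * Complex.exp (-(Complex.I * t * v))) (Ioc 0 1) :=
    Continuous.integrableOn_Ioc (by fun_prop)
  rw [← Complex.ofReal_ofNat, Complex.re_ofReal_mul, ← Complex.reCLM_apply,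
    ← ContinuousLinearMap.integral_comp_comm _ hint, fejer,
    intervalIntegral.integral_of_le zero_le_one]
  congr 1
  refine setIntegral_congr_fun measurableSet_Ioc fun t _ ↦ ?_
  have hexp : -(Complex.I * t * v) = ((-(t * v) : ℝ) : ℂ) * Complex.I := by push_cast; ring
  rw [Complex.reCLM_apply, ← Complex.ofReal_one, ← Complex.ofReal_sub, Complex.re_ofReal_mul, hexp,
    Complex.exp_ofReal_mul_I_re, Real.cos_neg]

theorem norm_one_sub_mul_exp_le_one {t : ℝ} (ht : t ∈ Ioc (0 : ℝ) 1) (l y : ℝ) :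
    ‖(1 - t : ℂ) * Complex.exp (Complex.I * (l * t * y))‖ ≤ 1 := by
  have hre : (Complex.I * (l * t * y) : ℂ).re = 0 := by simp
  rw [norm_mul, Complex.norm_exp, hre, Real.exp_zero, mul_one, ← Complex.ofReal_one,
    ← Complex.ofReal_sub, Complex.norm_real, Real.norm_of_nonneg (sub_nonneg.mpr ht.2)]
  linarith [ht.1]

theorem integrable_laplace_mul_fourier (hm : Measurable h) (hB : ∀ u, |h u| ≤ B) (hε : 0 < ε)
    (l y : ℝ) :
    Integrable (fun p : ℝ × ℝ ↦ (h p.1 : ℂ) *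
        Complex.exp (-((ε + Complex.I * (l * p.2)) * p.1)) *
        ((1 - p.2 : ℂ) * Complex.exp (Complex.I * (l * p.2 * y))))
      ((volume.restrict (Ioi (0 : ℝ))).prod (volume.restrict (Ioc (0 : ℝ) 1))) := by
  have hdom : Integrable (fun p : ℝ × ℝ ↦ (B * Real.exp (-ε * p.1)) * (1 : ℝ))
      ((volume.restrict (Ioi (0 : ℝ))).prod (volume.restrict (Ioc (0 : ℝ) 1))) :=
    Integrable.mul_prod (f := fun u ↦ B * Real.exp (-ε * u)) (g := fun _ ↦ (1 : ℝ))
      ((integrableOn_exp_mul_Ioi (by linarith) 0).const_mul B) (integrableOn_const (by simp))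
  refine hdom.mono' (Measurable.aestronglyMeasurable (by fun_prop)) ?_
  rw [Measure.prod_restrict]
  filter_upwards [ae_restrict_mem (measurableSet_Ioi.prod measurableSet_Ioc)] with p hp
  have hre : (-((ε + Complex.I * (l * p.2)) * p.1) : ℂ).re = -ε * p.1 := by simp
  have hB₀ : 0 ≤ B := (abs_nonneg _).trans (hB 0)
  rw [norm_mul, norm_mul, Complex.norm_exp, hre, Complex.norm_real, Real.norm_eq_abs]
  gcongr
  exacts [hB _, norm_one_sub_mul_exp_le_one hp.2 l y]

theorem setIntegral_laplace_mul_fourier (u l y : ℝ) :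
    ∫ t in Ioc (0 : ℝ) 1, (h u : ℂ) * Complex.exp (-((ε + Complex.I * (l * t)) * u)) *
        ((1 - t : ℂ) * Complex.exp (Complex.I * (l * t * y))) =
      (h u * Real.exp (-(ε * u)) : ℝ) * ∫ t in Ioc (0 : ℝ) 1,
        (1 - t : ℂ) * Complex.exp (-(Complex.I * t * (l * (u - y) : ℝ))) := by
  rw [← integral_const_mul]
  refine integral_congr_ae (Eventually.of_forall fun t ↦ ?_)
  have hexp : Complex.exp (-((ε + Complex.I * (l * t)) * u)) *
      Complex.exp (Complex.I * (l * t * y)) =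
      Complex.exp (-(ε * u)) * Complex.exp (-(Complex.I * t * (l * (u - y)))) := by
    rw [← Complex.exp_add, ← Complex.exp_add]
    ring_nf
  push_cast
  linear_combination (h u * (1 - t) : ℂ) * hexp

theorem integrable_fejer_comp_mul_sub (hl : 0 < l) (y : ℝ) :
    Integrable fun u ↦ fejer (l * (u - y)) :=
  (integrable_fejer.comp_mul_left' hl.ne').comp_sub_right y

theorem tendsto_integral_damped_fejer (hm : Measurable h) (hB : ∀ u, |h u| ≤ B) (hl : 0 < l)
    (y : ℝ) :
    Tendsto (fun ε : ℝ ↦ ∫ u in Ioi (0 : ℝ), h u * Real.exp (-(ε * u)) * fejer (l * (u - y)))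
      (𝓝[>] 0) (𝓝 (∫ u in Ioi (0 : ℝ), h u * fejer (l * (u - y)))) := by
  have hcont := continuous_fejer
  refine tendsto_integral_filter_of_dominated_convergence (fun u ↦ B * fejer (l * (u - y)))
    (Eventually.of_forall fun ε ↦ Measurable.aestronglyMeasurable (by fun_prop)) ?_
    ((integrable_fejer_comp_mul_sub hl y).integrableOn.const_mul B)
    (Eventually.of_forall fun u ↦ ?_)
  · filter_upwards [self_mem_nhdsWithin] with ε hε
    filter_upwards [ae_restrict_mem measurableSet_Ioi] with u hu
    have hexp : Real.exp (-(ε * u)) ≤ 1 :=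
      Real.exp_le_one_iff.mpr (neg_nonpos.mpr (mul_nonneg (le_of_lt hε) (le_of_lt hu)))
    rw [norm_mul, norm_mul, Real.norm_of_nonneg (fejer_nonneg _), Real.norm_eq_abs,
      Real.norm_of_nonneg (Real.exp_pos _).le]
    refine mul_le_mul_of_nonneg_right ?_ (fejer_nonneg _)
    exact (mul_le_of_le_one_right (abs_nonneg _) hexp).trans (hB u)
  · have hcts : Continuous fun ε : ℝ ↦ h u * Real.exp (-(ε * u)) * fejer (l * (u - y)) := by
      fun_prop
    simpa using (hcts.tendsto 0).mono_left (nhdsWithin_le_nhds (s := Ioi 0))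

theorem tendsto_integral_fourier_nhdsGT_zero (hgc : ContinuousOn g {s | 0 ≤ s.re}) (l y : ℝ) :
    Tendsto (fun ε : ℝ ↦ ∫ t in Ioc (0 : ℝ) 1, (1 - t : ℂ) *
        Complex.exp (Complex.I * (l * t * y)) * g (ε + Complex.I * (l * t))) (𝓝[>] 0)
      (𝓝 (∫ t in Ioc (0 : ℝ) 1, (1 - t : ℂ) * Complex.exp (Complex.I * (l * t * y)) *
        g (Complex.I * (l * t)))) := by
  have hcompact : IsCompact ((fun p : ℝ × ℝ ↦ (p.1 + Complex.I * (l * p.2) : ℂ)) ''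
      (Icc (0 : ℝ) 1 ×ˢ Icc (0 : ℝ) 1)) :=
    (isCompact_Icc.prod isCompact_Icc).image (by fun_prop)
  obtain ⟨C, hC⟩ := hcompact.exists_bound_of_continuousOn (f := g) <| hgc.mono <| by
    rintro _ ⟨p, hp, rfl⟩
    simpa using hp.1.1
  refine tendsto_integral_filter_of_dominated_convergence (fun _ ↦ C) ?_ ?_
    (integrableOn_const (by simp)) (Eventually.of_forall fun t ↦ Tendsto.const_mul _ ?_)
  · filter_upwards [self_mem_nhdsWithin] with ε hε
    have hcont : Continuous fun t : ℝ ↦ g (ε + Complex.I * (l * t)) :=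
      hgc.comp_continuous (by fun_prop) fun t ↦ by simpa using le_of_lt hε
    exact ((by fun_prop : Continuous fun t : ℝ ↦ (1 - t : ℂ) *
      Complex.exp (Complex.I * (l * t * y))).mul hcont).aestronglyMeasurable
  · filter_upwards [Ioo_mem_nhdsGT one_pos] with ε hε
    filter_upwards [ae_restrict_mem measurableSet_Ioc] with t ht
    rw [norm_mul, ← one_mul C]
    gcongr
    exacts [norm_one_sub_mul_exp_le_one ht l y,
      hC _ ⟨(ε, t), ⟨Ioo_subset_Icc_self hε, Ioc_subset_Icc_self ht⟩, rfl⟩]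
  · refine (hgc (Complex.I * (l * t)) (by simp)).tendsto.comp
      (tendsto_nhdsWithin_iff.mpr ⟨?_, ?_⟩)
    · have hcts : Continuous fun ε : ℝ ↦ (ε + Complex.I * (l * t) : ℂ) := by fun_prop
      simpa using (hcts.tendsto 0).mono_left (nhdsWithin_le_nhds (s := Ioi 0))
    · filter_upwards [self_mem_nhdsWithin] with ε hε
      simpa using le_of_lt hε

theorem tendsto_integral_fourier_atTop (φ : ℝ → ℂ) (hl : 0 < l) :
    Tendsto (fun y : ℝ ↦ ∫ t in Ioc (0 : ℝ) 1, Complex.exp (Complex.I * (l * t * y)) * φ t)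
      atTop (𝓝 0) := by
  have hscale : Tendsto (fun y : ℝ ↦ -(l / (2 * Real.pi)) * y) atTop (cocompact ℝ) :=
    (tendsto_id.const_mul_atTop_of_neg (neg_lt_zero.mpr (div_pos hl Real.two_pi_pos))).mono_right
      atBot_le_cocompact
  refine ((Real.tendsto_integral_exp_smul_cocompact ((Ioc (0 : ℝ) 1).indicator φ)).comp
    hscale).congr fun y ↦ ?_
  simp only [Function.comp_apply]
  rw [← integral_indicator measurableSet_Ioc]
  congr 1 with t
  by_cases ht : t ∈ Ioc (0 : ℝ) 1
  · have hphase : (2 * Real.pi * -(t * (-(l / (2 * Real.pi)) * y)) : ℝ) = l * t * y := by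
      field_simp
    rw [indicator_of_mem ht, indicator_of_mem ht, Circle.smul_def, Real.fourierChar_apply, hphase,
      smul_eq_mul, mul_comm _ Complex.I]
    push_cast
    rfl
  · rw [indicator_of_notMem ht, indicator_of_notMem ht, smul_zero]

section Laplace

variable (hm : Measurable h) (hB : ∀ u, |h u| ≤ B)
  (hg : ∀ s : ℂ, 0 < s.re → ∫ u in Ioi (0 : ℝ), (h u : ℂ) * Complex.exp (-(s * u)) = g s)

include hm hB hg

theorem integral_damped_fejer (hε : 0 < ε) (l y : ℝ) :
    ∫ u in Ioi (0 : ℝ), h u * Real.exp (-(ε * u)) * fejer (l * (u - y)) =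
      (2 * ∫ t in Ioc (0 : ℝ) 1, (1 - t : ℂ) * Complex.exp (Complex.I * (l * t * y)) *
        g (ε + Complex.I * (l * t))).re := by
  have hint := integrable_laplace_mul_fourier hm hB hε l y
  have hlaplace (t : ℝ) : ∫ u in Ioi (0 : ℝ), (h u : ℂ) *
      Complex.exp (-((ε + Complex.I * (l * t)) * u)) *
        ((1 - t : ℂ) * Complex.exp (Complex.I * (l * t * y))) =
      (1 - t : ℂ) * Complex.exp (Complex.I * (l * t * y)) * g (ε + Complex.I * (l * t)) := by
    rw [integral_mul_const, hg _ (by simpa using hε), mul_comm]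
  rw [← integral_congr_ae (Eventually.of_forall hlaplace), ← integral_integral_swap hint,
    ← Complex.ofReal_ofNat, Complex.re_ofReal_mul, ← Complex.reCLM_apply,
    ← ContinuousLinearMap.integral_comp_comm _ hint.integral_prod_left, ← integral_const_mul]
  refine integral_congr_ae (Eventually.of_forall fun u ↦ ?_)
  simp only [setIntegral_laplace_mul_fourier, Complex.reCLM_apply, Complex.re_ofReal_mul]
  rw [fejer_eq_re, ← Complex.ofReal_ofNat, Complex.re_ofReal_mul]
  ring

variable (hgc : ContinuousOn g {s | 0 ≤ s.re}) (hl : 0 < l)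

include hgc hl

theorem integral_fejer_eq_fourier (y : ℝ) :
    ∫ u in Ioi (0 : ℝ), h u * fejer (l * (u - y)) =
      (2 * ∫ t in Ioc (0 : ℝ) 1, (1 - t : ℂ) * Complex.exp (Complex.I * (l * t * y)) *
        g (Complex.I * (l * t))).re := by
  refine tendsto_nhds_unique (tendsto_integral_damped_fejer hm hB hl y) (Tendsto.congr' ?_
    ((Complex.continuous_re.tendsto _).comp
      ((tendsto_integral_fourier_nhdsGT_zero hgc l y).const_mul 2)))
  filter_upwards [self_mem_nhdsWithin] with ε hε
  exact (integral_damped_fejer hm hB hg hε l y).symm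

theorem tendsto_integral_fejer :
    Tendsto (fun y ↦ ∫ u in Ioi (0 : ℝ), h u * fejer (l * (u - y))) atTop (𝓝 0) := by
  have hlim := (Complex.continuous_re.tendsto _).comp ((tendsto_integral_fourier_atTop
    (fun t : ℝ ↦ (1 - t : ℂ) * g (Complex.I * (l * t))) hl).const_mul 2)
  simp only [mul_zero, Complex.zero_re] at hlim
  refine hlim.congr fun y ↦ ?_
  rw [integral_fejer_eq_fourier hm hB hg hgc hl y, Function.comp_apply]
  congr 3 with t
  ring

end Laplace

end FejerFourier

/-! ### The Wiener–Ikehara theorem -/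

section Laplace

theorem tendsto_integral_fejer_one {l : ℝ} (hl : 0 < l) :
    Tendsto (fun y : ℝ ↦ l * ∫ u in Ioi (0 : ℝ), fejer (l * (u - y))) atTop
      (𝓝 (∫ v, fejer v)) := by
  have hcover : AECover volume atTop fun y : ℝ ↦ Ioi (-(l * y)) :=
    aecover_Ioi (tendsto_neg_atTop_atBot.comp (tendsto_id.const_mul_atTop hl))
  refine (hcover.integral_tendsto_of_countably_generated integrable_fejer).congr fun y ↦ ?_
  have hind : ((Ioi (0 : ℝ)).indicator fun u ↦ fejer (l * (u - y))) =
      fun u ↦ (Ioi (-(l * y))).indicator fejer (l * (u - y)) := by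
    ext u
    have hmem : u ∈ Ioi (0 : ℝ) ↔ l * (u - y) ∈ Ioi (-(l * y)) := by
      rw [mem_Ioi, mem_Ioi, mul_sub, neg_lt_sub_iff_lt_add, lt_add_iff_pos_right,
        mul_pos_iff_of_pos_left hl]
    simp only [indicator_apply, hmem]
  rw [← integral_indicator measurableSet_Ioi, ← integral_indicator measurableSet_Ioi, hind,
    integral_sub_right_eq_self fun u ↦ (Ioi (-(l * y))).indicator fejer (l * u),
    Measure.integral_comp_mul_left, abs_of_pos (inv_pos.mpr hl), smul_eq_mul,
    mul_inv_cancel_left₀ hl.ne']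

variable {H : ℝ → ℝ} {A B l : ℝ} {g : ℂ → ℂ}

theorem integral_comp_add_div_mul_fejer (hH_neg : ∀ u < 0, H u = 0) (hl : 0 < l) (y : ℝ) :
    ∫ v, H (y + v / l) * fejer v = l * ∫ u in Ioi (0 : ℝ), H u * fejer (l * (u - y)) := by
  have hsupp : ∫ u in Ioi (0 : ℝ), H u * fejer (l * (u - y)) = ∫ u, H u * fejer (l * (u - y)) := by
    rw [← integral_Ici_eq_integral_Ioi, setIntegral_eq_integral_of_forall_compl_eq_zero]
    intro u hu
    rw [hH_neg u (by simpa using hu), zero_mul]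
  have hscale := Measure.integral_comp_div (fun w ↦ H (y + w) * fejer (l * w)) l
  simp only [mul_div_cancel₀ _ hl.ne'] at hscale
  rw [hscale, abs_of_pos hl, smul_eq_mul, hsupp,
    ← integral_add_left_eq_self (fun u ↦ H u * fejer (l * (u - y))) y]
  simp only [add_sub_cancel_left]

theorem wienerIkehara_laplace (hH : ∀ u, 0 ≤ H u) (hHB : ∀ u, H u ≤ B)
    (hHm : Measurable H) (hH_neg : ∀ u < 0, H u = 0)
    (hmono : Monotone fun u ↦ H u * Real.exp u) (hgc : ContinuousOn g {s | 0 ≤ s.re})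
    (hg : ∀ s : ℂ, 0 < s.re →
      ∫ u in Ioi (0 : ℝ), ((H u - A : ℝ) : ℂ) * Complex.exp (-(s * u)) = g s) :
    Tendsto H atTop (𝓝 A) := by
  have hbound (u : ℝ) : |H u - A| ≤ B + |A| :=
    (abs_sub _ _).trans (by rw [abs_of_nonneg (hH u)]; gcongr; exact hHB u)
  refine tendsto_of_kernel_means hH hHB hHm hmono integrable_fejer fejer_nonneg (fun l hl ↦ ?_)
    integral_fejer_pos
  have hlim := ((tendsto_integral_fejer (hHm.sub_const A) hbound hg hgc hl).const_mul l).add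
    ((tendsto_integral_fejer_one hl).const_mul A)
  rw [mul_zero, zero_add] at hlim
  refine hlim.congr fun y ↦ ?_
  have hfejer := (integrable_fejer_comp_mul_sub hl y).integrableOn (s := Ioi (0 : ℝ))
  have hsplit : ∫ u in Ioi (0 : ℝ), H u * fejer (l * (u - y)) =
      (∫ u in Ioi (0 : ℝ), (H u - A) * fejer (l * (u - y))) +
        A * ∫ u in Ioi (0 : ℝ), fejer (l * (u - y)) := by
    rw [← integral_const_mul, ← integral_add (Integrable.bdd_mul (c := B + |A|) hfejer
      (hHm.sub_const A).aestronglyMeasurable (Eventually.of_forall hbound)) (hfejer.const_mul A)]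
    simp only [← add_mul, sub_add_cancel]
  rw [integral_comp_add_div_mul_fejer hH_neg hl, hsplit]
  ring

end Laplace

section Dirichlet

theorem integral_Ioi_one_eq_integral_comp_exp (f : ℝ → ℂ) :
    ∫ t in Ioi (1 : ℝ), f t = ∫ u in Ioi (0 : ℝ), (Real.exp u : ℂ) * f (Real.exp u) := by
  rw [← Real.exp_zero, ← Real.image_exp_Ioi,
    integral_image_eq_integral_abs_deriv_smul measurableSet_Ioi
    (fun x _ ↦ (Real.hasDerivAt_exp x).hasDerivWithinAt) Real.exp_injective.injOn]
  simp [Real.abs_exp]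

/-- The partial sums of `a` up to `exp u`, divided by `exp u`. This logarithmic change of variable
turns the Dirichlet series of `a` into a Laplace transform. -/
noncomputable def expMean (a : ℕ → ℝ) (u : ℝ) : ℝ :=
  (∑ k ∈ Finset.Icc 1 ⌊Real.exp u⌋₊, a k) * Real.exp (-u)

variable {a : ℕ → ℝ} {A B : ℝ}

theorem expMean_mul_exp (a : ℕ → ℝ) (u : ℝ) :
    expMean a u * Real.exp u = ∑ k ∈ Finset.Icc 1 ⌊Real.exp u⌋₊, a k := by
  rw [expMean, mul_assoc, ← Real.exp_add, neg_add_cancel, Real.exp_zero, mul_one]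

theorem expMean_of_neg {u : ℝ} (hu : u < 0) : expMean a u = 0 := by
  simp [expMean, Nat.floor_eq_zero.mpr (Real.exp_lt_one_iff.mpr hu)]

theorem integrableOn_exp_neg_mul {s : ℂ} (hs : 0 < s.re) :
    IntegrableOn (fun u : ℝ ↦ Complex.exp (-(s * u))) (Ioi 0) := by
  simpa only [neg_mul] using integrableOn_exp_mul_complex_Ioi (a := -s) (by simpa using hs) 0

theorem integral_exp_neg_mul {s : ℂ} (hs : 0 < s.re) :
    ∫ u in Ioi (0 : ℝ), Complex.exp (-(s * u)) = 1 / s := by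
  simpa only [neg_mul, Complex.ofReal_zero, mul_zero, neg_zero, Complex.exp_zero, neg_div_neg_eq]
    using integral_exp_mul_complex_Ioi (a := -s) (by simpa using hs) 0

theorem integral_sum_mul_cpow_eq_integral_expMean (a : ℕ → ℝ) (s : ℂ) :
    ∫ t in Ioi (1 : ℝ), (∑ k ∈ Finset.Icc 1 ⌊t⌋₊, (a k : ℂ)) * (t : ℂ) ^ (-(1 + s + 1)) =
      ∫ u in Ioi (0 : ℝ), (expMean a u : ℂ) * Complex.exp (-(s * u)) := by
  rw [integral_Ioi_one_eq_integral_comp_exp]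
  refine integral_congr_ae (Eventually.of_forall fun u ↦ ?_)
  have hcpow : ((Real.exp u : ℝ) : ℂ) ^ (-(1 + s + 1)) = Complex.exp (u * (-(1 + s + 1))) := by
    rw [Complex.cpow_def_of_ne_zero (by exact_mod_cast (Real.exp_pos u).ne'),
      ← Complex.ofReal_log (Real.exp_pos u).le, Real.log_exp]
  simp only [hcpow, expMean]
  push_cast
  rw [mul_left_comm, ← Complex.exp_add, mul_assoc, ← Complex.exp_add]
  ring_nf

variable (ha : ∀ n, 0 ≤ a n)

include ha

theorem expMean_nonneg (u : ℝ) : 0 ≤ expMean a u :=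
  mul_nonneg (Finset.sum_nonneg fun k _ ↦ ha k) (Real.exp_pos _).le

theorem monotone_sum_Icc_floor : Monotone fun x : ℝ ↦ ∑ k ∈ Finset.Icc 1 ⌊x⌋₊, a k :=
  fun _ _ hxy ↦ Finset.sum_le_sum_of_subset_of_nonneg
    (Finset.Icc_subset_Icc_right (Nat.floor_mono hxy)) fun k _ _ ↦ ha k

theorem measurable_expMean : Measurable (expMean a) :=
  ((monotone_sum_Icc_floor ha).measurable.comp Real.measurable_exp).mul (by fun_prop)

variable (hB : ∀ x : ℝ, 0 ≤ x → ∑ k ∈ Finset.Icc 1 ⌊x⌋₊, a k ≤ B * x)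

omit ha in
include hB in
theorem expMean_le (u : ℝ) : expMean a u ≤ B := by
  rw [← mul_le_mul_iff_left₀ (Real.exp_pos u), expMean_mul_exp]
  exact hB _ (Real.exp_pos u).le

include hB

theorem LSeries_one_add_eq_mul_integral_expMean {s : ℂ} (hs : 0 < s.re) :
    LSeries (fun n ↦ (a n : ℂ)) (1 + s) =
      (1 + s) * ∫ u in Ioi (0 : ℝ), (expMean a u : ℂ) * Complex.exp (-(s * u)) := by
  have hbigO : (fun n : ℕ ↦ ∑ k ∈ Finset.Icc 1 n, a k) =O[atTop] fun n ↦ (n : ℝ) ^ (1 : ℝ) := by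
    refine IsBigO.of_bound B (Eventually.of_forall fun n ↦ ?_)
    rw [Real.norm_of_nonneg (Finset.sum_nonneg fun k _ ↦ ha k), Real.rpow_one,
      Real.norm_of_nonneg n.cast_nonneg]
    simpa only [Nat.floor_natCast] using hB n n.cast_nonneg
  rw [LSeries_eq_mul_integral_of_nonneg a zero_le_one (by simpa using hs) hbigO ha,
    integral_sum_mul_cpow_eq_integral_expMean]

theorem integral_expMean_sub_mul_exp {s : ℂ} (hs : 0 < s.re) :
    ∫ u in Ioi (0 : ℝ), ((expMean a u - A : ℝ) : ℂ) * Complex.exp (-(s * u)) =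
      (LSeries (fun n ↦ (a n : ℂ)) (1 + s) - A / s - A) / (1 + s) := by
  have hs₀ : s ≠ 0 := Complex.ne_zero_of_re_pos hs
  have hs₁ : 1 + s ≠ 0 := Complex.ne_zero_of_re_pos (by simpa using by linarith)
  have hexp := integrableOn_exp_neg_mul hs
  have hint : IntegrableOn (fun u : ℝ ↦ (expMean a u : ℂ) * Complex.exp (-(s * u))) (Ioi 0) := by
    refine Integrable.bdd_mul (c := B) hexp
      (Complex.measurable_ofReal.comp (measurable_expMean ha)).aestronglyMeasurable
      (Eventually.of_forall fun u ↦ ?_)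
    rw [Complex.norm_real, Real.norm_of_nonneg (expMean_nonneg ha u)]
    exact expMean_le hB u
  simp only [Complex.ofReal_sub, sub_mul]
  rw [integral_sub hint (hexp.const_mul _), integral_const_mul, integral_exp_neg_mul hs,
    LSeries_one_add_eq_mul_integral_expMean ha hB hs]
  field_simp
  ring

theorem wienerIkehara {G : ℂ → ℂ} (hGc : ContinuousOn G {s | 1 ≤ s.re})
    (hG : ∀ s : ℂ, 1 < s.re → G s = LSeries (fun n ↦ (a n : ℂ)) s - A / (s - 1)) :
    Tendsto (fun x : ℝ ↦ (∑ k ∈ Finset.Icc 1 ⌊x⌋₊, a k) / x) atTop (𝓝 A) := by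
  have hcont : ContinuousOn (fun s ↦ (G (1 + s) - A) / (1 + s)) {s | 0 ≤ s.re} := by
    refine ((hGc.comp (by fun_prop) fun s hs ↦ by simpa using hs).sub continuousOn_const).div
      (by fun_prop) fun s hs ↦ Complex.ne_zero_of_re_pos ?_
    rw [Complex.add_re, Complex.one_re]
    exact add_pos_of_pos_of_nonneg one_pos hs
  have hmono : Monotone fun u ↦ expMean a u * Real.exp u := by
    simp only [expMean_mul_exp]
    exact (monotone_sum_Icc_floor ha).comp Real.exp_monotone
  have hlim := wienerIkehara_laplace (expMean_nonneg ha) (expMean_le hB)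
    (measurable_expMean ha) (fun u hu ↦ expMean_of_neg hu) hmono hcont fun s hs ↦ by
      rw [integral_expMean_sub_mul_exp ha hB hs, hG (1 + s) (by simpa using hs),
        add_sub_cancel_left]
  refine (hlim.comp Real.tendsto_log_atTop).congr' ?_
  filter_upwards [eventually_gt_atTop 0] with x hx
  rw [Function.comp_apply, expMean, Real.exp_log hx, Real.exp_neg, Real.exp_log hx,
    div_eq_mul_inv]

end Dirichlet

section MangoldtBound

variable {K : Type*} [Field K] [NumberField K] {I : Ideal (𝓞 K)} {k : ℕ}

theorem radical_prime_pow_succ {P : Ideal (𝓞 K)} (hP : Prime P) (m : ℕ) :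
    (P ^ (m + 1)).radical = P := by
  rw [Ideal.radical_pow _ m.succ_ne_zero, (isPrime_of_prime hP).radical]

theorem prime_radical_of_isPrimeIdealPower (hI : IsPrimeIdealPower I) : Prime I.radical := by
  obtain ⟨P, m, hP, rfl⟩ := isPrimeIdealPower_iff.mp hI
  rwa [radical_prime_pow_succ hP]

theorem exists_eq_radical_pow_succ (hI : IsPrimeIdealPower I) : ∃ m, I = I.radical ^ (m + 1) := by
  obtain ⟨P, m, hP, rfl⟩ := isPrimeIdealPower_iff.mp hI
  exact ⟨m, by rw [radical_prime_pow_succ hP]⟩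

variable (K) in
/-- The finite set of prime ideal powers of norm `k`. -/
noncomputable def primePowersOfNorm (k : ℕ) : Finset (Ideal (𝓞 K)) :=
  (idealsOfNorm K k).filter IsPrimeIdealPower

theorem mem_primePowersOfNorm :
    I ∈ primePowersOfNorm K k ↔ absNorm I = k ∧ IsPrimeIdealPower I := by
  rw [primePowersOfNorm, Finset.mem_filter, mem_idealsOfNorm]

theorem normLambda_eq_sum_log_absNorm_radical (k : ℕ) :
    normLambda K k = ∑ I ∈ primePowersOfNorm K k, Real.log (absNorm I.radical) := by
  rw [normLambda, primePowersOfNorm, Finset.sum_filter]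
  exact Finset.sum_congr rfl fun I _ ↦ by rw [LambdaK]

theorem exists_prime_pow_of_mem_primePowersOfNorm (hI : I ∈ primePowersOfNorm K k) :
    ∃ p n : ℕ, p.Prime ∧ n ≠ 0 ∧ k = p ^ n := by
  obtain ⟨rfl, hpow⟩ := mem_primePowersOfNorm.mp hI
  obtain ⟨P, m, hP, rfl⟩ := isPrimeIdealPower_iff.mp hpow
  have : P.IsMaximal := (isPrime_of_prime hP).isMaximal hP.ne_zero
  obtain ⟨p, f, hf, -, hp, hPp⟩ := exists_prime_and_absNorm_eq_pow P
  exact ⟨p, f * (m + 1), hp, by positivity, by rw [map_pow, hPp, pow_mul]⟩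

theorem injOn_radical_primePowersOfNorm (k : ℕ) :
    InjOn Ideal.radical (primePowersOfNorm K k : Set (Ideal (𝓞 K))) := by
  intro I hI J hJ hIJ
  obtain ⟨hIk, hI⟩ := mem_primePowersOfNorm.mp hI
  obtain ⟨hJk, hJ⟩ := mem_primePowersOfNorm.mp hJ
  obtain ⟨m, hm⟩ := exists_eq_radical_pow_succ hI
  obtain ⟨n, hn⟩ := exists_eq_radical_pow_succ hJ
  have hprime := prime_radical_of_isPrimeIdealPower hI
  have hone_lt : 1 < absNorm I.radical := Nat.one_lt_iff_ne_zero_and_ne_one.mpr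
    ⟨absNorm_eq_zero_iff.not.mpr hprime.ne_zero,
      absNorm_eq_one_iff.not.mpr (isPrime_of_prime hprime).ne_top⟩
  have hpow : absNorm I.radical ^ (m + 1) = absNorm I.radical ^ (n + 1) := by
    rw [← map_pow, ← map_pow, ← hm, hIJ, ← hn, hIk, hJk]
  rw [hm, hn, hIJ, Nat.pow_right_injective hone_lt hpow]

theorem prod_radical_primePowersOfNorm_dvd (p n : ℕ) :
    ∏ I ∈ primePowersOfNorm K (p ^ n), I.radical ∣ span {(p : 𝓞 K)} := by
  rw [← Finset.prod_image (f := fun P ↦ P) (injOn_radical_primePowersOfNorm _)]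
  refine Finset.prod_primes_dvd _ (fun P hP ↦ ?_) fun P hP ↦ ?_ <;>
    obtain ⟨I, hI, rfl⟩ := Finset.mem_image.mp hP <;>
    obtain ⟨hnorm, hI⟩ := mem_primePowersOfNorm.mp hI
  · exact prime_radical_of_isPrimeIdealPower hI
  · rw [dvd_iff_le, span_singleton_le_iff_mem]
    exact mem_radical_iff.mpr ⟨n, by simpa only [hnorm, Nat.cast_pow] using absNorm_mem I⟩

theorem sum_log_absNorm_radical_le {p : ℕ} (hp : p ≠ 0) (n : ℕ) :
    ∑ I ∈ primePowersOfNorm K (p ^ n), Real.log (absNorm I.radical) ≤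
      Module.finrank ℚ K * Real.log p := by
  have hne : ∀ I ∈ primePowersOfNorm K (p ^ n), absNorm I.radical ≠ 0 := fun I hI ↦
    absNorm_eq_zero_iff.not.mpr
      (prime_radical_of_isPrimeIdealPower (mem_primePowersOfNorm.mp hI).2).ne_zero
  have hdvd := map_dvd absNorm (prod_radical_primePowersOfNorm_dvd (K := K) p n)
  rw [absNorm_span_natCast, map_prod, RingOfIntegers.rank] at hdvd
  rw [← Real.log_prod fun I hI ↦ Nat.cast_ne_zero.mpr (hne I hI), ← Real.log_pow]
  refine Real.log_le_log (Finset.prod_pos fun I hI ↦ ?_) ?_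
  · exact_mod_cast Nat.pos_of_ne_zero (hne I hI)
  · exact_mod_cast Nat.le_of_dvd (by positivity) hdvd

theorem normLambda_le (k : ℕ) :
    normLambda K k ≤ Module.finrank ℚ K * ArithmeticFunction.vonMangoldt k := by
  rw [normLambda_eq_sum_log_absNorm_radical]
  rcases (primePowersOfNorm K k).eq_empty_or_nonempty with hempty | ⟨I, hI⟩
  · rw [hempty, Finset.sum_empty]
    exact mul_nonneg (Nat.cast_nonneg _) ArithmeticFunction.vonMangoldt_nonneg
  · obtain ⟨p, n, hp, hn, rfl⟩ := exists_prime_pow_of_mem_primePowersOfNorm hI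
    rw [ArithmeticFunction.vonMangoldt_apply_pow hn, ArithmeticFunction.vonMangoldt_apply_prime hp]
    exact sum_log_absNorm_radical_le hp.ne_zero n

variable (K) in
theorem sum_normLambda_le {x : ℝ} (hx : 0 ≤ x) :
    ∑ k ∈ Finset.Icc 1 ⌊x⌋₊, normLambda K k ≤ Module.finrank ℚ K * (Real.log 4 + 4) * x := by
  calc ∑ k ∈ Finset.Icc 1 ⌊x⌋₊, normLambda K k
      ≤ ∑ k ∈ Finset.Icc 1 ⌊x⌋₊, Module.finrank ℚ K * ArithmeticFunction.vonMangoldt k :=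
        Finset.sum_le_sum fun k _ ↦ normLambda_le k
    _ = Module.finrank ℚ K * Chebyshev.psi x := by
        rw [← Finset.mul_sum]
        rfl
    _ ≤ Module.finrank ℚ K * ((Real.log 4 + 4) * x) := by
        gcongr
        exact Chebyshev.psi_le_const_mul_self hx
    _ = _ := by ring

theorem summable_normLambda_non_primes :
    Summable fun n : ℕ ↦ (if n.Prime then 0 else normLambda K n) / n := by
  have hsum := (ArithmeticFunction.vonMangoldt.summable_residueClass_non_primes_div
    (0 : ZMod 1)).mul_left (Module.finrank ℚ K : ℝ)
  refine Summable.of_nonneg_of_le (fun n ↦ ?_) (fun n ↦ ?_) hsum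
  · have := normLambda_nonneg (K := K) n
    positivity
  · rw [← mul_div_assoc]
    gcongr
    split_ifs
    · rw [mul_zero]
    · rw [ArithmeticFunction.vonMangoldt.residueClass, Set.indicator_of_mem]
      exacts [normLambda_le n, Subsingleton.elim _ _]

end MangoldtBound

/-! ### Twisted Dirichlet series -/

section TwistedSeries
variable (K : Type*) [Field K] [NumberField K] {q : ℕ}

/-- The number of ideals of norm `k`, twisted by a Dirichlet character. -/
noncomputable def twistCount (χ : DirichletCharacter ℂ q) (k : ℕ) : ℂ := χ k * idealCount K k

/-- The von Mangoldt sum over the ideals of norm `k`, twisted by a Dirichlet character. -/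
noncomputable def twistLambda (χ : DirichletCharacter ℂ q) (k : ℕ) : ℂ := χ k * normLambda K k

/-- An analytic continuation to `1 ≤ re s`, nowhere locally zero, of `(s - 1) L(s)`, where `L(s)` is
the sum of `χ(N𝔞) N𝔞⁻ˢ` over the nonzero ideals `𝔞`. -/
structure IsTwistExtension (χ : DirichletCharacter ℂ q) (F : ℂ → ℂ) : Prop where
  analyticAt : ∀ s : ℂ, 1 ≤ s.re → AnalyticAt ℂ F s
  order_ne_top : ∀ s : ℂ, 1 ≤ s.re → analyticOrderAt F s ≠ ⊤
  eq_mul_LSeries : ∀ s : ℂ, 1 < s.re → F s = (s - 1) * LSeries (twistCount K χ) s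

variable {K}

theorem exponent_lt_one : 1 - 1 / (Module.finrank ℚ K : ℝ) < 1 := by
  have : (0 : ℝ) < Module.finrank ℚ K := by exact_mod_cast Module.finrank_pos
  simp only [sub_lt_self_iff]
  positivity

theorem norm_twistCount_le (χ : DirichletCharacter ℂ q) (k : ℕ) :
    ‖twistCount K χ k‖ ≤ idealCount K k := by
  rw [twistCount, norm_mul, Complex.norm_natCast]
  exact mul_le_of_le_one_left (Nat.cast_nonneg _) (χ.norm_le_one _)

theorem norm_twistLambda_le (χ : DirichletCharacter ℂ q) (k : ℕ) :
    ‖twistLambda K χ k‖ ≤ normLambda K k := by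
  rw [twistLambda, norm_mul, Complex.norm_real, Real.norm_of_nonneg (normLambda_nonneg k)]
  exact mul_le_of_le_one_left (normLambda_nonneg k) (χ.norm_le_one _)

theorem isBigO_sum_idealCount : (fun n : ℕ ↦ ∑ k ∈ Finset.Icc 1 n, (idealCount K k : ℝ)) =O[atTop]
    fun n ↦ (n : ℝ) ^ (1 : ℝ) := by
  obtain ⟨κ, hκ⟩ := exists_isBigO_sum_idealCount_sub K 1 (0 : ZMod 1)
  have herror : (fun X : ℝ ↦ X ^ (1 - 1 / (Module.finrank ℚ K : ℝ))) =O[atTop]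
      fun X : ℝ ↦ X ^ (1 : ℝ) := by
    refine IsBigO.of_bound 1 ?_
    filter_upwards [eventually_ge_atTop 1] with X hX
    rw [Real.norm_of_nonneg (by positivity), Real.norm_of_nonneg (by positivity), one_mul]
    exact Real.rpow_le_rpow_of_exponent_le hX exponent_lt_one.le
  have hmain : (fun X : ℝ ↦ κ * X) =O[atTop] fun X : ℝ ↦ X ^ (1 : ℝ) := by
    simpa only [Real.rpow_one] using isBigO_const_mul_self κ _ _
  refine (((hκ.trans herror).add hmain).comp_tendsto tendsto_natCast_atTop_atTop).congr_left
    fun n ↦ ?_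
  rw [Function.comp_apply, sub_add_cancel, Nat.floor_natCast,
    Finset.filter_true_of_mem fun _ _ ↦ Subsingleton.elim _ _]

theorem isBigO_sum_norm_twistCount (χ : DirichletCharacter ℂ q) :
    (fun n : ℕ ↦ ∑ k ∈ Finset.Icc 1 n, ‖twistCount K χ k‖) =O[atTop]
      fun n ↦ (n : ℝ) ^ (1 : ℝ) := by
  refine IsBigO.trans (IsBigO.of_bound 1 (Eventually.of_forall fun n ↦ ?_))
    (isBigO_sum_idealCount (K := K))
  rw [one_mul, Real.norm_of_nonneg (Finset.sum_nonneg fun k _ ↦ norm_nonneg _),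
    Real.norm_of_nonneg (Finset.sum_nonneg fun k _ ↦ Nat.cast_nonneg _)]
  exact Finset.sum_le_sum fun k _ ↦ norm_twistCount_le χ k

theorem isBigO_sum_norm_twistLambda (χ : DirichletCharacter ℂ q) :
    (fun n : ℕ ↦ ∑ k ∈ Finset.Icc 1 n, ‖twistLambda K χ k‖) =O[atTop]
      fun n ↦ (n : ℝ) ^ (1 : ℝ) := by
  refine IsBigO.of_bound (Module.finrank ℚ K * (Real.log 4 + 4)) (Eventually.of_forall fun n ↦ ?_)
  rw [Real.norm_of_nonneg (Finset.sum_nonneg fun k _ ↦ norm_nonneg _), Real.rpow_one,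
    Real.norm_of_nonneg n.cast_nonneg]
  refine (Finset.sum_le_sum fun k _ ↦ norm_twistLambda_le χ k).trans ?_
  simpa using sum_normLambda_le K n.cast_nonneg

theorem LSeriesSummable_twistCount (χ : DirichletCharacter ℂ q) {s : ℂ} (hs : 1 < s.re) :
    LSeriesSummable (twistCount K χ) s :=
  LSeriesSummable_of_sum_norm_bigO (isBigO_sum_norm_twistCount χ) zero_le_one hs

theorem LSeriesSummable_twistLambda (χ : DirichletCharacter ℂ q) {s : ℂ} (hs : 1 < s.re) :
    LSeriesSummable (twistLambda K χ) s :=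
  LSeriesSummable_of_sum_norm_bigO (isBigO_sum_norm_twistLambda χ) zero_le_one hs

theorem abscissa_twistCount_le (χ : DirichletCharacter ℂ q) :
    LSeries.abscissaOfAbsConv (twistCount K χ) ≤ 1 :=
  LSeries.abscissaOfAbsConv_le_of_forall_lt_LSeriesSummable fun y hy ↦
    LSeriesSummable_twistCount χ (by simpa using hy)

theorem abscissa_twistLambda_le (χ : DirichletCharacter ℂ q) :
    LSeries.abscissaOfAbsConv (twistLambda K χ) ≤ 1 :=
  LSeries.abscissaOfAbsConv_le_of_forall_lt_LSeriesSummable fun y hy ↦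
    LSeriesSummable_twistLambda χ (by simpa using hy)

theorem LSeries_twistLambda_mul (χ : DirichletCharacter ℂ q) {s : ℂ} (hs : 1 < s.re) :
    LSeries (twistLambda K χ) s * LSeries (twistCount K χ) s =
      -deriv (LSeries (twistCount K χ)) s := by
  have habs : LSeries.abscissaOfAbsConv (twistCount K χ) < s.re :=
    (abscissa_twistCount_le χ).trans_lt (by exact_mod_cast hs)
  rw [LSeries_deriv habs, neg_neg, ← LSeries_convolution' (LSeriesSummable_twistLambda χ hs)
    (LSeriesSummable_twistCount χ hs)]
  refine LSeries_congr (fun {n} hn ↦ ?_) s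
  have hdiv := congrArg Complex.ofReal (sum_divisorsAntidiagonal_normLambda (K := K) hn)
  push_cast at hdiv
  rw [LSeries.convolution_def, LSeries.logMul, twistCount]
  calc ∑ p ∈ n.divisorsAntidiagonal, twistLambda K χ p.1 * twistCount K χ p.2
      = ∑ p ∈ n.divisorsAntidiagonal, χ n * (normLambda K p.1 * idealCount K p.2) := by
        refine Finset.sum_congr rfl fun p hp ↦ ?_
        rw [← (Nat.mem_divisorsAntidiagonal.mp hp).1, twistLambda, twistCount, Nat.cast_mul,
          map_mul]
        ring
    _ = Complex.log n * (χ n * idealCount K n) := by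
        rw [← Finset.mul_sum, hdiv]
        ring

theorem IsTwistExtension.twistLambda_mul {χ : DirichletCharacter ℂ q} {F : ℂ → ℂ}
    (hF : IsTwistExtension K χ F) {s : ℂ} (hs : 1 < s.re) :
    LSeries (twistLambda K χ) s * F s = F s / (s - 1) - deriv F s := by
  have hs₁ : s - 1 ≠ 0 := Complex.ne_zero_of_re_pos (by simpa using hs)
  have hL : HasDerivAt (LSeries (twistCount K χ)) (deriv (LSeries (twistCount K χ)) s) s :=
    (LSeries_hasDerivAt ((abscissa_twistCount_le χ).trans_lt
      (by exact_mod_cast hs))).differentiableAt.hasDerivAt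
  have hev : F =ᶠ[𝓝 s] fun s ↦ (s - 1) * LSeries (twistCount K χ) s := by
    filter_upwards [(isOpen_lt continuous_const Complex.continuous_re).mem_nhds hs] with z hz
    exact hF.eq_mul_LSeries z hz
  have hderiv := ((((hasDerivAt_id s).sub_const 1).mul hL).congr_of_eventuallyEq hev).deriv
  simp only [id_eq, one_mul] at hderiv
  rw [hderiv, hF.eq_mul_LSeries s hs, mul_div_cancel_left₀ _ hs₁]
  linear_combination (s - 1) * LSeries_twistLambda_mul (K := K) χ hs

theorem LSeries_twistCount_frequently_ne_zero (χ : DirichletCharacter ℂ q) :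
    ∃ᶠ x : ℝ in atTop, LSeries (twistCount K χ) x ≠ 0 := by
  intro hzero
  have hlim : Tendsto (fun x : ℝ ↦ LSeries (twistCount K χ) x) atTop (𝓝 (twistCount K χ 1)) :=
    LSeries.tendsto_atTop ((abscissa_twistCount_le χ).trans_lt (EReal.coe_lt_top 1))
  have hone := tendsto_nhds_unique hlim
    (tendsto_const_nhds.congr' (hzero.mono fun x hx ↦ (not_not.mp hx).symm))
  simp [twistCount, idealCount_one] at hone

section Extension

variable [NeZero q]

theorem exists_isBigO_sum_twistCount_sub (χ : DirichletCharacter ℂ q) :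
    ∃ ρ : ℂ, (fun X : ℝ ↦ ∑ k ∈ Finset.Icc 1 ⌊X⌋₊, twistCount K χ k - ρ * X) =O[atTop]
      fun X : ℝ ↦ X ^ (1 - 1 / (Module.finrank ℚ K : ℝ)) := by
  choose κ hκ using fun a : ZMod q ↦ exists_isBigO_sum_idealCount_sub K q a
  refine ⟨∑ a, χ a * κ a, (IsBigO.fun_sum (s := Finset.univ) fun a _ ↦
    ((Complex.isBigO_ofReal_left).mpr (hκ a)).const_mul_left (χ a)).congr_left fun X ↦ ?_⟩
  rw [Finset.sum_mul, ← Finset.sum_fiberwise (Finset.Icc 1 ⌊X⌋₊) (fun k : ℕ ↦ (k : ZMod q)),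
    ← Finset.sum_sub_distrib]
  refine Finset.sum_congr rfl fun a _ ↦ ?_
  push_cast
  rw [mul_sub, Finset.mul_sum, mul_assoc]
  congr 1
  refine Finset.sum_congr rfl fun k hk ↦ ?_
  rw [twistCount, (Finset.mem_filter.mp hk).2]

theorem exists_isTwistExtension (χ : DirichletCharacter ℂ q) :
    ∃ F : ℂ → ℂ, IsTwistExtension K χ F := by
  obtain ⟨ρ, hρ⟩ := exists_isBigO_sum_twistCount_sub (K := K) χ
  obtain ⟨F, hF, -, hFs⟩ := exists_LSeries_extension (twistCount K χ) ρ exponent_lt_one hρ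
    (isBigO_sum_norm_twistCount χ)
  set U : Set ℂ := {s | 1 - 1 / (Module.finrank ℚ K : ℝ) < s.re}
  have hmem : ∀ s : ℂ, 1 ≤ s.re → s ∈ U := fun s hs ↦ exponent_lt_one.trans_le hs
  have hanalytic : AnalyticOnNhd ℂ F U :=
    hF.analyticOnNhd (isOpen_lt continuous_const Complex.continuous_re)
  refine ⟨F, fun s hs ↦ hanalytic s (hmem s hs), fun s hs hzero ↦ ?_, hFs⟩
  have hF_zero := hanalytic.eqOn_zero_of_preconnected_of_eventuallyEq_zero
    (convex_halfSpace_re_gt _).isPreconnected (hmem s hs) (analyticOrderAt_eq_top.mp hzero)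
  obtain ⟨x, hx, hx₁⟩ := ((LSeries_twistCount_frequently_ne_zero (K := K) χ).and_eventually
    (eventually_gt_atTop 1)).exists
  have hFx : F x = 0 := hF_zero (hmem x (by simpa using hx₁.le))
  rw [hFs x (by simpa using hx₁)] at hFx
  have hx_ne : (x : ℂ) - 1 ≠ 0 := Complex.ne_zero_of_re_pos (by simpa using hx₁)
  exact (mul_ne_zero hx_ne hx) hFx

end Extension

end TwistedSeries

/-! ### Zeros and poles on the line `re s = 1` -/

section PoleOrders

theorem tendsto_sub_mul_deriv_div {F : ℂ → ℂ} {z₀ : ℂ} (hF : AnalyticAt ℂ F z₀)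
    (hord : analyticOrderAt F z₀ ≠ ⊤) :
    Tendsto (fun z ↦ (z - z₀) * (deriv F z / F z)) (𝓝[≠] z₀) (𝓝 (analyticOrderNatAt F z₀)) := by
  obtain ⟨g, hg, hg₀, hFg⟩ := hF.analyticOrderAt_ne_top.mp hord
  set k := analyticOrderNatAt F z₀
  have hlim : Tendsto (fun z ↦ (k : ℂ) + (z - z₀) * logDeriv g z) (𝓝[≠] z₀) (𝓝 k) := by
    have hcont : ContinuousAt (fun z ↦ (k : ℂ) + (z - z₀) * logDeriv g z) z₀ :=
      continuousAt_const.add ((continuousAt_id.sub continuousAt_const).mul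
        (hg.deriv.continuousAt.div hg.continuousAt hg₀))
    simpa using hcont.tendsto.mono_left (nhdsWithin_le_nhds (s := {z₀}ᶜ))
  refine hlim.congr' ?_
  filter_upwards [nhdsWithin_le_nhds hFg.eventually_nhds,
    nhdsWithin_le_nhds (hg.continuousAt.eventually_ne hg₀),
    nhdsWithin_le_nhds hg.eventually_analyticAt, self_mem_nhdsWithin] with z hFz hgz hg_an hz
  have hz' : z - z₀ ≠ 0 := sub_ne_zero.mpr hz
  have hlog : logDeriv F z = k / (z - z₀) + logDeriv g z := by
    rw [(logDeriv_congr_nhds hFz).eq_of_nhds]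
    simp only [smul_eq_mul]
    rw [logDeriv_mul (f := fun z ↦ (z - z₀) ^ k) z (pow_ne_zero k hz') hgz (by fun_prop)
      hg_an.differentiableAt, logDeriv_fun_pow (by fun_prop), logDeriv_apply, deriv_sub_const_fun,
      deriv_id'', mul_one_div]
  rw [← logDeriv_apply, hlog]
  field_simp

theorem tendsto_one_add_ofReal_nhdsNE (t : ℝ) :
    Tendsto (fun ε : ℝ ↦ (1 + ε + Complex.I * t : ℂ)) (𝓝[>] 0) (𝓝[≠] (1 + Complex.I * t)) := by
  refine tendsto_nhdsWithin_iff.mpr ⟨?_, ?_⟩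
  · have hcont : Continuous fun ε : ℝ ↦ (1 + ε + Complex.I * t : ℂ) := by fun_prop
    simpa using (hcont.tendsto 0).mono_left (nhdsWithin_le_nhds (s := Ioi 0))
  · filter_upwards [self_mem_nhdsWithin] with ε (hε : 0 < ε)
    simpa using hε.ne'

theorem tendsto_ofReal_div_add_mul_I (t : ℝ) :
    Tendsto (fun ε : ℝ ↦ (ε : ℂ) / (ε + Complex.I * t)) (𝓝[>] 0)
      (𝓝 (if t = 0 then 1 else 0)) := by
  split_ifs with ht
  · refine tendsto_const_nhds.congr' ?_
    filter_upwards [self_mem_nhdsWithin] with ε (hε : 0 < ε)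
    simp [ht, hε.ne']
  · have hcont : ContinuousAt (fun ε : ℝ ↦ (ε : ℂ) / (ε + Complex.I * t)) 0 :=
      ContinuousAt.div (by fun_prop) (by fun_prop) (by simpa using ht)
    simpa using hcont.tendsto.mono_left (nhdsWithin_le_nhds (s := Ioi 0))

variable {K : Type*} [Field K] [NumberField K] {q : ℕ}

theorem IsTwistExtension.tendsto_mul_LSeries {χ : DirichletCharacter ℂ q} {F : ℂ → ℂ}
    (hF : IsTwistExtension K χ F) (t : ℝ) :
    Tendsto (fun ε : ℝ ↦ ε * LSeries (twistLambda K χ) (1 + ε + Complex.I * t)) (𝓝[>] 0)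
      (𝓝 ((if t = 0 then 1 else 0) - analyticOrderNatAt F (1 + Complex.I * t))) := by
  have hre : (1 : ℝ) ≤ (1 + Complex.I * t : ℂ).re := by simp
  have hpath := tendsto_one_add_ofReal_nhdsNE t
  have hne : ∀ᶠ z in 𝓝[≠] (1 + Complex.I * t : ℂ), F z ≠ 0 :=
    (hF.analyticAt _ hre).eventually_eq_zero_or_eventually_ne_zero.resolve_left fun h ↦
      hF.order_ne_top _ hre (analyticOrderAt_eq_top.mpr h)
  have hlog := (tendsto_sub_mul_deriv_div (hF.analyticAt _ hre) (hF.order_ne_top _ hre)).comp hpath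
  refine ((tendsto_ofReal_div_add_mul_I t).sub hlog).congr' ?_
  filter_upwards [self_mem_nhdsWithin, hpath.eventually hne] with ε (hε : 0 < ε) hFε
  have hLF := hF.twistLambda_mul (s := 1 + ε + Complex.I * t) (by simpa using hε)
  rw [← eq_div_iff hFε] at hLF
  rw [hLF, Function.comp_apply, sub_div, div_right_comm, div_self hFε]
  ring_nf

section ThreeFourOne

theorem natCast_cpow_neg_one_add {n : ℕ} (hn : n ≠ 0) (ε : ℝ) (u : ℂ) :
    ((n : ℂ) ^ (1 + ε + u))⁻¹ = ((n : ℝ) ^ (-(1 + ε)) : ℝ) * (n : ℂ) ^ (-u) := by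
  rw [← Complex.cpow_neg, neg_add, Complex.cpow_add _ _ (Nat.cast_ne_zero.mpr hn),
    Complex.ofReal_cpow (Nat.cast_nonneg n)]
  push_cast
  rfl

theorem re_three_add_four_mul_add_sq_nonneg {z : ℂ} (hz : ‖z‖ = 1) :
    0 ≤ (3 + 4 * z + z ^ 2).re := by
  have hnormSq : z.re * z.re + z.im * z.im = 1 := by
    rw [← Complex.normSq_apply, Complex.normSq_eq_norm_sq, hz, one_pow]
  have hsq : (3 + 4 * z + z ^ 2).re = 2 * (1 + z.re) ^ 2 := by
    simp [pow_two]
    linarith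
  rw [hsq]
  positivity

theorem re_term_twistLambda_comb_nonneg (χ : DirichletCharacter ℂ q) (ε t : ℝ) (n : ℕ) :
    0 ≤ (3 * LSeries.term (twistLambda K (1 : DirichletCharacter ℂ q))
        (1 + ε + Complex.I * (0 : ℝ)) n +
      4 * LSeries.term (twistLambda K χ) (1 + ε + Complex.I * t) n +
      LSeries.term (twistLambda K (χ ^ 2)) (1 + ε + Complex.I * (2 * t : ℝ)) n).re := by
  rcases eq_or_ne n 0 with rfl | hn
  · simp
  by_cases hu : IsUnit (n : ZMod q)
  swap
  · simp [LSeries.term_of_ne_zero hn, twistLambda, MulChar.map_nonunit _ hu]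
  set w : ℂ := (n : ℂ) ^ (-(Complex.I * t)) with hw
  set r : ℝ := (n : ℝ) ^ (-(1 + ε)) with hr
  have hw_norm : ‖w‖ = 1 := by
    simp [hw, Complex.norm_natCast_cpow_of_pos (Nat.pos_of_ne_zero hn)]
  have hw_sq : (n : ℂ) ^ (-(Complex.I * (2 * t : ℝ))) = w ^ 2 := by
    rw [hw, ← Complex.cpow_nat_mul]
    congr 1
    push_cast
    ring
  have hχw : ‖χ n * w‖ = 1 := by
    rw [norm_mul, hw_norm, mul_one, ← hu.unit_spec, χ.unit_norm_eq_one]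
  have hfactor : 3 * LSeries.term (twistLambda K (1 : DirichletCharacter ℂ q))
        (1 + ε + Complex.I * (0 : ℝ)) n +
      4 * LSeries.term (twistLambda K χ) (1 + ε + Complex.I * t) n +
      LSeries.term (twistLambda K (χ ^ 2)) (1 + ε + Complex.I * (2 * t : ℝ)) n =
      ((normLambda K n * r : ℝ) : ℂ) * (3 + 4 * (χ n * w) + (χ n * w) ^ 2) := by
    simp only [LSeries.term_of_ne_zero hn, div_eq_mul_inv, natCast_cpow_neg_one_add hn, hw_sq,
      ← hw, ← hr, twistLambda, MulChar.one_apply hu, MulChar.pow_apply' _ two_ne_zero]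
    push_cast
    simp only [mul_zero, neg_zero, Complex.cpow_zero]
    ring
  rw [hfactor, Complex.re_ofReal_mul]
  exact mul_nonneg (mul_nonneg (normLambda_nonneg n) (by positivity))
    (re_three_add_four_mul_add_sq_nonneg hχw)

theorem re_LSeries_twistLambda_comb_nonneg (χ : DirichletCharacter ℂ q) {ε : ℝ} (hε : 0 < ε)
    (t : ℝ) :
    0 ≤ (3 * LSeries (twistLambda K (1 : DirichletCharacter ℂ q)) (1 + ε + Complex.I * (0 : ℝ)) +
      4 * LSeries (twistLambda K χ) (1 + ε + Complex.I * t) +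
      LSeries (twistLambda K (χ ^ 2)) (1 + ε + Complex.I * (2 * t : ℝ))).re := by
  have hsum (ψ : DirichletCharacter ℂ q) (τ : ℝ) :=
    (LSeriesSummable_twistLambda (K := K) ψ (s := 1 + ε + Complex.I * τ) (by simpa using hε)).hasSum
  exact (Complex.hasSum_re ((((hsum 1 0).mul_left 3).add ((hsum χ t).mul_left 4)).add
    (hsum (χ ^ 2) (2 * t)))).nonneg (re_term_twistLambda_comb_nonneg χ ε t)

variable [NeZero q]

theorem IsTwistExtension.order_eq_zero {χ : DirichletCharacter ℂ q} {F : ℂ → ℂ}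
    (hF : IsTwistExtension K χ F) {t : ℝ} (ht : t ≠ 0) :
    analyticOrderNatAt F (1 + Complex.I * t) = 0 := by
  obtain ⟨F₀, hF₀⟩ := exists_isTwistExtension (K := K) (1 : DirichletCharacter ℂ q)
  obtain ⟨F₂, hF₂⟩ := exists_isTwistExtension (K := K) (χ ^ 2)
  have hlim := (((hF₀.tendsto_mul_LSeries 0).const_mul 3).add
    ((hF.tendsto_mul_LSeries t).const_mul 4)).add (hF₂.tendsto_mul_LSeries (2 * t))
  have hnonneg := ge_of_tendsto ((Complex.continuous_re.tendsto _).comp hlim) (b := 0) (by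
    filter_upwards [self_mem_nhdsWithin] with ε (hε : 0 < ε)
    have hcomb := mul_nonneg hε.le (re_LSeries_twistLambda_comb_nonneg (K := K) χ hε t)
    rw [← Complex.re_ofReal_mul] at hcomb
    simp only [Function.comp_apply]
    convert hcomb using 2
    ring)
  generalize analyticOrderNatAt F₀ _ = k₀ at hnonneg
  generalize analyticOrderNatAt F₂ _ = k₂ at hnonneg
  generalize analyticOrderNatAt F _ = k at hnonneg ⊢
  have horders : (0 : ℝ) ≤ 3 * (1 - k₀) + 4 * (0 - k) + (0 - k₂) := by
    simpa [ht] using hnonneg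
  have hle : ((4 * k : ℕ) : ℝ) ≤ (3 : ℕ) := by
    push_cast
    linarith [Nat.cast_nonneg (α := ℝ) k₀, Nat.cast_nonneg (α := ℝ) k₂]
  have hle_nat : 4 * k ≤ 3 := Nat.cast_le.mp hle
  lia

end ThreeFourOne

end PoleOrders

section BoundaryContinuity

variable {K : Type*} [Field K] [NumberField K] {q : ℕ}

theorem exists_continuousOn_of_logDeriv {χ : DirichletCharacter ℂ q} {m : ℂ} {E : ℂ → ℂ}
    (hE_an : ∀ s : ℂ, 1 ≤ s.re → AnalyticAt ℂ E s) (hE_ne : ∀ s : ℂ, s.re = 1 → E s ≠ 0)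
    (hE : ∀ s : ℂ, 1 < s.re →
      LSeries (twistLambda K χ) s * E s = m * E s / (s - 1) - deriv E s) :
    ∃ G : ℂ → ℂ, ContinuousOn G {s | 1 ≤ s.re} ∧
      ∀ s : ℂ, 1 < s.re → G s = LSeries (twistLambda K χ) s - m / (s - 1) := by
  refine ⟨fun s ↦ if 1 < s.re then LSeries (twistLambda K χ) s - m / (s - 1) else
    -(deriv E s / E s), fun s (hs : 1 ≤ s.re) ↦ ?_, fun s hs ↦ if_pos hs⟩
  rcases hs.lt_or_eq with hlt | heq
  · have hL : ContinuousAt (LSeries (twistLambda K χ)) s :=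
      (LSeries_hasDerivAt
        ((abscissa_twistLambda_le χ).trans_lt (by exact_mod_cast hlt))).continuousAt
    have hs₁ : s - 1 ≠ 0 := Complex.ne_zero_of_re_pos (by simpa using hlt)
    have hcont : ContinuousAt (fun s ↦ LSeries (twistLambda K χ) s - m / (s - 1)) s :=
      hL.sub (continuousAt_const.div (by fun_prop) hs₁)
    refine (hcont.congr ?_).continuousWithinAt
    filter_upwards [(isOpen_lt continuous_const Complex.continuous_re).mem_nhds hlt] with z hz
    exact (if_pos hz).symm
  · have hEs := hE_ne s heq.symm
    have hcont : ContinuousWithinAt (fun s ↦ -(deriv E s / E s)) {s | 1 ≤ s.re} s :=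
      ((hE_an s hs).deriv.continuousAt.div
        (hE_an s hs).continuousAt hEs).neg.continuousWithinAt
    refine hcont.congr_of_eventuallyEq ?_ (if_neg heq.not_lt)
    filter_upwards [nhdsWithin_le_nhds ((hE_an s hs).continuousAt.eventually_ne hEs)] with z hz
    split_ifs with hz_re
    · rw [eq_div_of_mul_eq hz (hE z hz_re), sub_div, div_right_comm, mul_div_cancel_right₀ _ hz]
      ring
    · rfl

theorem IsTwistExtension.tendsto_mul_LSeries_one {χ : DirichletCharacter ℂ q} {F : ℂ → ℂ}
    (hF : IsTwistExtension K χ F) :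
    Tendsto (fun ε : ℝ ↦ (ε : ℂ) * LSeries (twistLambda K χ) (1 + ε)) (𝓝[>] 0)
      (𝓝 (1 - analyticOrderNatAt F 1)) := by
  simpa using hF.tendsto_mul_LSeries 0

variable [NeZero q]

theorem exists_tendsto_twistLambda (χ : DirichletCharacter ℂ q) :
    ∃ m : ℤ, m ≤ 1 ∧
      Tendsto (fun ε : ℝ ↦ (ε : ℂ) * LSeries (twistLambda K χ) (1 + ε)) (𝓝[>] 0) (𝓝 m) := by
  obtain ⟨F, hF⟩ := exists_isTwistExtension (K := K) χ
  exact ⟨1 - analyticOrderNatAt F 1, by lia, by simpa using hF.tendsto_mul_LSeries_one⟩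

theorem IsTwistExtension.ne_zero {χ : DirichletCharacter ℂ q} {F : ℂ → ℂ}
    (hF : IsTwistExtension K χ F) {s : ℂ} (hs : s.re = 1) (hs_ne : s ≠ 1) : F s ≠ 0 := by
  have hs_eq : s = 1 + Complex.I * s.im := by
    apply Complex.ext <;> simp [hs]
  have him : s.im ≠ 0 := fun h ↦ hs_ne (by simpa [h] using hs_eq)
  rw [← (hF.analyticAt s hs.ge).analyticOrderAt_eq_zero,
    ← Nat.cast_analyticOrderNatAt (hF.order_ne_top s hs.ge), hs_eq, hF.order_eq_zero him,
    Nat.cast_zero]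

theorem IsTwistExtension.exists_continuousOn_of_ne_zero {χ : DirichletCharacter ℂ q} {F : ℂ → ℂ}
    (hF : IsTwistExtension K χ F) (hF₁ : F 1 ≠ 0) :
    ∃ G : ℂ → ℂ, ContinuousOn G {s | 1 ≤ s.re} ∧
      ∀ s : ℂ, 1 < s.re → G s = LSeries (twistLambda K χ) s - 1 / (s - 1) := by
  refine exists_continuousOn_of_logDeriv hF.analyticAt (fun s hs ↦ ?_) fun s hs ↦ ?_
  · by_cases hs_eq : s = 1
    · exact hs_eq ▸ hF₁
    · exact hF.ne_zero hs hs_eq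
  · rw [one_mul]
    exact hF.twistLambda_mul hs

theorem IsTwistExtension.exists_continuousOn_of_simple_zero {χ : DirichletCharacter ℂ q}
    {F : ℂ → ℂ} (hF : IsTwistExtension K χ F) (hF₁ : F 1 = 0) (hF₁' : deriv F 1 ≠ 0) :
    ∃ G : ℂ → ℂ, ContinuousOn G {s | 1 ≤ s.re} ∧
      ∀ s : ℂ, 1 < s.re → G s = LSeries (twistLambda K χ) s - 0 / (s - 1) := by
  have hE_mul : F = fun z ↦ (z - 1) * dslope F 1 z := by
    ext z
    simpa [hF₁] using (sub_smul_dslope F 1 z).symm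
  have hopen := isOpen_analyticAt ℂ F
  have hE_an : ∀ s : ℂ, 1 ≤ s.re → AnalyticAt ℂ (dslope F 1) s := fun s hs ↦
    ((Complex.differentiableOn_dslope (hopen.mem_nhds (hF.analyticAt 1 le_rfl))).mpr
      fun z hz ↦ (AnalyticAt.differentiableAt hz).differentiableWithinAt).analyticOnNhd
        hopen s (hF.analyticAt s hs)
  refine exists_continuousOn_of_logDeriv (E := dslope F 1) hE_an (fun s hs ↦ ?_) fun s hs ↦ ?_
  · by_cases hs_eq : s = 1
    · rwa [hs_eq, dslope_same]
    · intro hzero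
      refine hF.ne_zero hs hs_eq ?_
      rw [hE_mul]
      simp [hzero]
  · have hs₁ : s - 1 ≠ 0 := Complex.ne_zero_of_re_pos (by simpa using hs)
    have hderiv : deriv F s = dslope F 1 s + (s - 1) * deriv (dslope F 1) s := by
      have h := ((hasDerivAt_id s).sub_const 1).mul (hE_an s hs.le).differentiableAt.hasDerivAt
      rw [← one_mul (dslope F 1 s)]
      exact (h.congr_of_eventuallyEq (Eventually.of_forall fun z ↦ congrFun hE_mul z)).deriv
    have hLF := hF.twistLambda_mul hs
    rw [hderiv, congrFun hE_mul s, mul_div_cancel_left₀ _ hs₁] at hLF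
    refine mul_left_cancel₀ hs₁ ?_
    linear_combination hLF

theorem exists_continuousOn_twistLambda (χ : DirichletCharacter ℂ q) {m : ℤ}
    (hm : m = 0 ∨ m = 1)
    (hlim : Tendsto (fun ε : ℝ ↦ (ε : ℂ) * LSeries (twistLambda K χ) (1 + ε)) (𝓝[>] 0) (𝓝 m)) :
    ∃ G : ℂ → ℂ, ContinuousOn G {s | 1 ≤ s.re} ∧
      ∀ s : ℂ, 1 < s.re → G s = LSeries (twistLambda K χ) s - m / (s - 1) := by
  obtain ⟨F, hF⟩ := exists_isTwistExtension (K := K) χ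
  have hF_an := hF.analyticAt 1 le_rfl
  have hm_order : m = 1 - analyticOrderNatAt F 1 := by
    exact_mod_cast tendsto_nhds_unique hlim hF.tendsto_mul_LSeries_one
  have horder := Nat.cast_analyticOrderNatAt (hF.order_ne_top 1 le_rfl)
  rcases hm with rfl | rfl
  · have hone : analyticOrderAt F 1 = 1 := by
      rw [← horder, show analyticOrderNatAt F 1 = 1 by lia, Nat.cast_one]
    have hF₁ : F 1 = 0 := hF_an.analyticOrderAt_ne_zero.mp (by simp [hone])
    have hF₁' : deriv F 1 ≠ 0 := by
      rw [← hF_an.deriv.analyticOrderAt_eq_zero]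
      have hadd := hF_an.analyticOrderAt_deriv_add_one
      rw [hF₁] at hadd
      simpa [hone] using hadd
    simpa using hF.exists_continuousOn_of_simple_zero hF₁ hF₁'
  · have hzero : analyticOrderAt F 1 = 0 := by
      rw [← horder, show analyticOrderNatAt F 1 = 0 by lia, Nat.cast_zero]
    simpa using hF.exists_continuousOn_of_ne_zero (hF_an.analyticOrderAt_eq_zero.mp hzero)

end BoundaryContinuity

/-! ### Integral Fourier coefficients of a probability measure on the units mod `q` -/

section FourierCoefficients

variable {q : ℕ}

theorem norm_sum_char_mul_le [NeZero q] (χ : DirichletCharacter ℂ q) {d : (ZMod q)ˣ → ℝ}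
    (hd : ∀ u, 0 ≤ d u) : ‖∑ u : (ZMod q)ˣ, χ u * (d u : ℂ)‖ ≤ ∑ u, d u :=
  norm_sum_le_of_le _ fun u _ ↦ by
    rw [norm_mul, χ.unit_norm_eq_one, one_mul, Complex.norm_of_nonneg (hd u)]

theorem two_mul_sub_sum_le_re_sum_char_mul [NeZero q] (χ : DirichletCharacter ℂ q)
    {d : (ZMod q)ˣ → ℝ} (hd : ∀ u, 0 ≤ d u) :
    2 * d 1 - ∑ u, d u ≤ (∑ u : (ZMod q)ˣ, χ u * (d u : ℂ)).re := by
  have hre : ∀ u : (ZMod q)ˣ, -d u ≤ (χ u * (d u : ℂ)).re := fun u ↦ by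
    rw [Complex.re_mul_ofReal, neg_eq_neg_one_mul]
    refine mul_le_mul_of_nonneg_right ?_ (hd u)
    have := (abs_le.mp (Complex.abs_re_le_norm (χ u))).1
    rwa [χ.unit_norm_eq_one] at this
  have hrest := Finset.sum_le_sum fun u (_ : u ∈ Finset.univ.erase (1 : (ZMod q)ˣ)) ↦ hre u
  rw [Complex.re_sum, ← Finset.add_sum_erase _ d (Finset.mem_univ 1),
    ← Finset.add_sum_erase _ (fun u : (ZMod q)ˣ ↦ (χ u * (d u : ℂ)).re) (Finset.mem_univ 1)]
  simp only [Finset.sum_neg_distrib, Units.val_one, map_one, one_mul, Complex.ofReal_re]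
    at hrest ⊢
  linarith

theorem sum_char_units_inv_mul_char [NeZero q] (v : (ZMod q)ˣ) (x : ZMod q) :
    ∑ χ : DirichletCharacter ℂ q, χ ((v⁻¹ : (ZMod q)ˣ) : ZMod q) * χ x =
      if (v : ZMod q) = x then (q.totient : ℂ) else 0 := by
  rw [← ZMod.inv_coe_unit, DirichletCharacter.sum_char_inv_mul_char_eq ℂ v.isUnit]

theorem sum_char_inv_mul [NeZero q] {m : DirichletCharacter ℂ q → ℂ} {d : (ZMod q)ˣ → ℂ}
    (hmd : ∀ χ, m χ = ∑ u : (ZMod q)ˣ, χ u * d u) (v : (ZMod q)ˣ) :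
    ∑ χ : DirichletCharacter ℂ q, χ ((v⁻¹ : (ZMod q)ˣ) : ZMod q) * m χ = q.totient * d v := by
  simp only [hmd, Finset.mul_sum]
  rw [Finset.sum_comm]
  simp only [← mul_assoc, ← Finset.sum_mul, sum_char_units_inv_mul_char, Units.val_inj, ite_mul,
    zero_mul, Finset.sum_ite_eq, Finset.mem_univ, if_true]

theorem eq_one_div_card_of_sum_eq_one {ι : Type*} {s : Finset ι} {d : ι → ℝ}
    (hsum : ∑ i ∈ s, d i = 1) (hle : ∀ i ∈ s, s.card * d i ≤ 1) {i : ι} (hi : i ∈ s) :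
    d i = 1 / s.card := by
  have hcard : (0 : ℝ) < s.card := by exact_mod_cast Finset.card_pos.mpr ⟨i, hi⟩
  have hle' : ∀ j ∈ s, d j ≤ 1 / s.card := fun j hj ↦ (le_div_iff₀' hcard).mpr (hle j hj)
  refine (Finset.sum_eq_sum_iff_of_le hle').mp ?_ i hi
  rw [hsum, Finset.sum_const, nsmul_eq_mul, mul_one_div_cancel hcard.ne']

variable {m : DirichletCharacter ℂ q → ℤ} {d : (ZMod q)ˣ → ℝ} [NeZero q]

section
variable (hd : ∀ u, 0 ≤ d u) (hd_sum : ∑ u, d u = 1) (hd_pos : 0 < d 1)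
  (hmd : ∀ χ, (m χ : ℂ) = ∑ u : (ZMod q)ˣ, χ u * (d u : ℂ))
include hd hd_sum hd_pos hmd

-- The value `-1` is impossible because the trivial class has positive mass.
theorem eq_zero_or_eq_one_of_fourier (χ : DirichletCharacter ℂ q) : m χ = 0 ∨ m χ = 1 := by
  have hle : |(m χ : ℝ)| ≤ 1 := by
    rw [← hd_sum, ← Complex.norm_intCast, hmd]
    exact norm_sum_char_mul_le χ hd
  have hgt : -1 < (m χ : ℝ) := by
    have h := two_mul_sub_sum_le_re_sum_char_mul χ hd
    rw [← hmd, Complex.intCast_re] at h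
    linarith
  have hle_int : m χ ≤ 1 := by exact_mod_cast (abs_le.mp hle).2
  have hgt_int : -1 < m χ := by exact_mod_cast hgt
  lia

theorem le_one_of_fourier (v : (ZMod q)ˣ) : d v ≤ d 1 := by
  have hinv := fun v ↦ sum_char_inv_mul (m := fun χ ↦ (m χ : ℂ)) (d := fun u ↦ (d u : ℂ)) hmd v
  have hterm : ∀ χ : DirichletCharacter ℂ q,
      (χ ((v⁻¹ : (ZMod q)ˣ) : ZMod q) * (m χ : ℂ)).re ≤ m χ := by
    intro χ
    have hre := (Complex.re_le_norm _).trans (χ.unit_norm_eq_one v⁻¹).le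
    rcases eq_zero_or_eq_one_of_fourier hd hd_sum hd_pos hmd χ with h | h
    · simp [h]
    · simpa [h] using hre
  have hone : (q.totient : ℝ) * d 1 = ∑ χ, (m χ : ℝ) := by
    have h := hinv 1
    simp only [inv_one, Units.val_one, map_one, one_mul] at h
    exact_mod_cast h.symm
  have hmul : (q.totient : ℝ) * d v ≤ q.totient * d 1 := by
    calc (q.totient : ℝ) * d v = ((q.totient : ℂ) * d v).re := by simp
      _ ≤ ∑ χ, (m χ : ℝ) := by
        rw [← hinv v, Complex.re_sum]
        exact Finset.sum_le_sum fun χ _ ↦ hterm χ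
      _ = q.totient * d 1 := hone.symm
  exact le_of_mul_le_mul_left hmul (by exact_mod_cast Nat.totient_pos.mpr (NeZero.pos q))

end

theorem fourier_uniform_of_integral {G : Subgroup (ZMod q)ˣ} (hd : ∀ u, 0 ≤ d u)
    (hd_supp : ∀ u ∉ G, d u = 0) (hd_pos : 0 < d 1) (hd_one : Nat.card G * d 1 ≤ 1)
    (hmd : ∀ χ, (m χ : ℂ) = ∑ u : (ZMod q)ˣ, χ u * (d u : ℂ)) (hm_one : m 1 = 1) :
    (∀ χ, m χ = 0 ∨ m χ = 1) ∧ ∀ u ∈ G, d u = 1 / Nat.card G := by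
  have hd_sum : ∑ u, d u = 1 := by
    have h := hmd 1
    simp only [hm_one, MulChar.one_apply_coe, one_mul] at h
    exact_mod_cast h.symm
  have hcard : Finset.card {u | u ∈ G} = Nat.card G := by
    rw [← Fintype.card_subtype, Nat.card_eq_fintype_card]
  have hd_sum_G : ∑ u with u ∈ G, d u = 1 := by
    rw [← hd_sum]
    exact Finset.sum_subset (Finset.subset_univ _) fun u _ hu ↦ hd_supp u (by simpa using hu)
  refine ⟨eq_zero_or_eq_one_of_fourier hd hd_sum hd_pos hmd, fun u hu ↦ ?_⟩
  rw [← hcard]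
  refine eq_one_div_card_of_sum_eq_one hd_sum_G (fun v _ ↦ ?_) (by simpa using hu)
  rw [hcard]
  exact (mul_le_mul_of_nonneg_left (le_one_of_fourier hd hd_sum hd_pos hmd v)
    (Nat.cast_nonneg _)).trans hd_one

end FourierCoefficients

/-! ### Comparing residues at `s = 1` -/

section Residues

/-- The Dirichlet series of `f` behaves like `c / ε` at `1 + ε`, as `ε → 0+`. -/
def HasResidue (f : ℕ → ℝ) (c : ℝ) : Prop :=
  Tendsto (fun ε : ℝ ↦ ε * ∑' n : ℕ, f n / (n : ℝ) ^ (1 + ε)) (𝓝[>] 0) (𝓝 c)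

theorem LSeries_term_ofReal (f : ℕ → ℝ) {ε : ℝ} (hε : 0 < ε) (n : ℕ) :
    LSeries.term (fun n ↦ (f n : ℂ)) (1 + ε) n = ((f n / (n : ℝ) ^ (1 + ε) : ℝ) : ℂ) := by
  rcases eq_or_ne n 0 with rfl | hn
  · rw [LSeries.term_zero, Nat.cast_zero, Real.zero_rpow (by linarith)]
    simp
  · rw [LSeries.term_of_ne_zero hn, Complex.ofReal_div, Complex.ofReal_cpow (Nat.cast_nonneg n)]
    push_cast
    rfl

theorem LSeries_ofReal (f : ℕ → ℝ) {ε : ℝ} (hε : 0 < ε) :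
    LSeries (fun n ↦ (f n : ℂ)) (1 + ε) = ((∑' n : ℕ, f n / (n : ℝ) ^ (1 + ε) : ℝ) : ℂ) := by
  rw [LSeries, Complex.ofReal_tsum]
  exact tsum_congr fun n ↦ LSeries_term_ofReal f hε n

theorem hasResidue_of_tendsto {f : ℕ → ℝ} {z : ℂ}
    (h : Tendsto (fun ε : ℝ ↦ (ε : ℂ) * LSeries (fun n ↦ (f n : ℂ)) (1 + ε)) (𝓝[>] 0) (𝓝 z)) :
    HasResidue f z.re := by
  refine ((Complex.continuous_re.tendsto z).comp h).congr' ?_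
  filter_upwards [self_mem_nhdsWithin] with ε (hε : 0 < ε)
  rw [Function.comp_apply, LSeries_ofReal f hε, ← Complex.ofReal_mul, Complex.ofReal_re]

theorem HasResidue.tendsto {f : ℕ → ℝ} {c : ℝ} (h : HasResidue f c) :
    Tendsto (fun ε : ℝ ↦ (ε : ℂ) * LSeries (fun n ↦ (f n : ℂ)) (1 + ε)) (𝓝[>] 0) (𝓝 c) := by
  refine ((Complex.continuous_ofReal.tendsto c).comp h).congr' ?_
  filter_upwards [self_mem_nhdsWithin] with ε (hε : 0 < ε)
  rw [Function.comp_apply, LSeries_ofReal f hε, ← Complex.ofReal_mul]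

theorem HasResidue.nonneg {f : ℕ → ℝ} {c : ℝ} (h : HasResidue f c) (hf : ∀ n, 0 ≤ f n) : 0 ≤ c := by
  refine ge_of_tendsto h ?_
  filter_upwards [self_mem_nhdsWithin] with ε (hε : 0 < ε)
  exact mul_nonneg hε.le (tsum_nonneg fun n ↦ div_nonneg (hf n) (by positivity))

theorem HasResidue.const_mul {f : ℕ → ℝ} {c : ℝ} (h : HasResidue f c) (r : ℝ) :
    HasResidue (fun n ↦ r * f n) (r * c) := by
  refine (Tendsto.const_mul r h).congr fun ε ↦ ?_
  simp only [mul_div_assoc, tsum_mul_left]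
  ring

theorem div_rpow_one_add_le_add {x y z ε : ℝ} (hε : 0 < ε) (hz : 0 ≤ z) (hxyz : x ≤ y + z)
    (n : ℕ) : x / (n : ℝ) ^ (1 + ε) ≤ y / (n : ℝ) ^ (1 + ε) + z / n := by
  rcases eq_or_ne n 0 with rfl | hn
  · rw [Nat.cast_zero, Real.zero_rpow (by linarith)]
    simp
  have hn_one : (1 : ℝ) ≤ n := by exact_mod_cast Nat.one_le_iff_ne_zero.mpr hn
  have hn_le : (n : ℝ) ≤ (n : ℝ) ^ (1 + ε) := Real.self_le_rpow_of_one_le hn_one (by linarith)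
  calc x / (n : ℝ) ^ (1 + ε) ≤ (y + z) / (n : ℝ) ^ (1 + ε) := by gcongr
    _ = y / (n : ℝ) ^ (1 + ε) + z / (n : ℝ) ^ (1 + ε) := add_div ..
    _ ≤ y / (n : ℝ) ^ (1 + ε) + z / n := by gcongr

theorem HasResidue.le_of_le_add {f g e : ℕ → ℝ} {c c' : ℝ} (hf : HasResidue f c)
    (hg : HasResidue g c') (hf_nonneg : ∀ n, 0 ≤ f n) (he_nonneg : ∀ n, 0 ≤ e n)
    (hle : ∀ n, f n ≤ g n + e n)
    (hg_sum : ∀ ε : ℝ, 0 < ε → Summable fun n : ℕ ↦ g n / (n : ℝ) ^ (1 + ε))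
    (he_sum : Summable fun n : ℕ ↦ e n / n) : c ≤ c' := by
  have hlim : Tendsto (fun ε : ℝ ↦ ε * ∑' n : ℕ, g n / (n : ℝ) ^ (1 + ε) + ε * ∑' n : ℕ, e n / n)
      (𝓝[>] 0) (𝓝 (c' + 0 * ∑' n : ℕ, e n / n)) :=
    Tendsto.add hg ((tendsto_id.mono_left nhdsWithin_le_nhds).mul_const _)
  rw [zero_mul, add_zero] at hlim
  refine le_of_tendsto_of_tendsto hf hlim ?_
  filter_upwards [self_mem_nhdsWithin] with ε (hε : 0 < ε)
  have hterm := fun n ↦ div_rpow_one_add_le_add hε (he_nonneg n) (hle n) n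
  have hsum := (hg_sum ε hε).add he_sum
  rw [← mul_add, ← (hg_sum ε hε).tsum_add he_sum]
  exact mul_le_mul_of_nonneg_left ((Summable.of_nonneg_of_le
    (fun n ↦ div_nonneg (hf_nonneg n) (by positivity)) hterm hsum).tsum_le_tsum hterm hsum) hε.le

variable {K : Type*} [Field K] [NumberField K] {q : ℕ}

variable (K) in
theorem twistLambda_one_modulus_one :
    twistLambda K (1 : DirichletCharacter ℂ 1) = fun n ↦ (normLambda K n : ℂ) := by
  ext n
  rw [twistLambda, MulChar.one_apply (isUnit_of_subsingleton _), one_mul]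

theorem summable_normLambda {ε : ℝ} (hε : 0 < ε) :
    Summable fun n : ℕ ↦ normLambda K n / (n : ℝ) ^ (1 + ε) := by
  have h := LSeriesSummable_twistLambda (K := K) (1 : DirichletCharacter ℂ 1) (s := 1 + ε)
    (by simpa using hε)
  rw [twistLambda_one_modulus_one] at h
  exact Complex.summable_ofReal.mp (h.congr fun n ↦ LSeries_term_ofReal _ hε n)

theorem summable_away_from_good_primes [NeZero q] {f : ℕ → ℝ} {C : ℝ} (hf_nonneg : ∀ n, 0 ≤ f n)
    (hf_le : ∀ n, f n ≤ C * normLambda K n) :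
    Summable fun n : ℕ ↦ (if n.Prime ∧ ¬ n ∣ q then 0 else f n) / (n : ℝ) := by
  have hnon_primes := (summable_normLambda_non_primes (K := K)).mul_left C
  have hdivisors : Summable fun n : ℕ ↦ if n ∈ q.divisors then f n / n else 0 :=
    summable_of_ne_finset_zero (s := q.divisors) fun n hn ↦ if_neg hn
  refine Summable.of_nonneg_of_le (fun n ↦ ?_) (fun n ↦ ?_) (hnon_primes.add hdivisors)
  · split_ifs
    exacts [by simp, div_nonneg (hf_nonneg n) (by positivity)]
  · have hbound_nonneg : 0 ≤ C * (normLambda K n / n) := by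
      rw [← mul_div_assoc]
      exact div_nonneg ((hf_nonneg n).trans (hf_le n)) (by positivity)
    have hbound : f n / n ≤ C * (normLambda K n / n) := by
      rw [← mul_div_assoc]
      gcongr
      exact hf_le n
    by_cases hp : n.Prime <;> by_cases hd : n ∣ q <;>
      simp [hp, hd, NeZero.ne q, hbound_nonneg, hbound]

theorem HasResidue.le_of_forall_prime [NeZero q] {L : Type*} [Field L] [NumberField L]
    {f g : ℕ → ℝ} {c c' C C' : ℝ} (hf : HasResidue f c) (hg : HasResidue g c')
    (hf_nonneg : ∀ n, 0 ≤ f n) (hg_nonneg : ∀ n, 0 ≤ g n)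
    (hf_le : ∀ n, f n ≤ C * normLambda K n) (hg_le : ∀ n, g n ≤ C' * normLambda L n)
    (hfg : ∀ p : ℕ, p.Prime → ¬ p ∣ q → f p ≤ g p) : c ≤ c' := by
  refine hf.le_of_le_add hg (e := fun n ↦ if n.Prime ∧ ¬ n ∣ q then 0 else f n) hf_nonneg
    (fun n ↦ ?_) (fun n ↦ ?_) (fun ε hε ↦ ?_) (summable_away_from_good_primes hf_nonneg hf_le)
  · split_ifs
    exacts [le_rfl, hf_nonneg n]
  · split_ifs with hn
    · simpa using hfg n hn.1 hn.2
    · linarith [hg_nonneg n]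
  · refine Summable.of_nonneg_of_le (fun n ↦ div_nonneg (hg_nonneg n) (by positivity)) (fun n ↦ ?_)
      ((summable_normLambda (K := L) hε).mul_left C')
    rw [← mul_div_assoc]
    gcongr
    exact hg_le n

theorem IsTwistExtension.apply_one {F : ℂ → ℂ}
    (hF : IsTwistExtension K (1 : DirichletCharacter ℂ 1) F) : F 1 = dedekindZeta_residue K := by
  have hcount : twistCount K (1 : DirichletCharacter ℂ 1) =
      fun n ↦ (Nat.card {I : Ideal (𝓞 K) // absNorm I = n} : ℂ) := by
    ext n
    rw [twistCount, MulChar.one_apply (isUnit_of_subsingleton _), one_mul, idealCount]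
  have hlim : Tendsto (fun s : ℝ ↦ F s) (𝓝[>] 1) (𝓝 (F (1 : ℝ))) :=
    ((hF.analyticAt _ (by simp)).continuousAt.comp
      Complex.continuous_ofReal.continuousAt).tendsto.mono_left nhdsWithin_le_nhds
  rw [Complex.ofReal_one] at hlim
  refine tendsto_nhds_unique hlim ((tendsto_sub_one_mul_dedekindZeta_nhdsGT K).congr' ?_)
  filter_upwards [self_mem_nhdsWithin] with s (hs : 1 < s)
  rw [hF.eq_mul_LSeries s (by simpa using hs), hcount, dedekindZeta]

theorem hasResidue_normLambda : HasResidue (normLambda K) 1 := by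
  obtain ⟨F, hF⟩ := exists_isTwistExtension (K := K) (1 : DirichletCharacter ℂ 1)
  have hF₁ : F 1 ≠ 0 := by
    rw [hF.apply_one]
    exact_mod_cast dedekindZeta_residue_ne_zero K
  have horder : analyticOrderNatAt F 1 = 0 := by
    rw [analyticOrderNatAt, (hF.analyticAt 1 le_rfl).analyticOrderAt_eq_zero.mpr hF₁]
    rfl
  have hlim := hF.tendsto_mul_LSeries_one
  rw [twistLambda_one_modulus_one, horder, Nat.cast_zero, sub_zero] at hlim
  simpa using hasResidue_of_tendsto hlim

end Residues

section ResidueClasses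

variable (K : Type*) [Field K] [NumberField K] {q : ℕ}

/-- The restriction of `normLambda` to a residue class modulo `q`. -/
noncomputable def classLambda (u : ZMod q) (n : ℕ) : ℝ :=
  if (n : ZMod q) = u then normLambda K n else 0

variable {K}

theorem classLambda_nonneg (u : ZMod q) (n : ℕ) : 0 ≤ classLambda K u n := by
  rw [classLambda]
  split_ifs
  exacts [normLambda_nonneg n, le_rfl]

theorem classLambda_le (u : ZMod q) (n : ℕ) : classLambda K u n ≤ normLambda K n := by
  rw [classLambda]
  split_ifs
  exacts [le_rfl, normLambda_nonneg n]

theorem LSeriesSummable_classLambda (u : ZMod q) {s : ℂ} (hs : 1 < s.re) :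
    LSeriesSummable (fun n ↦ (classLambda K u n : ℂ)) s := by
  have h := LSeriesSummable_twistLambda (K := K) (1 : DirichletCharacter ℂ 1) hs
  rw [twistLambda_one_modulus_one] at h
  refine Summable.of_norm_bounded h.norm fun n ↦ LSeries.norm_term_le s ?_
  rw [Complex.norm_of_nonneg (classLambda_nonneg u n), Complex.norm_of_nonneg (normLambda_nonneg n)]
  exact classLambda_le u n

variable [NeZero q]

theorem LSeries_classLambda (u : (ZMod q)ˣ) {s : ℂ} (hs : 1 < s.re) :
    LSeries (fun n ↦ (classLambda K (u : ZMod q) n : ℂ)) s =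
      (q.totient : ℂ)⁻¹ * ∑ χ : DirichletCharacter ℂ q,
        χ ((u⁻¹ : (ZMod q)ˣ) : ZMod q) * LSeries (twistLambda K χ) s := by
  have hφ : (q.totient : ℂ) ≠ 0 := by exact_mod_cast (Nat.totient_pos.mpr (NeZero.pos q)).ne'
  rw [eq_inv_mul_iff_mul_eq₀ hφ]
  simp only [LSeries, ← tsum_mul_left]
  rw [← Summable.tsum_finsetSum fun χ _ ↦ (LSeriesSummable_twistLambda χ hs).mul_left _]
  refine tsum_congr fun n ↦ ?_
  rcases eq_or_ne n 0 with rfl | hn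
  · simp
  simp only [LSeries.term_of_ne_zero hn, twistLambda, mul_div_assoc, ← mul_assoc, ← Finset.sum_mul,
    sum_char_units_inv_mul_char, classLambda, eq_comm (a := (n : ZMod q))]
  split_ifs <;> simp

theorem twistLambda_eq_sum_classLambda (χ : DirichletCharacter ℂ q) (n : ℕ) :
    twistLambda K χ n = ∑ u : (ZMod q)ˣ, χ u * (classLambda K (u : ZMod q) n : ℂ) := by
  by_cases hn : IsUnit (n : ZMod q)
  · obtain ⟨v, hv⟩ := hn
    simp [twistLambda, classLambda, ← hv, Units.val_inj, apply_ite Complex.ofReal]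
  · have hne (u : (ZMod q)ˣ) : (n : ZMod q) ≠ u := fun h ↦ hn (h ▸ u.isUnit)
    simp [twistLambda, classLambda, χ.map_nonunit hn, hne]

theorem LSeries_twistLambda_eq_sum (χ : DirichletCharacter ℂ q) {s : ℂ} (hs : 1 < s.re) :
    LSeries (twistLambda K χ) s =
      ∑ u : (ZMod q)ˣ, χ u * LSeries (fun n ↦ (classLambda K (u : ZMod q) n : ℂ)) s := by
  simp only [LSeries, ← tsum_mul_left]
  rw [← Summable.tsum_finsetSum fun u _ ↦ (LSeriesSummable_classLambda _ hs).mul_left _]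
  refine tsum_congr fun n ↦ ?_
  rcases eq_or_ne n 0 with rfl | hn
  · simp
  simp only [LSeries.term_of_ne_zero hn, twistLambda_eq_sum_classLambda, Finset.sum_div,
    mul_div_assoc]

variable (K q)

theorem exists_residues : ∃ (m : DirichletCharacter ℂ q → ℤ) (d : (ZMod q)ˣ → ℝ),
    (∀ χ, m χ ≤ 1) ∧
    (∀ χ, Tendsto (fun ε : ℝ ↦ (ε : ℂ) * LSeries (twistLambda K χ) (1 + ε)) (𝓝[>] 0) (𝓝 (m χ))) ∧
    (∀ u : (ZMod q)ˣ, HasResidue (classLambda K (u : ZMod q)) (d u)) ∧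
    ∀ χ, (m χ : ℂ) = ∑ u : (ZMod q)ˣ, χ u * (d u : ℂ) := by
  choose m hm_le hm using fun χ : DirichletCharacter ℂ q ↦ exists_tendsto_twistLambda (K := K) χ
  have hre : ∀ ε : ℝ, 0 < ε → 1 < (1 + ε : ℂ).re := fun ε hε ↦ by simpa using hε
  have hres : ∀ u : (ZMod q)ˣ, ∃ d : ℝ, HasResidue (classLambda K (u : ZMod q)) d := by
    intro u
    have hlim := (tendsto_finsetSum Finset.univ fun (χ : DirichletCharacter ℂ q) _ ↦
      (hm χ).const_mul (χ ((u⁻¹ : (ZMod q)ˣ) : ZMod q))).const_mul (q.totient : ℂ)⁻¹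
    refine ⟨_, hasResidue_of_tendsto (hlim.congr' ?_)⟩
    filter_upwards [self_mem_nhdsWithin] with ε (hε : 0 < ε)
    rw [LSeries_classLambda u (hre ε hε), mul_left_comm, Finset.mul_sum _ _ (ε : ℂ)]
    simp only [mul_left_comm]
  choose d hd using hres
  refine ⟨m, d, hm_le, hm, hd, fun χ ↦ tendsto_nhds_unique (hm χ) ?_⟩
  refine (tendsto_finsetSum Finset.univ fun (u : (ZMod q)ˣ) _ ↦
      (hd u).tendsto.const_mul (χ u)).congr' ?_
  filter_upwards [self_mem_nhdsWithin] with ε (hε : 0 < ε)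
  rw [LSeries_twistLambda_eq_sum χ (hre ε hε), Finset.mul_sum]
  simp only [mul_left_comm]

end ResidueClasses

/-! ### Frobenius elements of primes of degree one -/

section Frobenius

theorem natCard_le_of_forall_pow_eq {R : Type*} [CommRing R] [IsDomain R] [Finite R] {p : ℕ}
    (hp : 1 < p) (h : ∀ x : R, x ^ p = x) : Nat.card R ≤ p := by
  have : Fintype R := Fintype.ofFinite R
  have hdeg : (Polynomial.X ^ p - Polynomial.X : Polynomial R).natDegree = p := by
    rw [Polynomial.natDegree_sub_eq_left_of_natDegree_lt] <;> simp [hp]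
  have hne : (Polynomial.X ^ p - Polynomial.X : Polynomial R) ≠ 0 :=
    Polynomial.ne_zero_of_natDegree_gt (hdeg ▸ hp)
  have hroots : (Finset.univ : Finset R).val ⊆
      (Polynomial.X ^ p - Polynomial.X : Polynomial R).roots :=
    fun x _ ↦ (Polynomial.mem_roots hne).mpr (by simp [h x])
  calc Nat.card R = (Finset.univ : Finset R).card := by rw [Nat.card_eq_fintype_card]; rfl
    _ ≤ p := hdeg ▸ Polynomial.card_le_degree_of_subset_roots hroots

theorem natCast_notMem_of_coprime {R : Type*} [CommRing R] {m n : ℕ} (h : m.Coprime n)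
    {I : Ideal R} (hI : I ≠ ⊤) (hm : (m : R) ∈ I) : (n : R) ∉ I := by
  intro hn
  obtain ⟨a, b, hab⟩ := Nat.isCoprime_iff_coprime.mpr h
  have habR : (a : R) * m + b * n = 1 := by exact_mod_cast congrArg (Int.cast : ℤ → R) hab
  exact (Ideal.ne_top_iff_one I).mp hI
    (habR ▸ I.add_mem (I.mul_mem_left _ hm) (I.mul_mem_left _ hn))

theorem autToPow_eq_iff {K M : Type*} [Field K] [Field M] [Algebra K M] {q : ℕ} [NeZero q] {ζ : M}
    (hζ : IsPrimitiveRoot ζ q) (σ : M ≃ₐ[K] M) (n : ℕ) :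
    (hζ.autToPow K σ : ZMod q) = n ↔ σ ζ = ζ ^ n := by
  rw [← hζ.autToPow_spec K σ, (hζ.isOfFinOrder (NeZero.ne q)).pow_eq_pow_iff_modEq,
    ← hζ.eq_orderOf, ← ZMod.natCast_eq_natCast_iff, ZMod.natCast_zmod_val]

variable {K M : Type*} [Field K] [NumberField K] [Field M] [Algebra K M] {p q : ℕ}

theorem natCard_quotient_eq_absNorm (P : Ideal (𝓞 K)) : Nat.card (𝓞 K ⧸ P) = absNorm P :=
  (absNorm_apply P).symm

theorem isMaximal_of_prime_absNorm {P : Ideal (𝓞 K)} (hP : (absNorm P).Prime) : P.IsMaximal :=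
  (isPrime_of_irreducible_absNorm hP).isMaximal fun h ↦ hP.ne_zero (absNorm_eq_zero_iff.mpr h)

theorem exists_isPrime_liesOver {P : Ideal (𝓞 K)} (hP : (absNorm P).Prime) :
    ∃ Q : Ideal (𝓞 M), Q.IsPrime ∧ Q.LiesOver P := by
  have : P.IsMaximal := isMaximal_of_prime_absNorm hP
  obtain ⟨Q, hQ, hQP⟩ := Ideal.exists_maximal_ideal_liesOver_of_isIntegral (S := 𝓞 M) P
  exact ⟨Q, hQ.isPrime, hQP⟩

variable [NumberField M]

theorem smul_sub_mem_of_surjective [IsGalois K M] {P : Ideal (𝓞 K)} {Q : Ideal (𝓞 M)} [Q.LiesOver P]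
    (hsurj : Function.Surjective (algebraMap (𝓞 K ⧸ P) (𝓞 M ⧸ Q))) {σ : M ≃ₐ[K] M}
    (hσ : σ • Q = Q) (x : 𝓞 M) : σ • x - x ∈ Q := by
  obtain ⟨a, ha⟩ := hsurj (Ideal.Quotient.mk Q x)
  obtain ⟨b, rfl⟩ := Ideal.Quotient.mk_surjective a
  have hb : x - algebraMap (𝓞 K) (𝓞 M) b ∈ Q := by
    rw [← Ideal.Quotient.eq, ← ha]
    rfl
  have hσb : σ • (x - algebraMap (𝓞 K) (𝓞 M) b) ∈ Q :=
    hσ ▸ Ideal.smul_mem_pointwise_smul σ _ Q hb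
  simpa [smul_sub, smul_algebraMap] using Q.sub_mem hσb hb

theorem exists_isArithFrobAt [IsGalois K M] {P : Ideal (𝓞 K)} (hP : P ≠ ⊥) (Q : Ideal (𝓞 M))
    [Q.IsPrime] [Q.LiesOver P] : ∃ σ : M ≃ₐ[K] M, IsArithFrobAt (𝓞 K) σ Q := by
  have : Finite (𝓞 M ⧸ Q) := Ideal.finiteQuotientOfFreeOfNeBot Q (ne_bot_of_liesOver_of_ne_bot hP Q)
  exact IsArithFrobAt.exists_of_isInvariant (𝓞 K) (M ≃ₐ[K] M) Q

variable [NeZero q] {ζ : M} {P : Ideal (𝓞 K)}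

theorem autToPow_of_isArithFrobAt [IsGalois K M] (hζ : IsPrimitiveRoot ζ q)
    (hPq : (absNorm P).Coprime q) {Q : Ideal (𝓞 M)} [hQp : Q.IsPrime] [hQ : Q.LiesOver P]
    {σ : M ≃ₐ[K] M} (hσ : IsArithFrobAt (𝓞 K) σ Q) : (hζ.autToPow K σ : ZMod q) = absNorm P := by
  have hPQ : (absNorm P : 𝓞 M) ∈ Q := by
    have h := absNorm_mem P
    rw [hQ.over, Ideal.mem_comap, ← hQ.over] at h
    simpa using h
  have h := hσ.apply_of_pow_eq_one hζ.toInteger_isPrimitiveRoot.pow_eq_one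
    (natCast_notMem_of_coprime hPq hQp.ne_top hPQ)
  rw [← hQ.over, natCard_quotient_eq_absNorm] at h
  exact (autToPow_eq_iff hζ σ _).mpr (congrArg (fun x : 𝓞 M ↦ (x : M)) h)

theorem exists_autToPow_eq_absNorm [IsGalois K M] (hζ : IsPrimitiveRoot ζ q)
    (hP : (absNorm P).Prime) (hPq : (absNorm P).Coprime q) :
    ∃ σ : M ≃ₐ[K] M, (hζ.autToPow K σ : ZMod q) = absNorm P := by
  obtain ⟨Q, hQ, hQP⟩ := exists_isPrime_liesOver (M := M) hP
  obtain ⟨σ, hσ⟩ := exists_isArithFrobAt (absNorm_eq_zero_iff.not.mp hP.ne_zero) Q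
  exact ⟨σ, autToPow_of_isArithFrobAt hζ hPq hσ⟩

variable [IsCyclotomicExtension {q} K M]

theorem eq_one_of_isArithFrobAt [IsGalois K M] (hζ : IsPrimitiveRoot ζ q)
    (hPq : (absNorm P : ZMod q) = 1) {Q : Ideal (𝓞 M)} [Q.IsPrime] [Q.LiesOver P] {σ : M ≃ₐ[K] M}
    (hσ : IsArithFrobAt (𝓞 K) σ Q) : σ = 1 := by
  have hcop : (absNorm P).Coprime q := (ZMod.isUnit_iff_coprime _ q).mp (hPq ▸ isUnit_one)
  refine hζ.autToPow_injective (K := K) (Units.ext ?_)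
  rw [autToPow_of_isArithFrobAt hζ hcop hσ, hPq, map_one, Units.val_one]

theorem pow_absNorm_sub_mem (hζ : IsPrimitiveRoot ζ q) (hP : P ≠ ⊥)
    (hPq : (absNorm P : ZMod q) = 1) (Q : Ideal (𝓞 M)) [Q.IsPrime] [hQ : Q.LiesOver P] (x : 𝓞 M) :
    x - x ^ absNorm P ∈ Q := by
  have : IsGalois K M := IsCyclotomicExtension.isGalois {q} K M
  obtain ⟨σ, hσ⟩ := exists_isArithFrobAt hP Q
  have h := hσ x
  rw [← hQ.over, natCard_quotient_eq_absNorm] at h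
  simpa [eq_one_of_isArithFrobAt hζ hPq hσ] using h

theorem absNorm_eq_of_liesOver (hζ : IsPrimitiveRoot ζ q) (hP : (absNorm P).Prime)
    (hPq : (absNorm P : ZMod q) = 1) (Q : Ideal (𝓞 M)) [hQp : Q.IsPrime] [Q.LiesOver P] :
    absNorm Q = absNorm P := by
  have hP_bot : P ≠ ⊥ := absNorm_eq_zero_iff.not.mp hP.ne_zero
  have : Finite (𝓞 M ⧸ Q) :=
    Ideal.finiteQuotientOfFreeOfNeBot Q (ne_bot_of_liesOver_of_ne_bot hP_bot Q)
  have hle : absNorm Q ≤ absNorm P := by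
    rw [← natCard_quotient_eq_absNorm Q]
    refine natCard_le_of_forall_pow_eq hP.one_lt fun x ↦ ?_
    obtain ⟨y, rfl⟩ := Ideal.Quotient.mk_surjective x
    exact (Ideal.Quotient.eq.mpr (pow_absNorm_sub_mem hζ hP_bot hPq Q y)).symm
  have hpow := absNorm_eq_pow_inertiaDeg'_of_liesOver Q P (isPrime_of_irreducible_absNorm hP) hP_bot
  have hdeg : P.inertiaDeg' Q ≠ 0 := fun h ↦
    hQp.ne_top (absNorm_eq_one_iff.mp (by rw [hpow, h, pow_zero]))
  exact hle.antisymm (hpow ▸ Nat.le_self_pow hdeg _)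

theorem eq_one_of_smul_eq_self (hζ : IsPrimitiveRoot ζ q) (hP : (absNorm P).Prime)
    (hPq : (absNorm P : ZMod q) = 1) {Q : Ideal (𝓞 M)} [Q.IsPrime] [hQ : Q.LiesOver P]
    {σ : M ≃ₐ[K] M} (hσ : σ • Q = Q) : σ = 1 := by
  have : IsGalois K M := IsCyclotomicExtension.isGalois {q} K M
  have hcard : Nat.card (𝓞 M ⧸ Q) = Nat.card (𝓞 K ⧸ P) := by
    simp only [natCard_quotient_eq_absNorm, absNorm_eq_of_liesOver hζ hP hPq Q]
  have : Finite (𝓞 M ⧸ Q) := Nat.finite_of_card_ne_zero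
    (by rw [hcard, natCard_quotient_eq_absNorm]; exact hP.ne_zero)
  have hsurj : Function.Surjective (algebraMap (𝓞 K ⧸ P) (𝓞 M ⧸ Q)) :=
    ((FaithfulSMul.algebraMap_injective _ _).bijective_of_nat_card_le hcard.le).surjective
  refine eq_one_of_isArithFrobAt (Q := Q) hζ hPq fun x ↦ ?_
  have hpow := pow_absNorm_sub_mem hζ (absNorm_eq_zero_iff.not.mp hP.ne_zero) hPq Q x
  rw [← hQ.over, natCard_quotient_eq_absNorm]
  simpa using Q.add_mem (smul_sub_mem_of_surjective hsurj hσ x) hpow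

end Frobenius

section DegreeOnePrimes

theorem idealCount_ne_zero_iff {K : Type*} [Field K] [NumberField K] {k : ℕ} :
    idealCount K k ≠ 0 ↔ ∃ P : Ideal (𝓞 K), absNorm P = k := by
  rw [idealCount_eq_card, Finset.card_ne_zero]
  simp only [Finset.Nonempty, mem_idealsOfNorm]

variable {K M : Type*} [Field K] [NumberField K] [Field M] [NumberField M] [Algebra K M] {p : ℕ}

theorem idealCount_ne_zero_of_extension (hp : p.Prime) (h : idealCount M p ≠ 0) :
    idealCount K p ≠ 0 := by
  obtain ⟨Q, rfl⟩ := idealCount_ne_zero_iff.mp h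
  have hQ : Q.IsPrime := isPrime_of_irreducible_absNorm hp
  have hP_bot : Q.under (𝓞 K) ≠ ⊥ :=
    mt Ideal.eq_bot_of_comap_eq_bot (absNorm_eq_zero_iff.not.mp hp.ne_zero)
  have hpow := absNorm_eq_pow_inertiaDeg'_of_liesOver Q (Q.under (𝓞 K)) inferInstance hP_bot
  exact idealCount_ne_zero_iff.mpr ⟨_, (hp.pow_eq_iff.mp hpow.symm).1⟩

variable {q : ℕ} [NeZero q] {ζ : M}

theorem natCast_eq_one_of_idealCount_ne_zero (hζ : IsPrimitiveRoot ζ q) (hp : p.Prime)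
    (hpq : ¬ p ∣ q) (h : idealCount M p ≠ 0) : (p : ZMod q) = 1 := by
  obtain ⟨P, rfl⟩ := idealCount_ne_zero_iff.mp h
  obtain ⟨σ, hσ⟩ := exists_autToPow_eq_absNorm (K := M) hζ hp (hp.coprime_iff_not_dvd.mpr hpq)
  rw [← hσ, Subsingleton.elim σ 1, map_one, Units.val_one]

variable [IsCyclotomicExtension {q} K M]

/-- Primes of norm `≡ 1 (mod q)` split completely, so Galois acts freely on the primes above. -/
theorem card_mul_idealCount_le (hζ : IsPrimitiveRoot ζ q) (hp : p.Prime)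
    (hpq : (p : ZMod q) = 1) : Nat.card (M ≃ₐ[K] M) * idealCount K p ≤ idealCount M p := by
  have : IsGalois K M := IsCyclotomicExtension.isGalois {q} K M
  have hprime (P : {P : Ideal (𝓞 K) // absNorm P = p}) : (absNorm P.1).Prime := by rwa [P.2]
  have hone (P : {P : Ideal (𝓞 K) // absNorm P = p}) : (absNorm P.1 : ZMod q) = 1 := by rwa [P.2]
  choose Q hQ hQP using fun P ↦ exists_isPrime_liesOver (M := M) (hprime P)
  let f : (M ≃ₐ[K] M) × {P : Ideal (𝓞 K) // absNorm P = p} → {Q : Ideal (𝓞 M) // absNorm Q = p} :=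
    fun x ↦ ⟨x.1 • Q x.2, (absNorm_eq_of_liesOver hζ (hprime x.2) (hone x.2) _).trans x.2.2⟩
  rw [idealCount, idealCount, ← Nat.card_prod]
  refine Nat.card_le_card_of_injective f ?_
  rintro ⟨σ, P⟩ ⟨τ, P'⟩ h
  have hsmul : σ • Q P = τ • Q P' := congrArg Subtype.val h
  obtain rfl : P = P' := by
    have hunder := congrArg (fun I : Ideal (𝓞 M) ↦ I.under (𝓞 K)) hsmul
    simp only [Ideal.under_smul] at hunder
    exact Subtype.ext (((hQP P).over.trans hunder).trans (hQP P').over.symm)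
  have hfix : (τ⁻¹ * σ) • Q P = Q P := by rw [mul_smul, hsmul, inv_smul_smul]
  rw [inv_mul_eq_one.mp (eq_one_of_smul_eq_self hζ (hprime P) (hone P) hfix)]

end DegreeOnePrimes

section ResidueValues

variable {K M : Type*} [Field K] [NumberField K] [Field M] [NumberField M] [Algebra K M]
  {q : ℕ} [NeZero q] {ζ : M} {c : ℝ}

theorem hasResidue_zero : HasResidue (fun _ ↦ 0) 0 := by
  simp [HasResidue]

theorem residue_eq_zero_of_notMem_range [IsGalois K M] (hζ : IsPrimitiveRoot ζ q) {u : (ZMod q)ˣ}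
    (hu : u ∉ (hζ.autToPow K).range) (h : HasResidue (classLambda K (u : ZMod q)) c) : c = 0 := by
  refine le_antisymm ?_ (h.nonneg (classLambda_nonneg _))
  refine h.le_of_forall_prime (q := q) (K := K) (L := K) (C := 1) (C' := 0)
    hasResidue_zero (classLambda_nonneg _) (fun _ ↦ le_rfl)
    (fun n ↦ (classLambda_le _ n).trans (one_mul _).ge) (fun n ↦ (zero_mul _).ge)
    fun p hp hpq ↦ ?_
  rw [classLambda]
  split_ifs with hpu
  · suffices idealCount K p = 0 by simp [normLambda_prime hp, this]
    by_contra hcount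
    obtain ⟨P, rfl⟩ := idealCount_ne_zero_iff.mp hcount
    obtain ⟨σ, hσ⟩ := exists_autToPow_eq_absNorm hζ hp (hp.coprime_iff_not_dvd.mpr hpq)
    exact hu ⟨σ, Units.ext (hσ.trans hpu)⟩
  · exact le_rfl

theorem one_le_residue_twistLambda_one {z : ℂ}
    (h : Tendsto
      (fun ε : ℝ ↦ (ε : ℂ) * LSeries (twistLambda K (1 : DirichletCharacter ℂ q)) (1 + ε))
      (𝓝[>] 0) (𝓝 z)) : 1 ≤ z.re := by
  let g : ℕ → ℝ := fun n ↦ if IsUnit (n : ZMod q) then normLambda K n else 0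
  have hg : twistLambda K (1 : DirichletCharacter ℂ q) = fun n ↦ (g n : ℂ) := by
    ext n
    by_cases hn : IsUnit (n : ZMod q)
    · simp [twistLambda, g, hn, MulChar.one_apply hn]
    · simp [twistLambda, g, hn, MulChar.map_nonunit _ hn]
  rw [hg] at h
  refine (hasResidue_normLambda (K := K)).le_of_forall_prime (q := q) (K := K) (L := K) (C := 1)
    (C' := 1) (hasResidue_of_tendsto h) normLambda_nonneg (fun n ↦ ?_) (fun n ↦ (one_mul _).ge)
    (fun n ↦ ?_) fun p hp hpq ↦ ?_
  · simp only [g]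
    split_ifs
    exacts [normLambda_nonneg n, le_rfl]
  · simp only [g, one_mul]
    split_ifs
    exacts [le_rfl, normLambda_nonneg n]
  · have hunit : IsUnit (p : ZMod q) :=
      (ZMod.isUnit_iff_coprime p q).mpr (hp.coprime_iff_not_dvd.mpr hpq)
    simp [g, hunit]

theorem residue_one_pos (hζ : IsPrimitiveRoot ζ q)
    (h : HasResidue (classLambda K (1 : ZMod q)) c) : 0 < c := by
  suffices 1 ≤ (Module.finrank ℚ M : ℝ) * c from
    pos_of_mul_pos_right (zero_lt_one.trans_le this) (Nat.cast_nonneg _)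
  refine (hasResidue_normLambda (K := M)).le_of_forall_prime (q := q) (K := M) (L := K) (C := 1)
    (C' := Module.finrank ℚ M) (h.const_mul _) normLambda_nonneg
    (fun n ↦ mul_nonneg (Nat.cast_nonneg _) (classLambda_nonneg _ n)) (fun n ↦ (one_mul _).ge)
    (fun n ↦ mul_le_mul_of_nonneg_left (classLambda_le _ n) (Nat.cast_nonneg _))
    fun p hp hpq ↦ ?_
  by_cases hcount : idealCount M p = 0
  · rw [normLambda_prime hp, hcount, Nat.cast_zero, zero_mul]
    exact mul_nonneg (Nat.cast_nonneg _) (classLambda_nonneg _ p)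
  have hcount_pos : (1 : ℝ) ≤ idealCount K p := by
    exact_mod_cast Nat.one_le_iff_ne_zero.mpr (idealCount_ne_zero_of_extension (K := K) hp hcount)
  rw [classLambda, if_pos (natCast_eq_one_of_idealCount_ne_zero hζ hp hpq hcount)]
  refine (normLambda_le p).trans (mul_le_mul_of_nonneg_left ?_ (Nat.cast_nonneg _))
  rw [ArithmeticFunction.vonMangoldt_apply_prime hp, normLambda_prime hp]
  exact le_mul_of_one_le_left (Real.log_natCast_nonneg p) hcount_pos

variable [IsCyclotomicExtension {q} K M]

theorem card_mul_residue_one_le (hζ : IsPrimitiveRoot ζ q)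
    (h : HasResidue (classLambda K (1 : ZMod q)) c) :
    Nat.card (hζ.autToPow K).range * c ≤ 1 := by
  have hcard : Nat.card (hζ.autToPow K).range = Nat.card (M ≃ₐ[K] M) :=
    Nat.card_congr (MonoidHom.ofInjective (hζ.autToPow_injective K)).toEquiv.symm
  rw [hcard]
  refine (h.const_mul _).le_of_forall_prime (q := q) (K := K) (L := M)
    (C := Nat.card (M ≃ₐ[K] M)) (C' := 1) hasResidue_normLambda
    (fun n ↦ mul_nonneg (Nat.cast_nonneg _) (classLambda_nonneg _ n)) normLambda_nonneg
    (fun n ↦ mul_le_mul_of_nonneg_left (classLambda_le _ n) (Nat.cast_nonneg _))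
    (fun n ↦ (one_mul _).ge) fun p hp _ ↦ ?_
  rw [classLambda]
  split_ifs with hp_one
  · rw [normLambda_prime hp, normLambda_prime hp, ← mul_assoc]
    exact mul_le_mul_of_nonneg_right (by exact_mod_cast card_mul_idealCount_le hζ hp hp_one)
      (Real.log_natCast_nonneg p)
  · simpa using normLambda_nonneg (K := M) p

theorem exists_pole_orders (hζ : IsPrimitiveRoot ζ q) : ∃ m : DirichletCharacter ℂ q → ℤ,
    (∀ χ, m χ = 0 ∨ m χ = 1) ∧
    (∀ χ, Tendsto (fun ε : ℝ ↦ (ε : ℂ) * LSeries (twistLambda K χ) (1 + ε)) (𝓝[>] 0) (𝓝 (m χ))) ∧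
    ∀ u ∈ (hζ.autToPow K).range, ∑ χ, χ ((u⁻¹ : (ZMod q)ˣ) : ZMod q) * (m χ : ℂ) =
      q.totient * (1 / Nat.card (hζ.autToPow K).range : ℝ) := by
  have : IsGalois K M := IsCyclotomicExtension.isGalois {q} K M
  obtain ⟨m, d, hm_le, hlim, hd, hmd⟩ := exists_residues K q
  have hd_one : HasResidue (classLambda K (1 : ZMod q)) (d 1) := by simpa using hd 1
  have hm_one : m 1 = 1 := by
    have h := one_le_residue_twistLambda_one (hlim 1)
    rw [Complex.intCast_re] at h
    exact le_antisymm (hm_le 1) (by exact_mod_cast h)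
  obtain ⟨hm, hd_eq⟩ := fourier_uniform_of_integral
    (fun u ↦ (hd u).nonneg (classLambda_nonneg _))
    (fun u hu ↦ residue_eq_zero_of_notMem_range hζ hu (hd u)) (residue_one_pos hζ hd_one)
    (card_mul_residue_one_le hζ hd_one) hmd hm_one
  exact ⟨m, hm, hlim, fun u hu ↦ by rw [sum_char_inv_mul hmd u, hd_eq u hu]⟩

theorem exists_continuousOn_classLambda (hζ : IsPrimitiveRoot ζ q) {a : (ZMod q)ˣ}
    (ha : a ∈ (hζ.autToPow K).range) :
    ∃ G : ℂ → ℂ, ContinuousOn G {s | 1 ≤ s.re} ∧ ∀ s, 1 < s.re →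
      G s = LSeries (fun n ↦ (classLambda K (a : ZMod q) n : ℂ)) s -
        (1 / Nat.card (hζ.autToPow K).range : ℝ) / (s - 1) := by
  obtain ⟨m, hm, hlim, hsum⟩ := exists_pole_orders (K := K) hζ
  choose G hGc hG using fun χ ↦ exists_continuousOn_twistLambda χ (hm χ) (hlim χ)
  refine ⟨fun s ↦ (q.totient : ℂ)⁻¹ * ∑ χ, χ ((a⁻¹ : (ZMod q)ˣ) : ZMod q) * G χ s,
    continuousOn_const.mul (continuousOn_finsetSum _ fun χ _ ↦ continuousOn_const.mul (hGc χ)),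
    fun s hs ↦ ?_⟩
  have hφ : (q.totient : ℂ) ≠ 0 := by exact_mod_cast (Nat.totient_pos.mpr (NeZero.pos q)).ne'
  rw [LSeries_classLambda a hs]
  simp only [hG _ s hs, mul_sub, Finset.sum_sub_distrib, ← mul_div_assoc, ← Finset.sum_div]
  rw [hsum a ha, mul_div_assoc, mul_div_assoc, inv_mul_cancel_left₀ hφ]

variable (K) in
theorem tendsto_sum_classLambda_div (hζ : IsPrimitiveRoot ζ q) {a : (ZMod q)ˣ}
    (ha : a ∈ (hζ.autToPow K).range) :
    Tendsto (fun x : ℝ ↦ (∑ k ∈ Finset.Icc 1 ⌊x⌋₊, classLambda K (a : ZMod q) k) / x) atTop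
      (𝓝 (1 / Nat.card (hζ.autToPow K).range)) := by
  obtain ⟨G, hGc, hG⟩ := exists_continuousOn_classLambda hζ ha
  have hB (x : ℝ) (hx : 0 ≤ x) : ∑ k ∈ Finset.Icc 1 ⌊x⌋₊, classLambda K (a : ZMod q) k ≤
      Module.finrank ℚ K * (Real.log 4 + 4) * x :=
    (Finset.sum_le_sum fun k _ ↦ classLambda_le _ k).trans (sum_normLambda_le K hx)
  exact wienerIkehara (classLambda_nonneg _) hB hGc hG

end ResidueValues

end PrimeIdealNorms

theorem psiK_asymptotic_general (K : Type*) [Field K] [NumberField K] (q : ℕ) (hq : 1 ≤ q)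
    (a : (ZMod q)ˣ) (ha : a ∈ Gq K q) :
    Filter.Tendsto (fun x : ℝ ↦ psiK K x q (a : ZMod q) * (phiK K q : ℝ) / x)
      Filter.atTop (nhds 1) := by
  have : NeZero q := ⟨Nat.one_le_iff_ne_zero.mp hq⟩
  have : NumberField (CyclotomicField q K) := IsCyclotomicExtension.numberField {q} K _
  have hζ := IsCyclotomicExtension.zeta_spec q K (CyclotomicField q K)
  have hG : Gq K q = (hζ.autToPow K).range := dif_pos hq
  have hlim := (PrimeIdealNorms.tendsto_sum_classLambda_div K hζ (hG ▸ ha)).mul_const (phiK K q : ℝ)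
  have hφ : (phiK K q : ℝ) ≠ 0 := by exact_mod_cast Nat.card_pos.ne'
  rw [← hG, ← phiK, one_div_mul_cancel hφ] at hlim
  refine hlim.congr fun x ↦ ?_
  rw [PrimeIdealNorms.psiK_eq_sum, Finset.sum_filter, div_mul_eq_mul_div]
  rfl

/-- **Chebotarëv density (asymptotic).** For every `q ≥ 1` and `a ∈ G_q`,
`ψ_K(x; q, a) ∼ x / φ_K(q)` as `x → ∞`, i.e. `ψ_K(x;q,a) φ_K(q) / x → 1`. -/
theorem psiK_asymptotic (K : Type*) [Field K] [NumberField K] [IsGalois ℚ K]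
    (q : ℕ) (hq : 1 ≤ q) (a : (ZMod q)ˣ) (ha : a ∈ Gq K q) :
    Filter.Tendsto (fun x : ℝ => psiK K x q (a : ZMod q) * (phiK K q : ℝ) / x)
      Filter.atTop (nhds 1) :=
  psiK_asymptotic_general K q hq a ha
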